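/- arXiv:2305.06117 — 2 statements merged into one kernel-verified Lean document; each statement's English description precedes it below -/
import Mathlib

section
/- Assume (p_0, e) ≠ (2, 0), that there exists a maximal abelian subgroup A_R of H_R contained in F_q × F_q, that f is odd, and that p_0 ≢ 1 (mod 4). Then #{(x,y) ∈ F_{q^{2p_0}} × F_{q^{2p_0}} : y^p − y = x·R(x)} = q^{2p_0} + (p−1)·p^e·q^{p_0}. (Equivalently, the smooth compactification of the affine curve y^p − y = xR(x), which has genus p^e(p−1)/2 and a single point at infinity, is F_{q^{2p_0}}-maximal.) -/
open Finset Polynomial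

/-- The additive polynomial `R(x) = ∑_{i=0}^e a_i x^{p^i}`, evaluated in any commutative ring. -/
def Rgen {A : Type*} [CommRing A] (p e : ℕ) (a : ℕ → A) (x : A) : A :=
  ∑ i ∈ Finset.range (e + 1), a i * x ^ p ^ i

/-- `E_R(x) = R(x)^{p^e} + ∑_{i=0}^e (a_i x)^{p^{e-i}}`. -/
def Egen {A : Type*} [CommRing A] (p e : ℕ) (a : ℕ → A) (x : A) : A :=
  Rgen p e a x ^ p ^ e + ∑ i ∈ Finset.range (e + 1), (a i * x) ^ p ^ (e - i)

/-- `f_R(x,y) = -∑_{i=0}^{e-1} ( ∑_{j=0}^{e-i-1} (a_i x^{p^i} y)^{p^j} + (x R(y))^{p^i} )`. -/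
def fgen {A : Type*} [CommRing A] (p e : ℕ) (a : ℕ → A) (x y : A) : A :=
  -∑ i ∈ Finset.range e,
    ((∑ j ∈ Finset.range (e - i), (a i * x ^ p ^ i * y) ^ p ^ j) + (x * Rgen p e a y) ^ p ^ i)

/-- The set `H_R = {(a,b) : E_R(a) = 0, b^p - b = a R(a)}`. -/
def Hset {K : Type*} [CommRing K] (p e : ℕ) (a : ℕ → K) : Set (K × K) :=
  {h | Egen p e a h.1 = 0 ∧ h.2 ^ p - h.2 = h.1 * Rgen p e a h.1}

/-- The group law `(a,b)·(a',b') = (a+a', b+b'+f_R(a,a'))` on `H_R`. -/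
def Hmul {K : Type*} [CommRing K] (p e : ℕ) (a : ℕ → K) (h h' : K × K) : K × K :=
  (h.1 + h'.1, h.2 + h'.2 + fgen p e a h.1 h'.1)

/-- The `p`-power map is additive on `A`. -/
def FrobAdd (A : Type*) [CommRing A] (p : ℕ) : Prop :=
  0 < p ∧ ∀ x y : A, (x + y) ^ p = x ^ p + y ^ p

namespace FrobAdd
variable {A : Type*} [CommRing A] {p : ℕ}

lemma of_char (A : Type*) [CommRing A] {p₀ : ℕ} (hp₀ : p₀.Prime) [CharP A p₀] (n : ℕ) :
    FrobAdd A (p₀ ^ n) := by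
  haveI := Fact.mk hp₀
  exact ⟨pow_pos hp₀.pos n, fun x y => add_pow_char_pow x y ..⟩

lemma add (h : FrobAdd A p) (i : ℕ) (x y : A) : (x + y) ^ p ^ i = x ^ p ^ i + y ^ p ^ i := by
  induction i with
  | zero => simp
  | succ i ih => rw [pow_succ, pow_mul, ih, h.2, ← pow_mul, ← pow_mul]

lemma zero (h : FrobAdd A p) (i : ℕ) : (0 : A) ^ p ^ i = 0 :=
  zero_pow (pow_pos h.1 i).ne'

lemma neg (h : FrobAdd A p) (i : ℕ) (x : A) : (-x) ^ p ^ i = - x ^ p ^ i := by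
  have := h.add i x (-x)
  rw [add_neg_cancel, h.zero] at this
  linear_combination -this

lemma sub (h : FrobAdd A p) (i : ℕ) (x y : A) : (x - y) ^ p ^ i = x ^ p ^ i - y ^ p ^ i := by
  rw [sub_eq_add_neg, h.add, h.neg, sub_eq_add_neg]

lemma sum (h : FrobAdd A p) (i : ℕ) {ι : Type*} (s : Finset ι) (f : ι → A) :
    (∑ k ∈ s, f k) ^ p ^ i = ∑ k ∈ s, f k ^ p ^ i := by
  classical
  induction s using Finset.induction_on with
  | empty => simpa using h.zero i
  | insert a s ha ih => rw [sum_insert ha, sum_insert ha, h.add, ih]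

lemma pow (h : FrobAdd A p) (m : ℕ) : FrobAdd A (p ^ m) :=
  ⟨pow_pos h.1 m, fun x y => h.add m x y⟩

lemma sum1 (h : FrobAdd A p) {ι : Type*} (s : Finset ι) (f : ι → A) :
    (∑ k ∈ s, f k) ^ p = ∑ k ∈ s, f k ^ p := by simpa using h.sum 1 s f
lemma neg1 (h : FrobAdd A p) (x : A) : (-x) ^ p = - x ^ p := by simpa using h.neg 1 x
lemma sub1 (h : FrobAdd A p) (x y : A) : (x - y) ^ p = x ^ p - y ^ p := by simpa using h.sub 1 x y

lemma fix_pow {c : A} (hc : c ^ p = c) (i : ℕ) : c ^ p ^ i = c := by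
  induction i with
  | zero => simp
  | succ i ih => rw [pow_succ, pow_mul, ih, hc]


lemma R_add (h : FrobAdd A p) (e : ℕ) (a : ℕ → A) (x y : A) : Rgen p e a (x + y) = Rgen p e a x + Rgen p e a y := by
  simp only [Rgen, h.add, mul_add, sum_add_distrib]

lemma R_zero (h : FrobAdd A p) (e : ℕ) (a : ℕ → A) : Rgen p e a 0 = 0 := by
  have := R_add h e a 0 0
  rw [add_zero] at this; linear_combination -this

lemma E_add (h : FrobAdd A p) (e : ℕ) (a : ℕ → A) (x y : A) : Egen p e a (x + y) = Egen p e a x + Egen p e a y := by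
  simp only [Egen, R_add h, h.add, mul_add, sum_add_distrib]; ring

lemma E_zero (h : FrobAdd A p) (e : ℕ) (a : ℕ → A) : Egen p e a 0 = 0 := by
  have := E_add h e a 0 0
  rw [add_zero] at this; linear_combination -this

lemma E_neg (h : FrobAdd A p) (e : ℕ) (a : ℕ → A) (x : A) : Egen p e a (-x) = - Egen p e a x := by
  have := E_add h e a x (-x)
  rw [add_neg_cancel, E_zero h] at this; linear_combination -this

lemma E_sub (h : FrobAdd A p) (e : ℕ) (a : ℕ → A) (x y : A) : Egen p e a (x - y) = Egen p e a x - Egen p e a y := by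
  rw [sub_eq_add_neg, E_add h, E_neg h, sub_eq_add_neg]

lemma f_add_left (h : FrobAdd A p) (e : ℕ) (a : ℕ → A) (x x' y : A) :
    fgen p e a (x + x') y = fgen p e a x y + fgen p e a x' y := by
  simp only [fgen, h.add, mul_add, add_mul, sum_add_distrib]; ring

lemma f_add_right (h : FrobAdd A p) (e : ℕ) (a : ℕ → A) (x y y' : A) :
    fgen p e a x (y + y') = fgen p e a x y + fgen p e a x y' := by
  simp only [fgen, R_add h, h.add, mul_add, sum_add_distrib]; ring

lemma f_zero_left (h : FrobAdd A p) (e : ℕ) (a : ℕ → A) (y : A) : fgen p e a 0 y = 0 := by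
  have := f_add_left h e a 0 0 y
  rw [add_zero] at this; linear_combination -this

lemma f_zero_right (h : FrobAdd A p) (e : ℕ) (a : ℕ → A) (y : A) : fgen p e a y 0 = 0 := by
  have := f_add_right h e a y 0 0
  rw [add_zero] at this; linear_combination -this

lemma f_neg_left (h : FrobAdd A p) (e : ℕ) (a : ℕ → A) (x y : A) : fgen p e a (-x) y = - fgen p e a x y := by
  have := f_add_left h e a x (-x) y
  rw [add_neg_cancel, f_zero_left h] at this; linear_combination -this

lemma f_neg_right (h : FrobAdd A p) (e : ℕ) (a : ℕ → A) (x y : A) : fgen p e a x (-y) = - fgen p e a x y := by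
  have := f_add_right h e a x y (-y)
  rw [add_neg_cancel, f_zero_right h] at this; linear_combination -this

lemma R_smul (e : ℕ) (a : ℕ → A) {c : A} (hc : c ^ p = c) (x : A) : Rgen p e a (c * x) = c * Rgen p e a x := by
  simp only [Rgen, mul_sum, mul_pow, fix_pow hc]
  exact sum_congr rfl fun i _ => by ring

lemma E_smul (e : ℕ) (a : ℕ → A) {c : A} (hc : c ^ p = c) (x : A) : Egen p e a (c * x) = c * Egen p e a x := by
  simp only [Egen, R_smul e a hc, mul_sum, mul_pow, fix_pow hc, mul_add]
  congr 1
  exact sum_congr rfl fun i _ => by ring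

lemma f_smul_left (e : ℕ) (a : ℕ → A) {c : A} (hc : c ^ p = c) (x y : A) :
    fgen p e a (c * x) y = c * fgen p e a x y := by
  simp only [fgen, mul_neg, mul_sum, mul_pow, fix_pow hc, mul_add]
  congr 1
  refine sum_congr rfl fun i _ => ?_
  congr 1
  · exact sum_congr rfl fun i _ => by ring
  · ring

lemma f_smul_right (e : ℕ) (a : ℕ → A) {c : A} (hc : c ^ p = c) (x y : A) :
    fgen p e a x (c * y) = c * fgen p e a x y := by
  simp only [fgen, R_smul e a hc, mul_neg, mul_sum, mul_pow, fix_pow hc, mul_add]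
  congr 1
  refine sum_congr rfl fun i _ => ?_
  congr 1
  · exact sum_congr rfl fun i _ => by ring
  · ring

lemma telescope (h : FrobAdd A p) (m : ℕ) (z : A) :
    (∑ j ∈ range m, z ^ p ^ j) ^ p - ∑ j ∈ range m, z ^ p ^ j = z ^ p ^ m - z := by
  rw [h.sum1]
  have : ∀ j, (z ^ p ^ j) ^ p = z ^ p ^ (j + 1) := fun j => by rw [← pow_mul, pow_succ]
  simp only [this]
  rw [← sum_sub_distrib, sum_range_sub (fun j => z ^ p ^ j)]
  simp

lemma f_id (h : FrobAdd A p) (e : ℕ) (a : ℕ → A) (x y : A) : fgen p e a x y ^ p - fgen p e a x y =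
    x * Rgen p e a y + y * Rgen p e a x - x ^ p ^ e * Egen p e a y := by
  have h1 : fgen p e a x y = -(∑ i ∈ range e, ∑ j ∈ range (e - i), (a i * x ^ p ^ i * y) ^ p ^ j)
      - ∑ i ∈ range e, (x * Rgen p e a y) ^ p ^ i := by
    simp only [fgen, sum_add_distrib]; ring
  have h2 : (∑ i ∈ range e, ∑ j ∈ range (e - i), (a i * x ^ p ^ i * y) ^ p ^ j) ^ p
      - ∑ i ∈ range e, ∑ j ∈ range (e - i), (a i * x ^ p ^ i * y) ^ p ^ j =
      ∑ i ∈ range e, ((a i * y) ^ p ^ (e - i) * x ^ p ^ e - y * (a i * x ^ p ^ i)) := by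
    rw [h.sum1, ← sum_sub_distrib]
    refine sum_congr rfl fun i hi => ?_
    rw [telescope h]
    have : p ^ e = p ^ i * p ^ (e - i) := by
      rw [← pow_add, Nat.add_sub_cancel' (mem_range.1 hi).le]
    rw [this, pow_mul, ← mul_pow]; ring
  have h3 := telescope h e (x * Rgen p e a y)
  rw [sum_sub_distrib, ← sum_mul, ← mul_sum] at h2
  have h4 : Rgen p e a x = ∑ i ∈ range e, a i * x ^ p ^ i + a e * x ^ p ^ e := by
    rw [Rgen, sum_range_succ]
  have h5 : Egen p e a y = Rgen p e a y ^ p ^ e + (∑ i ∈ range e, (a i * y) ^ p ^ (e - i) + a e * y) := by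
    rw [Egen, sum_range_succ]; simp
  rw [h1, h.sub1, h.neg1, h4, h5]
  rw [mul_pow] at h3
  linear_combination - h2 - h3

end FrobAdd

section maps
variable {A B : Type*} [CommRing A] [CommRing B] (g : A →+* B) (p e : ℕ) (a : ℕ → A)

lemma map_Rgen (x : A) : g (Rgen p e a x) = Rgen p e (fun i => g (a i)) (g x) := by
  simp [Rgen, map_sum]
lemma map_Egen (x : A) : g (Egen p e a x) = Egen p e (fun i => g (a i)) (g x) := by
  simp [Egen, map_Rgen, map_sum]
lemma map_fgen (x y : A) : g (fgen p e a x y) = fgen p e (fun i => g (a i)) (g x) (g y) := by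
  simp [fgen, map_Rgen, map_sum]
end maps

section polyB
variable {K : Type*} [Field K] {p e : ℕ} {a : ℕ → K}

lemma natDegree_RP (hp : 1 < p) (hae : a e ≠ 0) :
    (Rgen p e (fun i => C (a i)) (X : K[X])).natDegree = p ^ e := by
  rw [Rgen, sum_range_succ]
  have h1 : (C (a e) * X ^ p ^ e : K[X]).natDegree = p ^ e := natDegree_C_mul_X_pow _ _ hae
  rcases Nat.eq_zero_or_pos e with rfl | he
  · simpa using h1
  rw [natDegree_add_eq_right_of_natDegree_lt, h1]
  rw [h1]
  refine lt_of_le_of_lt (natDegree_sum_le_of_forall_le (n := p ^ (e - 1)) _ _ ?_) ?_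
  · intro i hi
    refine (natDegree_C_mul_X_pow_le _ _).trans ?_
    exact Nat.pow_le_pow_right (by omega) (by have := mem_range.1 hi; omega)
  · exact Nat.pow_lt_pow_right hp (by omega)

lemma natDegree_EP (hp : 1 < p) (hae : a e ≠ 0) (h2 : e = 0 → (2 : K) ≠ 0) :
    (Egen p e (fun i => C (a i)) (X : K[X])).natDegree = p ^ (2 * e) := by
  rcases Nat.eq_zero_or_pos e with rfl | he
  · have : Egen p 0 (fun i => C (a i)) (X : K[X]) = C (2 * a 0) * X ^ 1 := by
      rw [C_mul, show (C 2 : K[X]) = 2 from map_ofNat C 2]; simp [Egen, Rgen]; ring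
    rw [this, natDegree_C_mul_X_pow _ _ (mul_ne_zero (h2 rfl) hae)]; simp
  have h1 : (Rgen p e (fun i => C (a i)) (X : K[X]) ^ p ^ e).natDegree = p ^ (2 * e) := by
    rw [natDegree_pow, natDegree_RP hp hae, ← pow_add, two_mul]
  rw [Egen, natDegree_add_eq_left_of_natDegree_lt, h1]
  rw [h1]
  refine lt_of_le_of_lt (natDegree_sum_le_of_forall_le (n := p ^ e) _ _ ?_) ?_
  · intro i hi
    refine natDegree_pow_le.trans ?_
    calc p ^ (e - i) * (C (a i) * X : K[X]).natDegree ≤ p ^ (e - i) * 1 :=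
          Nat.mul_le_mul_left _ (by simpa using natDegree_C_mul_X_pow_le (a i) 1)
      _ ≤ p ^ e := by rw [mul_one]; exact Nat.pow_le_pow_right (by omega) (by omega)
  · exact Nat.pow_lt_pow_right hp (by omega)

lemma derivative_pow_p (hpK : (p : K) = 0) (g : K[X]) {i : ℕ} (hi : 0 < i) :
    derivative (g ^ p ^ i) = 0 := by
  rw [derivative_pow]
  have : ((p ^ i : ℕ) : K) = 0 := by
    push_cast; rw [hpK, zero_pow hi.ne']
  rw [this]; simp

lemma derivative_EP (hpK : (p : K) = 0) (hae : a e ≠ 0) (h2 : e = 0 → (2 : K) ≠ 0) :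
    ∃ d : K, d ≠ 0 ∧ (0 < e → d = a e) ∧
      derivative (Egen p e (fun i => C (a i)) (X : K[X])) = C d := by
  rcases Nat.eq_zero_or_pos e with rfl | he
  · refine ⟨2 * a 0, mul_ne_zero (h2 rfl) hae, by simp, ?_⟩
    have : Egen p 0 (fun i => C (a i)) (X : K[X]) = C (2 * a 0) * X ^ 1 := by
      rw [C_mul, show (C 2 : K[X]) = 2 from map_ofNat C 2]; simp [Egen, Rgen]; ring
    rw [this]; simp
  refine ⟨a e, hae, fun _ => rfl, ?_⟩
  rw [Egen, derivative_add, derivative_pow_p hpK _ he, sum_range_succ, derivative_add,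
    derivative_sum, sum_eq_zero]
  · simp
  · intro i hi
    exact derivative_pow_p hpK _ (by have := mem_range.1 hi; omega)

lemma eval_E (x : K) :
    (Egen p e (fun i => C (a i)) (X : K[X])).eval x = Egen p e a x := by
  have := map_Egen (evalRingHom x) p e (fun i => C (a i)) (X : K[X])
  simpa using this

lemma ncard_roots_sep [IsAlgClosed K] {g : K[X]} (hg : g.Separable) :
    {x | g.eval x = 0}.ncard = g.natDegree := by
  have h0 : g ≠ 0 := hg.ne_zero
  have : {x | g.eval x = 0} = (g.rootSet K) := by
    ext x; simp [mem_rootSet, h0]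
  rw [this, ← Nat.card_coe_set_eq, Nat.card_eq_fintype_card]
  exact card_rootSet_eq_natDegree hg (IsAlgClosed.splits _)

lemma separable_EP (hpK : (p : K) = 0) (hae : a e ≠ 0) (h2 : e = 0 → (2 : K) ≠ 0) :
    (Egen p e (fun i => C (a i)) (X : K[X])).Separable := by
  obtain ⟨d, hd, -, h⟩ := derivative_EP hpK hae h2
  rw [Polynomial.Separable, h]
  exact (isCoprime_one_right).of_isCoprime_of_dvd_right
    (isUnit_iff_dvd_one.1 (isUnit_C.2 hd.isUnit))

lemma ncard_V [IsAlgClosed K] (hp : 1 < p) (hpK : (p : K) = 0) (hae : a e ≠ 0)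
    (h2 : e = 0 → (2 : K) ≠ 0) :
    {x | Egen p e a x = 0}.ncard = p ^ (2 * e) := by
  rw [← natDegree_EP hp hae h2, ← ncard_roots_sep (separable_EP hpK hae h2)]
  simp only [eval_E]

lemma ncard_roots_le {g : K[X]} (hg : g ≠ 0) : {x | g.eval x = 0}.ncard ≤ g.natDegree := by
  classical
  have : {x | g.eval x = 0} = (g.roots.toFinset : Set K) := by
    ext x; simp [hg]
  rw [this, Set.ncard_coe_finset]
  exact (Multiset.toFinset_card_le _).trans (card_roots' g)

lemma finite_roots {g : K[X]} (hg : g ≠ 0) : {x | g.eval x = 0}.Finite := by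
  classical
  have : {x | g.eval x = 0} = (g.roots.toFinset : Set K) := by
    ext x; simp [hg]
  rw [this]; exact Finset.finite_toSet _

lemma finite_V (hp : 1 < p) (hae : a e ≠ 0)
    (h2 : e = 0 → (2 : K) ≠ 0) :
    {x | Egen p e a x = 0}.Finite := by
  have := finite_roots (g := Egen p e (fun i => C (a i)) (X : K[X])) (by
    intro h
    have h1 := natDegree_EP hp hae h2
    rw [h, natDegree_zero] at h1
    exact (pow_pos (by omega : 0 < p) (2 * e)).ne h1)
  simpa only [eval_E] using this

/-- nondegeneracy of the commutator pairing -/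
lemma omega_nondeg [IsAlgClosed K] (hF : FrobAdd K[X] p) (hp : 1 < p) (hpK : (p : K) = 0)
    (hae : a e ≠ 0) (h2 : e = 0 → (2 : K) ≠ 0) {v : K} (hv : Egen p e a v = 0)
    (h : ∀ x, Egen p e a x = 0 → fgen p e a x v = fgen p e a v x) : v = 0 := by
  by_contra hv0
  set b : ℕ → K[X] := fun i => C (a i) with hb
  set W : K[X] := fgen p e b X (C v) - fgen p e b (C v) X with hW
  have hEv : Egen p e b (C v) = 0 := by
    have := map_Egen (C : K →+* K[X]) p e a v
    rw [hv, map_zero] at this; exact this.symm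
  have hid : W ^ p - W = C (v ^ p ^ e) * Egen p e b X := by
    rw [hW, hF.sub1]
    have h1 := hF.f_id e b X (C v)
    have h3 := hF.f_id e b (C v) X
    rw [hEv] at h1
    rw [C_pow]
    linear_combination h1 - h3
  have hdeg : (W ^ p - W).natDegree = p ^ (2 * e) := by
    rw [hid, natDegree_C_mul (pow_ne_zero _ hv0), natDegree_EP hp hae h2]
  have hWp : 0 < W.natDegree := by
    rcases Nat.eq_zero_or_pos W.natDegree with h0 | h0
    · rw [natDegree_eq_zero] at h0
      obtain ⟨c, hc⟩ := h0
      rw [← hc, ← C_pow, ← C_sub, natDegree_C] at hdeg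
      exact absurd hdeg.symm (pow_pos (by omega : 0 < p) _).ne'
    · exact h0
  have hd : p * W.natDegree = p ^ (2 * e) := by
    rw [← hdeg, natDegree_sub_eq_left_of_natDegree_lt (p := W ^ p) (q := W)
      (by rw [natDegree_pow]; nlinarith), natDegree_pow]
  have hsub : {x | Egen p e a x = 0} ⊆ {x | W.eval x = 0} := by
    intro x hx
    have e1 := map_fgen (evalRingHom x) p e b X (C v)
    have e2 := map_fgen (evalRingHom x) p e b (C v) X
    simp only [hb, coe_evalRingHom, eval_C, eval_X] at e1 e2
    simp only [hW, Set.mem_ofPred_eq, eval_sub]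
    rw [e1, e2, h x hx, sub_self]
  have hW0 : W ≠ 0 := by rintro h0; rw [h0] at hWp; simp at hWp
  have := (Set.ncard_le_ncard hsub (finite_roots hW0)).trans (ncard_roots_le hW0)
  rw [ncard_V hp hpK hae h2, ← hd] at this
  nlinarith

/-- In characteristic two the numbers of `v ∈ V` with `f(v,v) = c`. -/
lemma ncard_fvv [IsAlgClosed K] (hF : FrobAdd K[X] p) (hp : 1 < p) (hpK : (p : K) = 0)
    (hae : a e ≠ 0) (he : 0 < e) (hchar : (2 : K) = 0) {c : K} (hc : c ^ p = c) (hc0 : c ≠ 0) :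
    p * {x | Egen p e a x = 0 ∧ fgen p e a x x = c}.ncard = p ^ (2 * e) + p ^ e := by
  have h2 : e = 0 → (2 : K) ≠ 0 := by omega
  set b : ℕ → K[X] := fun i => C (a i) with hb
  set W : K[X] := fgen p e b X X with hW
  have heval : ∀ x, W.eval x = fgen p e a x x := by
    intro x
    have e1 := map_fgen (evalRingHom x) p e b X X
    simpa [hb] using e1
  have htwo : (2 : K[X]) = 0 := by
    rw [← show (C 2 : K[X]) = 2 from map_ofNat C 2, hchar, C_0]
  have hFK : FrobAdd K p := ⟨by omega, fun x y => by
    have := hF.2 (C x) (C y)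
    rw [← C_add, ← C_pow, ← C_pow, ← C_pow, ← C_add] at this
    exact C_injective this⟩
  have hid : W ^ p - W = - (X ^ p ^ e * Egen p e b X) := by
    have := hF.f_id e b X X
    rw [hW]
    linear_combination this + X * Rgen p e b X * htwo
  have hE0 : Egen p e b X ≠ 0 := (separable_EP hpK hae h2).ne_zero
  have hdeg : (W ^ p - W).natDegree = p ^ (2 * e) + p ^ e := by
    rw [hid, natDegree_neg, natDegree_mul (pow_ne_zero _ X_ne_zero) hE0, natDegree_EP hp hae h2,
      natDegree_X_pow, add_comm]
  have hWp : 0 < W.natDegree := by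
    rcases Nat.eq_zero_or_pos W.natDegree with h0 | h0
    · rw [natDegree_eq_zero] at h0
      obtain ⟨c, hc⟩ := h0
      rw [← hc, ← C_pow, ← C_sub, natDegree_C] at hdeg
      have := (pow_pos (by omega : 0 < p) (2 * e))
      omega
    · exact h0
  have hd : p * W.natDegree = p ^ (2 * e) + p ^ e := by
    rw [← hdeg, natDegree_sub_eq_left_of_natDegree_lt (p := W ^ p) (q := W)
      (by rw [natDegree_pow]; nlinarith), natDegree_pow]
  have hder : derivative W = X ^ p ^ e * C (a e) := by
    obtain ⟨d, hd, hd', hE⟩ := derivative_EP hpK hae h2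
    have h1 := congrArg derivative hid
    have h3 := derivative_pow_p hpK W one_pos
    have h4 := derivative_pow_p hpK (X : K[X]) he
    rw [pow_one] at h3
    rw [derivative_sub, derivative_neg, derivative_mul, h3, h4, hE, hd' he] at h1
    linear_combination - h1
  have hsep : (W - C c).Separable := by
    have hder' : derivative (W - C c) = X ^ p ^ e * C (a e) := by simp [hder]
    rw [Polynomial.Separable, hder']
    refine IsCoprime.mul_right (IsCoprime.pow_right ?_) ?_
    · have hX : X ∣ W := by
        rw [X_dvd_iff, coeff_zero_eq_eval_zero, heval, hFK.f_zero_left]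
      obtain ⟨g, hg⟩ := hX
      rw [hg]
      refine ⟨- C c⁻¹, C c⁻¹ * g, ?_⟩
      have : C c⁻¹ * C c = (1 : K[X]) := by rw [← C_mul, inv_mul_cancel₀ hc0, C_1]
      linear_combination this
    · exact (isCoprime_one_right).of_isCoprime_of_dvd_right
        (isUnit_iff_dvd_one.1 (isUnit_C.2 hae.isUnit))
  have hset : {x | Egen p e a x = 0 ∧ fgen p e a x x = c} = {x | (W - C c).eval x = 0} := by
    ext x
    simp only [Set.mem_ofPred_eq, eval_sub, eval_C, heval, sub_eq_zero]
    refine ⟨fun h => h.2, fun h => ⟨?_, h⟩⟩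
    have h1 := congrArg (eval x) hid
    simp only [eval_sub, eval_pow, heval, h, hc, sub_self, eval_neg, eval_mul, eval_X] at h1
    have h3 := eval_E (p := p) (e := e) (a := a) x
    rw [← hb] at h3
    rw [h3] at h1
    rcases mul_eq_zero.1 (neg_eq_zero.1 h1.symm) with h4 | h4
    · exfalso
      have hx := pow_eq_zero_iff (pow_pos (by omega : 0 < p) e).ne' |>.1 h4
      rw [hx, hFK.f_zero_left] at h
      exact hc0 h.symm
    · exact h4
  rw [hset, ncard_roots_sep hsep, natDegree_sub_C, hd]

end polyB

/-- A bimultiplicative pairing with complex values. -/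
structure Pairing {G : Type*} [AddCommGroup G] (β : G → G → ℂ) : Prop where
  add_left : ∀ x y z, β (x + y) z = β x z * β y z
  add_right : ∀ x y z, β x (y + z) = β x y * β x z
  zero_left : ∀ y, β 0 y = 1
  zero_right : ∀ x, β x 0 = 1

namespace Pairing
variable {G : Type*} [AddCommGroup G] {β : G → G → ℂ}

/-- right character -/
def rchar (h : Pairing β) (x : G) : AddChar G ℂ where
  toFun := β x
  map_zero_eq_one' := h.zero_right x
  map_add_eq_mul' := h.add_right x

/-- left character -/
def lchar (h : Pairing β) (y : G) : AddChar G ℂ where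
  toFun := fun x => β x y
  map_zero_eq_one' := h.zero_left y
  map_add_eq_mul' := fun a b => h.add_left a b y

lemma neg_right (h : Pairing β) (x y : G) : β x (-y) = (β x y)⁻¹ := (h.rchar x).map_neg_eq_inv y
lemma neg_left (h : Pairing β) (x y : G) : β (-x) y = (β x y)⁻¹ := (h.lchar y).map_neg_eq_inv x

/-- kernel on the right -/
def rker (h : Pairing β) (x : G) : AddSubgroup G where
  carrier := {y | β x y = 1}
  zero_mem' := h.zero_right x
  add_mem' := fun {a b} ha hb => by
    change β x (a + b) = 1
    rw [h.add_right, show β x a = 1 from ha, show β x b = 1 from hb, one_mul]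
  neg_mem' := fun {a} ha => by
    change β x (-a) = 1
    rw [h.neg_right, show β x a = 1 from ha, inv_one]

/-- kernel on the left -/
def lker (h : Pairing β) (y : G) : AddSubgroup G where
  carrier := {x | β x y = 1}
  zero_mem' := h.zero_left y
  add_mem' := fun {a b} ha hb => by
    change β (a + b) y = 1
    rw [h.add_left, show β a y = 1 from ha, show β b y = 1 from hb, one_mul]
  neg_mem' := fun {a} ha => by
    change β (-a) y = 1
    rw [h.neg_left, show β a y = 1 from ha, inv_one]

/-- orthogonal complement -/
def perp (h : Pairing β) (U : AddSubgroup G) : AddSubgroup G where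
  carrier := {y | ∀ x ∈ U, β x y = 1}
  zero_mem' := fun x _ => h.zero_right x
  add_mem' := fun {_ _} ha hb x hx => (h.rker x).add_mem (ha x hx) (hb x hx)
  neg_mem' := fun {_} ha x hx => (h.rker x).neg_mem (ha x hx)

lemma mem_perp (h : Pairing β) {U : AddSubgroup G} {y : G} :
    y ∈ h.perp U ↔ ∀ x ∈ U, β x y = 1 := Iff.rfl

lemma sum_sub (h : Pairing β) [Fintype G] (U : AddSubgroup G) [Fintype U] (y : G)
    [Decidable (y ∈ h.perp U)] :
    ∑ u : U, β u y = if y ∈ h.perp U then (Nat.card U : ℂ) else 0 := by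
  classical
  let ψ : AddChar U ℂ := (h.lchar y).compAddMonoidHom U.subtype
  have h1 := AddChar.sum_eq_ite ψ
  have h2 : ψ = 0 ↔ y ∈ h.perp U := by
    rw [AddChar.eq_zero_iff, mem_perp]
    exact ⟨fun H x hx => H ⟨x, hx⟩, fun H x => H x x.2⟩
  change ∑ u : U, ψ u = _
  rw [h1]
  simp only [h2, Nat.card_eq_fintype_card]

lemma card_perp (h : Pairing β) [Finite G] (U : AddSubgroup G) :
    Nat.card U * Nat.card (h.perp U) =
      Nat.card G * Nat.card {u : U // ∀ g, β u g = 1} := by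
  classical
  have := Fintype.ofFinite G
  have := Fintype.ofFinite U
  have h1 : ∑ y : G, ∑ u : U, β u y = (Nat.card U * Nat.card (h.perp U) : ℕ) := by
    simp only [h.sum_sub U]
    rw [← sum_filter, sum_const, nsmul_eq_mul, mul_comm, Nat.cast_mul]
    congr 2
    rw [Nat.card_eq_fintype_card, Fintype.card_subtype]
  have h2 : ∑ u : U, ∑ y : G, β u y = (Nat.card G * Nat.card {u : U // ∀ g, β u g = 1} : ℕ) := by
    have : ∀ u : U, ∑ y : G, β u y = if (∀ g, β u g = 1) then (Nat.card G : ℂ) else 0 := by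
      intro u
      have h3 := AddChar.sum_eq_ite (h.rchar (u : G))
      have h4 : h.rchar (u : G) = 0 ↔ ∀ g, β u g = 1 := by
        rw [AddChar.eq_zero_iff]; exact Iff.rfl
      change ∑ y : G, h.rchar (u : G) y = _
      rw [h3]
      simp only [h4, Nat.card_eq_fintype_card]
    simp only [this]
    rw [← sum_filter, sum_const, nsmul_eq_mul, mul_comm, Nat.cast_mul]
    congr 2
    rw [Nat.card_eq_fintype_card, Fintype.card_subtype]
  rw [sum_comm, h2] at h1
  exact_mod_cast h1.symm

lemma card_perp_nondeg (h : Pairing β) [Finite G] (U : AddSubgroup G)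
    (hnd : ∀ u, (∀ g, β u g = 1) → u = 0) :
    Nat.card U * Nat.card (h.perp U) = Nat.card G := by
  rw [h.card_perp U]
  have : Nat.card {u : U // ∀ g, β u g = 1} = 1 := by
    rw [Nat.card_eq_one_iff_unique]
    refine ⟨⟨fun a b => ?_⟩, ⟨⟨0, fun g => h.zero_left g⟩⟩⟩
    ext
    rw [hnd _ a.2, hnd _ b.2]
  rw [this, mul_one]

/-- averaging a quadratic function over a singular subgroup -/
lemma sum_quad (h : Pairing β) [Fintype G] (Q : G → ℂ) (U : AddSubgroup G)
    [DecidablePred (· ∈ h.perp U)]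
    (hQ : ∀ u ∈ U, ∀ x, Q (u + x) = Q x * β u x) :
    ∑ x, Q x = ∑ x with x ∈ h.perp U, Q x := by
  classical
  have hU : (Nat.card U : ℂ) ≠ 0 := by exact_mod_cast Nat.card_pos.ne'
  have h1 : ∀ u : U, ∑ x, Q x * β u x = ∑ x, Q x := by
    intro u
    rw [← Equiv.sum_comp (Equiv.addLeft (u : G)) Q]
    exact sum_congr rfl fun x _ => (hQ u u.2 x).symm
  have h2 : ∑ u : U, ∑ x, Q x * β u x = Nat.card U * ∑ x, Q x := by
    simp only [h1, sum_const, nsmul_eq_mul, card_univ, Nat.card_eq_fintype_card]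
  rw [sum_comm] at h2
  simp only [← mul_sum, h.sum_sub U, mul_ite, mul_zero] at h2
  rw [← sum_filter, ← sum_mul, mul_comm] at h2
  exact (mul_left_cancel₀ hU h2).symm

lemma sum_quad_self (h : Pairing β) [Fintype G] (Q : G → ℂ) (U : AddSubgroup G)
    (hQ : ∀ u ∈ U, ∀ x, Q (u + x) = Q x * β u x) (hQU : ∀ u ∈ U, Q u = 1)
    (hU : h.perp U ≤ U) (hU' : U ≤ h.perp U) : ∑ x, Q x = Nat.card U := by
  classical
  rw [h.sum_quad Q U hQ]
  have : h.perp U = U := le_antisymm hU hU'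
  simp only [this]
  rw [sum_congr rfl (g := fun _ => (1 : ℂ)) (fun x hx => hQU x (mem_filter.1 hx).2)]
  simp [Nat.card_eq_fintype_card, Fintype.card_subtype]

lemma alt_square (h : Pairing β) [Finite G] (halt : ∀ x, β x x = 1) :
    ∃ m : ℕ, Nat.card G * Nat.card {u : G // ∀ g, β u g = 1} = m ^ 2 := by
  classical
  have hsymm : ∀ x y, β x y = 1 → β y x = 1 := by
    intro x y hxy
    have := halt (x + y)
    rw [h.add_left, h.add_right, h.add_right, halt, halt, hxy] at this
    simpa using this
  obtain ⟨U, hU⟩ := Set.Finite.exists_maximal (Set.toFinite {U : AddSubgroup G | U ≤ h.perp U})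
    ⟨⊥, fun x hx y hy => by rw [AddSubgroup.mem_bot] at hx; rw [hx, h.zero_right]⟩
  have hU1 : U ≤ h.perp U := hU.1
  have hUp : h.perp U ≤ U := by
    intro g hg
    have hW : U ⊔ AddSubgroup.zmultiples g ≤ h.perp (U ⊔ AddSubgroup.zmultiples g) := by
      have key : ∀ z : G, (∀ u ∈ U, β u z = 1) → β g z = 1 →
          z ∈ h.perp (U ⊔ AddSubgroup.zmultiples g) := by
        intro z h1 h2
        have : U ⊔ AddSubgroup.zmultiples g ≤ h.lker z := by
          rw [sup_le_iff, AddSubgroup.zmultiples_le]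
          exact ⟨h1, h2⟩
        exact fun x hx => this hx
      rw [sup_le_iff, AddSubgroup.zmultiples_le]
      exact ⟨fun u hu => key u (fun x hx => hU1 hu x hx) (hsymm _ _ (hg u hu)),
        key g hg (halt g)⟩
    have := hU.2 hW le_sup_left
    exact this (AddSubgroup.mem_sup_right (AddSubgroup.mem_zmultiples g))
  have hc := h.card_perp U
  rw [le_antisymm hUp hU1] at hc
  refine ⟨Nat.card U, ?_⟩
  rw [sq, hc]
  congr 1
  refine Nat.card_congr ⟨fun u => ⟨⟨u.1, ?_⟩, u.2⟩, fun u => ⟨u.1.1, u.2⟩, fun u => rfl, fun u => rfl⟩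
  exact hUp fun x _ => hsymm _ _ (u.2 x)

lemma exists_repr (h : Pairing β) [Finite G] (hnd : ∀ u, (∀ g, β u g = 1) → u = 0)
    (X : AddChar G ℂ) : ∃ w, ∀ v, X v = β w v := by
  classical
  have := Fintype.ofFinite G
  have hinj : Function.Injective h.rchar := by
    intro x y hxy
    have : x - y = 0 := hnd _ fun g => by
      have h1 : β x g = β y g := DFunLike.congr_fun hxy g
      have h2 : β (x - y + y) g = β (x - y) g * β y g := h.add_left _ _ _
      rw [sub_add_cancel, h1] at h2
      have h3 : β y g ≠ 0 := fun h0 => by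
        have := h.add_right y g (-g)
        rw [add_neg_cancel, h.zero_right, h0, zero_mul] at this
        exact one_ne_zero this
      exact (mul_right_cancel₀ h3 (by rw [one_mul]; exact h2)).symm
    exact sub_eq_zero.1 this
  have hb := (Fintype.bijective_iff_injective_and_card h.rchar).2 ⟨hinj, AddChar.card_eq.symm⟩
  obtain ⟨w, hw⟩ := hb.2 X
  exact ⟨w, fun v => by rw [← hw]; rfl⟩

/-- The characteristic two argument. -/
lemma char_two_sum (h : Pairing β) [Fintype G] (hnd : ∀ u, (∀ g, β u g = 1) → u = 0)
    (hpm : ∀ u v, β u v = 1 ∨ β u v = -1) (halt : ∀ u, β u u = 1) (hsymm : ∀ u v, β u v = β v u)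
    (h2 : ∀ u : G, u + u = 0)
    (m : G → ℂ) (hm : ∀ u v, m (u + v) = m u * m v * β u v)
    (N : G →+ G) (hmN : ∀ v, m (N v) = β v (N v)) (hadj : ∀ u v, β (N u) v = β u (N v))
    (hcG : ∃ r : ℕ, Nat.card G = r ^ 2) (hcN : ¬ ∃ r : ℕ, Nat.card N.ker = r ^ 2) :
    ∑ v, m v * β v (N v) = - ∑ v, m v := by
  classical
  have hXadd : ∀ u v, β (u + v) (N (u + v)) = β u (N u) * β v (N v) := by
    intro u v
    have h3 : β u (N v) = β v (N u) := by rw [← hadj, hsymm]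
    rw [map_add, h.add_left, h.add_right, h.add_right, h3]
    rcases hpm v (N u) with h4 | h4 <;> rw [h4] <;> ring
  let X : AddChar G ℂ :=
    { toFun := fun v => β v (N v)
      map_zero_eq_one' := h.zero_left _
      map_add_eq_mul' := hXadd }
  obtain ⟨w, hw⟩ := h.exists_repr hnd X
  have hw' : ∀ v, β v (N v) = β w v := hw
  -- w in the image of N
  have hle : N.range ≤ h.perp N.ker := by
    rintro _ ⟨y, rfl⟩ x hx
    rw [← hadj, show N x = 0 from hx, h.zero_left]
  have hc1 := h.card_perp_nondeg N.ker hnd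
  have hc2 : Nat.card N.ker * Nat.card N.range = Nat.card G := by
    rw [← AddSubgroup.index_ker]; exact AddSubgroup.card_mul_index _
  have hkpos : 0 < Nat.card N.ker := Nat.card_pos
  have hc3 : Nat.card (h.perp N.ker) = Nat.card N.range :=
    Nat.eq_of_mul_eq_mul_left hkpos (hc1.trans hc2.symm)
  have heq : N.range = h.perp N.ker :=
    AddSubgroup.eq_of_le_of_card_ge hle hc3.le
  have hwm : w ∈ N.range := by
    rw [heq]
    intro x hx
    rw [hsymm, ← hw', show N x = 0 from hx, h.zero_right]
  obtain ⟨ν, rfl⟩ := hwm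
  have hmw : m (N ν) = β ν (N ν) := hmN ν
  have hneg : β ν (N ν) = -1 := by
    rcases hpm ν (N ν) with h1 | h1
    swap
    · exact h1
    exfalso
    let β' : G → G → ℂ := fun u v =>
      β u (N v) * (if β u (N u) = 1 ∨ β v (N v) = 1 then 1 else -1)
    have hne : (1 : ℂ) ≠ -1 := by norm_num
    have hne' : (-1 : ℂ) ≠ 1 := by norm_num
    have hp' : Pairing β' := by
      refine ⟨?_, ?_, ?_, ?_⟩
      · intro x y z
        simp only [β', h.add_left x y (N z), hXadd]
        rcases hpm x (N x) with h3 | h3 <;> rcases hpm y (N y) with h4 | h4 <;>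
          rcases hpm z (N z) with h5 | h5 <;> rw [h3, h4, h5] <;> norm_num
      · intro x y z
        simp only [β', map_add N y z, h.add_right x (N y) (N z)]
        have := hXadd y z
        rw [map_add] at this
        rw [this]
        rcases hpm x (N x) with h3 | h3 <;> rcases hpm y (N y) with h4 | h4 <;>
          rcases hpm z (N z) with h5 | h5 <;> rw [h3, h4, h5] <;> norm_num
      · intro y
        simp [β', h.zero_left]
      · intro y
        simp [β', h.zero_left, h.zero_right]
    have hal' : ∀ u, β' u u = 1 := by
      intro u
      simp only [β']
      rcases hpm u (N u) with h3 | h3 <;> rw [h3] <;> norm_num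
    obtain ⟨r, hr⟩ := hp'.alt_square hal'
    have hrad : ∀ u, (∀ g, β' u g = 1) ↔ u ∈ N.ker := by
      intro u
      constructor
      · intro hu
        rcases hpm u (N u) with h3 | h3
        · refine hnd _ fun g => ?_
          have := hu g
          simp only [β', h3, true_or, if_true, mul_one] at this
          rw [hadj, this]
        · exfalso
          have h4 : N (u + ν) = 0 := by
            refine hnd _ fun g => ?_
            have := hu g
            simp only [β', h3, hne', false_or] at this
            rw [map_add, h.add_left, hadj u, ← hw' g]
            rcases hpm g (N g) with h5 | h5
            · rw [h5] at this ⊢; simpa using this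
            · rw [h5] at this ⊢; rw [if_neg hne'] at this; exact this
          have h5 := hXadd u ν
          rw [h4, h.zero_right, h3, h1] at h5
          norm_num at h5
      · intro hu g
        have hu' : N u = 0 := hu
        simp only [β', hu', h.zero_right, true_or, if_true, mul_one]
        rw [← hadj, hu', h.zero_left]
    have hcard : Nat.card {u : G // ∀ g, β' u g = 1} = Nat.card N.ker :=
      Nat.card_congr (Equiv.subtypeEquivRight hrad)
    rw [hcard] at hr
    obtain ⟨t, ht⟩ := hcG
    have htpos : 0 < t := by
      rcases Nat.eq_zero_or_pos t with h0 | h0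
      · rw [h0] at ht
        have := Nat.card_pos (α := G)
        rw [ht] at this; simp at this
      · exact h0
    rw [ht] at hr
    have hdvd : t ∣ r := by
      rw [← Nat.pow_dvd_pow_iff two_ne_zero, ← hr]; exact dvd_mul_right _ _
    obtain ⟨k, rfl⟩ := hdvd
    refine hcN ⟨k, ?_⟩
    rw [mul_pow] at hr
    exact Nat.eq_of_mul_eq_mul_left (pow_pos htpos 2) hr
  have hstep : ∀ v, m v * β v (N v) = - m (v + N ν) := by
    intro v
    rw [hm, hmw, hneg, hw', hsymm]; ring
  rw [sum_congr rfl fun v _ => hstep v, sum_neg_distrib]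
  congr 1
  exact Equiv.sum_comp (Equiv.addRight (N ν)) m

end Pairing

section partC
variable {K : Type*} [Field K] {p e : ℕ} {a : ℕ → K}

/-- the fixed elements of `x ↦ x^p` -/
def kSub (h : FrobAdd K p) : AddSubgroup K where
  carrier := {c | c ^ p = c}
  zero_mem' := by simpa using h.zero 1
  add_mem' := fun {x y} hx hy => by
    change (x + y) ^ p = x + y
    rw [h.2, show x ^ p = x from hx, show y ^ p = y from hy]
  neg_mem' := fun {x} hx => by
    change (-x) ^ p = -x
    rw [h.neg1, show x ^ p = x from hx]

/-- the kernel of `E` -/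
def EKer (h : FrobAdd K p) (e : ℕ) (a : ℕ → K) : AddSubgroup K where
  carrier := {x | Egen p e a x = 0}
  zero_mem' := h.E_zero e a
  add_mem' := fun {x y} hx hy => by
    change Egen p e a (x + y) = 0
    rw [h.E_add, show Egen p e a x = 0 from hx, show Egen p e a y = 0 from hy, add_zero]
  neg_mem' := fun {x} hx => by
    change Egen p e a (-x) = 0
    rw [h.E_neg, show Egen p e a x = 0 from hx, neg_zero]

lemma omega_id (h : FrobAdd K p) (e : ℕ) (a : ℕ → K) (x y : K) :
    (fgen p e a x y - fgen p e a y x) ^ p - (fgen p e a x y - fgen p e a y x) =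
      y ^ p ^ e * Egen p e a x - x ^ p ^ e * Egen p e a y := by
  rw [h.sub1]
  linear_combination h.f_id e a x y - h.f_id e a y x

lemma omega_mem (h : FrobAdd K p) (e : ℕ) (a : ℕ → K) {x y : K} (hx : Egen p e a x = 0)
    (hy : Egen p e a y = 0) :
    (fgen p e a x y - fgen p e a y x) ^ p = fgen p e a x y - fgen p e a y x := by
  have := omega_id h e a x y
  rw [hx, hy] at this
  linear_combination this

/-- the commutator form -/
def omega (h : FrobAdd K p) (e : ℕ) (a : ℕ → K) (x y : EKer h e a) : kSub h :=
  ⟨fgen p e a x y - fgen p e a y x, omega_mem h e a x.2 y.2⟩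

lemma omega_add_left (h : FrobAdd K p) (x y z : EKer h e a) :
    omega h e a (x + y) z = omega h e a x z + omega h e a y z := by
  ext
  simp only [omega, AddSubgroup.coe_add, h.f_add_left, h.f_add_right]; ring

lemma omega_add_right (h : FrobAdd K p) (x y z : EKer h e a) :
    omega h e a x (y + z) = omega h e a x y + omega h e a x z := by
  ext
  simp only [omega, AddSubgroup.coe_add, h.f_add_left, h.f_add_right]; ring

lemma omega_zero_left (h : FrobAdd K p) (y : EKer h e a) : omega h e a 0 y = 0 := by
  ext; simp [omega, h.f_zero_left, h.f_zero_right]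
lemma omega_zero_right (h : FrobAdd K p) (y : EKer h e a) : omega h e a y 0 = 0 := by
  ext; simp [omega, h.f_zero_left, h.f_zero_right]

lemma pairing_omega (h : FrobAdd K p) (ψ : AddChar (kSub h) ℂ) :
    Pairing (fun x y : EKer h e a => ψ (omega h e a x y)) where
  add_left x y z := by rw [omega_add_left, ψ.map_add_eq_mul]
  add_right x y z := by rw [omega_add_right, ψ.map_add_eq_mul]
  zero_left y := by rw [omega_zero_left, ψ.map_zero_eq_one]
  zero_right y := by rw [omega_zero_right, ψ.map_zero_eq_one]

lemma pairing_omega_nondeg [IsAlgClosed K] (h : FrobAdd K p) (hF : FrobAdd K[X] p) (hp : 1 < p)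
    (hpK : (p : K) = 0)
    (hae : a e ≠ 0) (h2 : e = 0 → (2 : K) ≠ 0) (ψ : AddChar (kSub h) ℂ) (hψ : ∃ d, ψ d ≠ 1)
    (u : EKer h e a) (hu : ∀ g, ψ (omega h e a u g) = 1) : u = 0 := by
  ext
  refine omega_nondeg hF hp hpK hae h2 u.2 fun x hx => ?_
  by_contra hne
  obtain ⟨d, hd⟩ := hψ
  set w : K := fgen p e a u x - fgen p e a x u with hw
  have hw0 : w ≠ 0 := sub_ne_zero.2 (Ne.symm hne)
  have hwp : w ^ p = w := omega_mem h e a u.2 hx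
  have hc : ((d : K) / w) ^ p = (d : K) / w := by
    rw [div_pow, hwp, show (d : K) ^ p = d from d.2]
  have hcx : Egen p e a ((d : K) / w * x) = 0 := by
    rw [FrobAdd.E_smul e a hc, hx, mul_zero]
  apply hd
  rw [← hu ⟨_, hcx⟩]
  congr 1
  ext
  simp only [omega]
  rw [FrobAdd.f_smul_right e a hc, FrobAdd.f_smul_left e a hc, ← mul_sub, ← hw,
    div_mul_cancel₀ _ hw0]

lemma finite_kSub (h : FrobAdd K p) (hp : 1 < p) : Finite (kSub h) := by
  have := finite_roots (FiniteField.X_pow_card_sub_X_ne_zero K hp)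
  have h2 : {x | (X ^ p - X : K[X]).eval x = 0} = (kSub h : Set K) := by
    ext x; simp [kSub, sub_eq_zero]
  rw [h2] at this
  exact this

lemma exists_nontrivial_char (G : Type*) [AddCommGroup G] [Finite G] [Nontrivial G] :
    ∃ ψ : AddChar G ℂ, ∃ d, ψ d ≠ 1 := by
  obtain ⟨x, hx⟩ := exists_ne (0 : G)
  obtain ⟨ψ, hψ⟩ := AddChar.exists_apply_ne_zero.2 hx
  exact ⟨ψ, x, hψ⟩

/-- Data extracted from a maximal abelian subgroup. -/
structure GoodSub (p e q : ℕ) (a : ℕ → K) (A : AddSubgroup K) : Prop where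
  E0 : ∀ x ∈ A, Egen p e a x = 0
  fixq : ∀ x ∈ A, x ^ q = x
  iso : ∀ x ∈ A, ∀ y ∈ A, fgen p e a x y = fgen p e a y x
  max : ∀ v, Egen p e a v = 0 → (∀ x ∈ A, fgen p e a v x = fgen p e a x v) → v ∈ A
  lift : ∀ x ∈ A, ∀ b, b ^ p - b = x * Rgen p e a x → b ^ q = b
  smul : ∀ c, c ^ p = c → ∀ x ∈ A, c * x ∈ A
  card : Nat.card A = p ^ e

lemma exists_artin [IsAlgClosed K] (hp : 1 < p) (t : K) : ∃ b : K, b ^ p - b = t := by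
  have h1 : (X ^ p - X - C t : K[X]).degree ≠ 0 := by
    have : (X ^ p - X - C t : K[X]).natDegree = p := by
      rw [natDegree_sub_C, FiniteField.X_pow_card_sub_X_natDegree_eq K hp]
    intro h0
    rw [natDegree_eq_of_degree_eq_some (n := 0) (by simpa using h0)] at this
    omega
  obtain ⟨b, hb⟩ := IsAlgClosed.exists_root _ h1
  refine ⟨b, ?_⟩
  simp only [IsRoot.def, eval_sub, eval_pow, eval_X, eval_C] at hb
  linear_combination hb

lemma exists_goodSub [IsAlgClosed K] (h : FrobAdd K p) (hF : FrobAdd K[X] p) (hp : 1 < p)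
    (hpK : (p : K) = 0) (hae : a e ≠ 0) (h2 : e = 0 → (2 : K) ≠ 0) (q : ℕ)
    (S : Set (K × K)) (hSsub : S ⊆ Hset p e a)
    (hS0 : ((0 : K), (0 : K)) ∈ S)
    (hSmul : ∀ h ∈ S, ∀ h' ∈ S, Hmul p e a h h' ∈ S)
    (hSinv : ∀ h ∈ S, ∃ h' ∈ S, Hmul p e a h h' = (0, 0))
    (hScomm : ∀ h ∈ S, ∀ h' ∈ S, Hmul p e a h h' = Hmul p e a h' h)
    (hSmax : ∀ T : Set (K × K), T ⊆ Hset p e a →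
      ((0 : K), (0 : K)) ∈ T →
      (∀ h ∈ T, ∀ h' ∈ T, Hmul p e a h h' ∈ T) →
      (∀ h ∈ T, ∃ h' ∈ T, Hmul p e a h h' = (0, 0)) →
      (∀ h ∈ T, ∀ h' ∈ T, Hmul p e a h h' = Hmul p e a h' h) →
      S ⊆ T → T = S)
    (hSF : ∀ h ∈ S, h.1 ^ q = h.1 ∧ h.2 ^ q = h.2) : ∃ A, GoodSub p e q a A := by
  have hmulH : ∀ x ∈ Hset p e a, ∀ y ∈ Hset p e a, Hmul p e a x y ∈ Hset p e a := by
    rintro ⟨x, b⟩ ⟨hx, hb⟩ ⟨y, c⟩ ⟨hy, hc⟩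
    refine ⟨?_, ?_⟩
    · simp only [Hmul]; simp only at hx hy; rw [h.E_add, hx, hy, add_zero]
    · simp only [Hmul]; simp only at hx hy hb hc
      have := h.f_id e a x y
      rw [hy] at this
      rw [h.2, h.2, h.R_add]
      linear_combination this + hb + hc
  let A : AddSubgroup K :=
    { carrier := {x | ∃ b, (x, b) ∈ S}
      zero_mem' := ⟨0, hS0⟩
      add_mem' := by
        rintro x y ⟨b, hb⟩ ⟨c, hc⟩
        exact ⟨_, hSmul _ hb _ hc⟩
      neg_mem' := by
        rintro x ⟨b, hb⟩
        obtain ⟨⟨y, c⟩, hy, hyx⟩ := hSinv _ hb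
        have : x + y = 0 := congrArg Prod.fst hyx
        rw [neg_eq_of_add_eq_zero_right this]
        exact ⟨c, hy⟩ }
  have hAdef : ∀ x, x ∈ A ↔ ∃ b, (x, b) ∈ S := fun x => Iff.rfl
  have hE0 : ∀ x ∈ A, Egen p e a x = 0 := by
    rintro x ⟨b, hb⟩; exact (hSsub hb).1
  have hiso : ∀ x ∈ A, ∀ y ∈ A, fgen p e a x y = fgen p e a y x := by
    rintro x ⟨b, hb⟩ y ⟨c, hc⟩
    have := congrArg Prod.snd (hScomm _ hb _ hc)
    simp only [Hmul] at this
    linear_combination this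
  have key : ∀ B : AddSubgroup K, A ≤ B → (∀ x ∈ B, Egen p e a x = 0) →
      (∀ x ∈ B, ∀ y ∈ B, fgen p e a x y = fgen p e a y x) →
      ∀ z ∈ Hset p e a, z.1 ∈ B → z ∈ S := by
    intro B hAB hBE hBi z hz hzB
    have : {z | z ∈ Hset p e a ∧ z.1 ∈ B} = S := by
      apply hSmax
      · exact fun z hz => hz.1
      · exact ⟨hSsub hS0, B.zero_mem⟩
      · exact fun x hx y hy => ⟨hmulH _ hx.1 _ hy.1, B.add_mem hx.2 hy.2⟩
      · rintro ⟨x, b⟩ ⟨⟨hx, hb⟩, hxB⟩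
        simp only at hx hb hxB
        refine ⟨(-x, -b + fgen p e a x x), ⟨⟨?_, ?_⟩, B.neg_mem hxB⟩, ?_⟩
        · simp only; rw [h.E_neg, hx, neg_zero]
        · have h3 := h.f_id e a x x
          have h4 := h.R_add e a x (-x)
          rw [add_neg_cancel, h.R_zero] at h4
          simp only
          rw [hx] at h3
          rw [h.2, h.neg1]
          linear_combination h3 - hb - x * h4
        · simp only [Hmul, h.f_neg_right]; ext <;> simp
      · rintro ⟨x, b⟩ ⟨-, hx⟩ ⟨y, c⟩ ⟨-, hy⟩
        simp only [Hmul, hBi x hx y hy]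
        ext <;> simp only [] <;> ring
      · exact fun x hx => ⟨hSsub hx, hAB ⟨x.2, hx⟩⟩
    rw [← this]; exact ⟨hz, hzB⟩
  have hmax : ∀ v, Egen p e a v = 0 → (∀ x ∈ A, fgen p e a v x = fgen p e a x v) → v ∈ A := by
    intro v hv hvA
    obtain ⟨b, hb⟩ := exists_artin hp (v * Rgen p e a v)
    have hfz : ∀ (n : ℤ) (x y : K), fgen p e a (n • x) y = n • fgen p e a x y := by
      intro n x y
      exact (AddMonoidHom.mk' (fun x => fgen p e a x y) (fun x x' => h.f_add_left e a x x' y)).map_zsmul n x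
    have hfz' : ∀ (n : ℤ) (x y : K), fgen p e a x (n • y) = n • fgen p e a x y := by
      intro n x y
      exact (AddMonoidHom.mk' (fun y => fgen p e a x y) (fun y y' => h.f_add_right e a x y y')).map_zsmul n y
    refine ⟨b, key (A ⊔ AddSubgroup.zmultiples v) le_sup_left ?_ ?_ (v, b) ⟨hv, hb⟩
      ((le_sup_right : _ ≤ A ⊔ AddSubgroup.zmultiples v) (AddSubgroup.mem_zmultiples v))⟩
    · have : A ⊔ AddSubgroup.zmultiples v ≤ EKer h e a :=
        sup_le hE0 (AddSubgroup.zmultiples_le_of_mem (show v ∈ EKer h e a from hv))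
      exact this
    · intro x hx y hy
      obtain ⟨x', hx', _, ⟨n, rfl⟩, rfl⟩ := AddSubgroup.mem_sup.1 hx
      obtain ⟨y', hy', _, ⟨m, rfl⟩, rfl⟩ := AddSubgroup.mem_sup.1 hy
      simp only [h.f_add_left, h.f_add_right, hfz, hfz', hvA _ hx', hvA _ hy', hiso _ hx' _ hy']
      rw [smul_comm n m]; ring
  have hfin : Finite (EKer h e a) := finite_V hp hae h2
  refine ⟨A, hE0, ?_, hiso, hmax, ?_, ?_, ?_⟩
  · rintro x ⟨b, hb⟩; exact (hSF _ hb).1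
  · intro x hx b hb
    exact (hSF _ (key A le_rfl hE0 hiso (x, b) ⟨hE0 x hx, hb⟩ hx)).2
  · intro c hc x hx
    refine hmax _ ?_ fun y hy => ?_
    · rw [FrobAdd.E_smul e a hc, hE0 x hx, mul_zero]
    · rw [FrobAdd.f_smul_left e a hc, FrobAdd.f_smul_right e a hc, hiso x hx y hy]
  · have := finite_kSub h hp
    have : Nontrivial (kSub h) := ⟨⟨0, ⟨1, one_pow p⟩, fun h0 => by
      have := congrArg Subtype.val h0; simp at this⟩⟩
    obtain ⟨ψ, hψ⟩ := exists_nontrivial_char (kSub h)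
    have hP := pairing_omega (e := e) (a := a) h ψ
    have hnd := pairing_omega_nondeg h hF hp hpK hae h2 ψ hψ
    have hc := hP.card_perp_nondeg (A.addSubgroupOf (EKer h e a)) hnd
    have hperp : hP.perp (A.addSubgroupOf (EKer h e a)) = A.addSubgroupOf (EKer h e a) := by
      ext v
      rw [Pairing.mem_perp, AddSubgroup.mem_addSubgroupOf]
      constructor
      · intro hv
        refine hmax _ v.2 fun x hx => ?_
        by_contra hne
        obtain ⟨d, hd⟩ := hψ
        set w : K := fgen p e a x v - fgen p e a v x with hw
        have hw0 : w ≠ 0 := sub_ne_zero.2 (Ne.symm hne)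
        have hwp : w ^ p = w := omega_mem h e a (hE0 x hx) v.2
        have hcc : ((d : K) / w) ^ p = (d : K) / w := by
          rw [div_pow, hwp, show (d : K) ^ p = d from d.2]
        have hcx : (d : K) / w * x ∈ A := by
          refine hmax _ ?_ fun y hy => ?_
          · rw [FrobAdd.E_smul e a hcc, hE0 x hx, mul_zero]
          · rw [FrobAdd.f_smul_left e a hcc, FrobAdd.f_smul_right e a hcc, hiso x hx y hy]
        apply hd
        rw [← hv ⟨_, hE0 _ hcx⟩ hcx]
        congr 1
        ext
        simp only [omega]
        rw [FrobAdd.f_smul_right e a hcc, FrobAdd.f_smul_left e a hcc, ← mul_sub, ← hw,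
          div_mul_cancel₀ _ hw0]
      · intro hv x hx
        have : omega h e a x v = 0 := by
          ext; simp only [omega, hiso x hx v hv, sub_self, AddSubgroup.coe_zero]
        simp [this]
    rw [hperp] at hc
    have h5 : Nat.card (A.addSubgroupOf (EKer h e a)) = Nat.card A :=
      Nat.card_congr (AddSubgroup.addSubgroupOfEquivOfLe (show A ≤ EKer h e a from hE0)).toEquiv
    have h6 : Nat.card (EKer h e a) = p ^ (2 * e) := ncard_V hp hpK hae h2
    rw [h5, h6, mul_comm 2 e, pow_mul, sq, Nat.mul_self_inj] at hc
    exact hc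
end partC

section partG
variable {L : Type*} [Field L] {p : ℕ}

/-- absolute trace to the fixed field of `x ↦ x^p` -/
def trHom (h : FrobAdd L p) (m : ℕ) (hm : ∀ z : L, z ^ p ^ m = z) : L →+ kSub h :=
  AddMonoidHom.mk' (fun z => ⟨∑ j ∈ range m, z ^ p ^ j, by
    have := h.telescope m z
    rw [hm z, sub_self] at this
    exact sub_eq_zero.1 this⟩) (fun x y => by
      ext
      simp only [h.add, sum_add_distrib, AddSubgroup.coe_add])

lemma trHom_coe (h : FrobAdd L p) (m : ℕ) (hm : ∀ z : L, z ^ p ^ m = z) (z : L) :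
    (trHom h m hm z : L) = ∑ j ∈ range m, z ^ p ^ j := rfl

/-- `y ↦ y^p - y` -/
def asHom (h : FrobAdd L p) : L →+ L :=
  AddMonoidHom.mk' (fun z => z ^ p - z) (fun x y => by simp only [h.2]; ring)

lemma trHom_as (h : FrobAdd L p) (m : ℕ) (hm : ∀ z : L, z ^ p ^ m = z) (z : L) :
    trHom h m hm (z ^ p - z) = 0 := by
  ext
  rw [trHom_coe]
  simp only [h.sub]
  rw [sum_sub_distrib]
  have : ∀ j, (z ^ p) ^ p ^ j = z ^ p ^ (j + 1) := fun j => by rw [← pow_mul, pow_succ']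
  simp only [this]
  rw [← sum_sub_distrib, sum_range_sub (fun j => z ^ p ^ j), hm z]
  simp

lemma trHom_facts [Finite L] (h : FrobAdd L p) (hp : 1 < p) (m : ℕ) (hm0 : 0 < m)
    (hm : ∀ z : L, z ^ p ^ m = z) (hc : Nat.card L = p ^ m) :
    Nat.card (kSub h) = p ∧ Function.Surjective (trHom h m hm) ∧
      ∀ z, trHom h m hm z = 0 ↔ ∃ y, y ^ p - y = z := by
  have hk : Nat.card (kSub h) ≤ p := by
    have := ncard_roots_le (FiniteField.X_pow_card_sub_X_ne_zero L hp)
    rw [FiniteField.X_pow_card_sub_X_natDegree_eq L hp] at this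
    have h2 : {x | (X ^ p - X : L[X]).eval x = 0} = (kSub h : Set L) := by
      ext x; simp [kSub, sub_eq_zero]
    rwa [h2] at this
  have hT : Nat.card (trHom h m hm).ker ≤ p ^ (m - 1) := by
    have hd := natDegree_RP (K := L) (e := m - 1) (a := fun _ => 1) hp one_ne_zero
    rw [← hd]
    have h0 : Rgen p (m - 1) (fun _ => C 1) (X : L[X]) ≠ 0 := by
      intro h0; rw [h0] at hd; simp at hd; have := pow_pos h.1 (m-1); omega
    refine le_trans (le_of_eq ?_) (ncard_roots_le h0)
    change Set.ncard _ = _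
    congr 1
    ext z
    have : (Rgen p (m - 1) (fun _ => C 1) (X : L[X])).eval z = ∑ j ∈ range m, z ^ p ^ j := by
      simp [Rgen, eval_finsetSum, Nat.sub_add_cancel hm0]
    rw [Set.mem_ofPred_eq, this]
    change z ∈ (trHom h m hm).ker ↔ _
    rw [AddMonoidHom.mem_ker, ← trHom_coe h m hm z]
    exact Subtype.ext_iff
  have hTc : Nat.card (trHom h m hm).ker * Nat.card (trHom h m hm).range = p ^ m := by
    rw [← hc, AddSubgroup.card_eq_card_quotient_mul_card_addSubgroup (trHom h m hm).ker, mul_comm]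
    congr 1
    exact (Nat.card_congr (QuotientAddGroup.quotientKerEquivRange (trHom h m hm)).toEquiv).symm
  have hDc : Nat.card (asHom h).ker * Nat.card (asHom h).range = p ^ m := by
    rw [← hc, AddSubgroup.card_eq_card_quotient_mul_card_addSubgroup (asHom h).ker, mul_comm]
    congr 1
    exact (Nat.card_congr (QuotientAddGroup.quotientKerEquivRange (asHom h)).toEquiv).symm
  have hker : (asHom h).ker = kSub h := by
    ext z
    rw [AddMonoidHom.mem_ker]
    exact sub_eq_zero
  rw [hker] at hDc
  have hpm : p ^ m = p ^ (m - 1) * p := by rw [← pow_succ, Nat.sub_add_cancel hm0]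
  have hrange : Nat.card (trHom h m hm).range ≤ Nat.card (kSub h) :=
    Nat.card_le_card_of_injective _ Subtype.val_injective
  have hq : 0 < p ^ (m - 1) := pow_pos h.1 _
  have hr : Nat.card (trHom h m hm).range = p ∧ Nat.card (trHom h m hm).ker = p ^ (m - 1) := by
    rw [hpm] at hTc
    have h1 : Nat.card (trHom h m hm).range ≤ p := hrange.trans hk
    constructor
    · by_contra hne
      have hlt : Nat.card (trHom h m hm).range < p := lt_of_le_of_ne h1 hne
      nlinarith [Nat.mul_le_mul hT hlt.le]
    · by_contra hne
      have hlt : Nat.card (trHom h m hm).ker < p ^ (m - 1) := lt_of_le_of_ne hT hne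
      nlinarith [Nat.mul_le_mul hT h1]
  have hkp : Nat.card (kSub h) = p := le_antisymm hk (hr.1.symm.le.trans hrange)
  refine ⟨hkp, ?_, ?_⟩
  · rw [← AddMonoidHom.range_eq_top]
    exact AddSubgroup.eq_top_of_card_eq _ (by rw [hr.1, hkp])
  · have hle : (asHom h).range ≤ (trHom h m hm).ker := by
      rintro _ ⟨y, rfl⟩
      exact trHom_as h m hm y
    have heq : (asHom h).range = (trHom h m hm).ker := by
      apply AddSubgroup.eq_of_le_of_card_ge hle
      rw [hr.2]
      rw [hkp, hpm, mul_comm] at hDc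
      exact (Nat.eq_of_mul_eq_mul_right h.1 hDc).ge
    intro z
    rw [← AddMonoidHom.mem_ker, ← heq]
    rfl

lemma count_points [Fintype L] [DecidableEq L] (h : FrobAdd L p) (hp : 1 < p) (m : ℕ) (hm0 : 0 < m)
    (hm : ∀ z : L, z ^ p ^ m = z) (hc : Nat.card L = p ^ m) (g : L → L) (c : ℕ)
    (hS : ∀ χ : AddChar (kSub h) ℂ, χ ≠ 0 → ∑ x, χ (trHom h m hm (g x)) = c) :
    ((univ.filter fun z : L × L => z.2 ^ p - z.2 = g z.1).card : ℤ) =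
      (p : ℤ) ^ m + ((p : ℤ) - 1) * c := by
  classical
  obtain ⟨hk, hsurj, hker⟩ := trHom_facts h hp m hm0 hm hc
  have : Fintype (kSub h) := Fintype.ofFinite _
  have hfib : ∀ t : L, ((univ.filter fun y : L => y ^ p - y = t).card : ℂ) =
      ∑ χ : AddChar (kSub h) ℂ, χ (trHom h m hm t) := by
    intro t
    rw [AddChar.sum_apply_eq_ite]
    split_ifs with h0
    · obtain ⟨y, hy⟩ := (hker t).1 h0
      rw [← Nat.card_eq_fintype_card, hk]
      have : (univ.filter fun y : L => y ^ p - y = t).card = Nat.card (kSub h) := by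
        rw [← Fintype.card_subtype, ← Nat.card_eq_fintype_card]
        refine Nat.card_congr ⟨fun z => ⟨z.1 - y, ?_⟩, fun z => ⟨z.1 + y, ?_⟩, fun z => ?_, fun z => ?_⟩
        · change (z.1 - y) ^ p = z.1 - y
          rw [h.sub1]; linear_combination z.2 - hy
        · rw [h.2]; have h3 : z.1 ^ p = z.1 := z.2
          linear_combination h3 + hy
        · ext; simp
        · ext; simp
      rw [this, hk]
    · rw [Finset.card_eq_zero.2]
      · simp
      · rw [filter_eq_empty_iff]
        exact fun y _ hy => h0 ((hker t).2 ⟨y, hy⟩)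
  have hN : ((univ.filter fun z : L × L => z.2 ^ p - z.2 = g z.1).card : ℂ) =
      ∑ χ : AddChar (kSub h) ℂ, ∑ x, χ (trHom h m hm (g x)) := by
    rw [sum_comm]
    simp only [← hfib]
    rw [← Nat.cast_sum]
    congr 1
    rw [← Finset.card_sigma]
    refine Finset.card_bij' (fun z _ => ⟨z.1, z.2⟩) (fun z _ => (z.1, z.2)) ?_ ?_ ?_ ?_ <;> simp
  have hcard : Fintype.card (AddChar (kSub h) ℂ) = p := by
    rw [AddChar.card_eq, ← Nat.card_eq_fintype_card, hk]
  rw [← add_sum_erase _ _ (mem_univ (0 : AddChar (kSub h) ℂ)),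
    sum_congr rfl (fun χ hχ => hS χ (ne_of_mem_erase hχ)), sum_const, card_erase_of_mem (mem_univ _),
    card_univ, hcard] at hN
  simp only [AddChar.zero_apply, sum_const, card_univ, nsmul_eq_mul, mul_one] at hN
  rw [← Nat.card_eq_fintype_card, hc, Nat.cast_sub hp.le] at hN
  push_cast at hN
  exact_mod_cast hN

/-- A nontrivial additive character invariant under `x ↦ x^p`. -/
structure GoodChar (p : ℕ) (χ : AddChar L ℂ) : Prop where
  inv : ∀ z, χ (z ^ p) = χ z
  nt : ∃ z, χ z ≠ 1

lemma goodChar_of [Finite L] (h : FrobAdd L p) (hp : 1 < p) (m : ℕ) (hm0 : 0 < m)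
    (hm : ∀ z : L, z ^ p ^ m = z) (hc : Nat.card L = p ^ m) (χ : AddChar (kSub h) ℂ) (hχ : χ ≠ 0) :
    GoodChar p (χ.compAddMonoidHom (trHom h m hm)) := by
  obtain ⟨hk, hsurj, hker⟩ := trHom_facts h hp m hm0 hm hc
  refine ⟨fun z => ?_, ?_⟩
  · simp only [AddChar.compAddMonoidHom_apply]
    have := trHom_as h m hm z
    rw [map_sub, sub_eq_zero] at this
    rw [this]
  · by_contra! hz
    apply hχ
    rw [AddChar.eq_zero_iff]
    intro x
    obtain ⟨z, rfl⟩ := hsurj x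
    exact hz z

namespace GoodChar
variable {χ : AddChar L ℂ} (hχ : GoodChar p χ)

lemma inv_pow (hχ : GoodChar p χ) (i : ℕ) (z : L) : χ (z ^ p ^ i) = χ z := by
  induction i with
  | zero => simp
  | succ i ih => rw [pow_succ, pow_mul, hχ.inv, ih]

lemma nondeg (hχ : GoodChar p χ) {x : L} (hx : ∀ y, χ (x * y) = 1) : x = 0 := by
  by_contra h0
  obtain ⟨z, hz⟩ := hχ.nt
  exact hz (by rw [← hx (x⁻¹ * z), mul_inv_cancel_left₀ h0])

lemma pairing (χ : AddChar L ℂ) (c : L) : Pairing (fun x y => χ (c * x * y)) where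
  add_left x y z := by rw [mul_add, add_mul, χ.map_add_eq_mul]
  add_right x y z := by rw [mul_add, χ.map_add_eq_mul]
  zero_left y := by simp
  zero_right y := by simp

lemma pairing_nd (hχ : GoodChar p χ) {c : L} (hc : c ≠ 0) (u : L)
    (hu : ∀ g, χ (c * u * g) = 1) : u = 0 :=
  (mul_eq_zero.1 (hχ.nondeg hu)).resolve_left hc

end GoodChar
end partG

section partE1
variable {F : Type*} [Field F] {p e : ℕ}

/-- additive polynomial as an additive map -/
def RHom (h : FrobAdd F p) (e : ℕ) (c : ℕ → F) : F →+ F :=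
  AddMonoidHom.mk' (Rgen p e c) (h.R_add e c)

lemma eval_R (c : ℕ → F) (x : F) :
    (Rgen p e (fun i => C (c i)) (X : F[X])).eval x = Rgen p e c x := by
  have := map_Rgen (evalRingHom x) p e (fun i => C (c i)) (X : F[X])
  simpa using this

lemma RP_ne_zero {c : ℕ → F} (hp : 1 < p) (hc : c e ≠ 0) :
    Rgen p e (fun i => C (c i)) (X : F[X]) ≠ 0 := by
  intro h0
  have := natDegree_RP (e := e) hp hc
  rw [h0, natDegree_zero] at this
  exact (pow_pos (by omega : 0 < p) e).ne this

lemma card_RHom_ker_le {c : ℕ → F} (h : FrobAdd F p) (hp : 1 < p) (hc : c e ≠ 0) :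
    Finite (RHom h e c).ker ∧ Nat.card (RHom h e c).ker ≤ p ^ e := by
  have h1 : {x | (Rgen p e (fun i => C (c i)) (X : F[X])).eval x = 0} =
      ((RHom h e c).ker : Set F) := by
    ext x; rw [Set.mem_ofPred_eq, eval_R]; rfl
  have h2 := finite_roots (RP_ne_zero hp hc)
  have h3 := ncard_roots_le (RP_ne_zero hp hc)
  rw [natDegree_RP hp hc, h1] at h3
  rw [h1] at h2
  exact ⟨h2, h3⟩

/-- a polynomial of small degree vanishing on `A` is zero -/
lemma zero_of_vanish {A : AddSubgroup F} {r : F[X]} {N : ℕ} (hA : Nat.card A = N)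
    (hr : r.degree < N) (h : ∀ x ∈ A, r.eval x = 0) : r = 0 := by
  by_contra h0
  have h1 := finite_roots h0
  have h2 := ncard_roots_le h0
  have h3 : (A : Set F).ncard ≤ {x | r.eval x = 0}.ncard := Set.ncard_le_ncard h h1
  have h4 : (A : Set F).ncard = N := hA
  rw [degree_eq_natDegree h0, Nat.cast_lt] at hr
  omega

lemma exists_P (h : FrobAdd F p) (hp : 1 < p) (hk : Nat.card (kSub h) = p) (A : AddSubgroup F)
    (hA : Nat.card A = p ^ e) (hsm : ∀ c : F, c ^ p = c → ∀ x ∈ A, c * x ∈ A) :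
    ∃ c : ℕ → F, c e = 1 ∧ ∀ x ∈ A, Rgen p e c x = 0 := by
  have hfA : Finite A := Nat.finite_of_card_ne_zero (by rw [hA]; exact (pow_pos h.1 e).ne')
  have key : ∀ m, m ≤ e → ∃ c : ℕ → F, c m = 1 ∧ (∀ i, m < i → c i = 0) ∧
      p ^ m ≤ Nat.card ((A ⊓ (RHom h m c).ker : AddSubgroup F)) := by
    intro m
    induction m with
    | zero =>
      intro _
      refine ⟨fun i => if i = 0 then 1 else 0, rfl, fun i hi => if_neg hi.ne', ?_⟩
      have : Finite (A ⊓ (RHom h 0 fun i => if i = 0 then (1:F) else 0).ker : AddSubgroup F) :=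
        Finite.of_injective (AddSubgroup.inclusion (inf_le_left)) (AddSubgroup.inclusion_injective _)
      rw [pow_zero]
      exact Nat.card_pos
    | succ m ih =>
      intro hm
      obtain ⟨c, hc1, hc0, hcard⟩ := ih (by omega)
      obtain ⟨hfin, hle⟩ := card_RHom_ker_le h hp (show c m ≠ 0 by rw [hc1]; exact one_ne_zero)
      obtain ⟨v, hvA, hv⟩ : ∃ v ∈ A, Rgen p m c v ≠ 0 := by
        by_contra! hv
        have h1 : A ≤ (RHom h m c).ker := fun x hx => hv x hx
        have := Nat.card_le_card_of_injective _ (AddSubgroup.inclusion_injective h1)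
        rw [hA] at this
        have h3 : p ^ m < p ^ e := Nat.pow_lt_pow_right hp (by omega)
        omega
      set u := Rgen p m c v ^ (p - 1) with hu
      let c' : ℕ → F := fun i => Nat.casesOn i (-u * c 0) (fun i => c i ^ p - u * c (i + 1))
      have hc' : ∀ x, Rgen p (m + 1) c' x = Rgen p m c x ^ p - u * Rgen p m c x := by
        intro x
        have e1 : u * Rgen p m c x = u * Rgen p (m + 1) c x := by
          rw [Rgen, Rgen, sum_range_succ _ (m + 1), hc0 (m + 1) (by omega), zero_mul, add_zero]
        rw [e1, Rgen, Rgen, Rgen, sum_range_succ', h.sum1, sum_range_succ' _ (m + 1), mul_add,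
          mul_sum]
        have hz : c' 0 = -u * c 0 := rfl
        have hs : ∀ i, c' (i + 1) = c i ^ p - u * c (i + 1) := fun i => rfl
        simp only [hz, hs, sub_mul, sum_sub_distrib, mul_pow]
        have : ∀ i, (x ^ p ^ i) ^ p = x ^ p ^ (i + 1) := fun i => by rw [← pow_mul, pow_succ]
        simp only [this, mul_assoc]
        ring
      refine ⟨c', ?_, ?_, ?_⟩
      · change c m ^ p - u * c (m + 1) = 1
        rw [hc1, hc0 _ (Nat.lt_succ_self m)]; simp
      · intro i hi
        obtain ⟨i, rfl⟩ : ∃ k, i = k + 1 := ⟨i - 1, by omega⟩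
        change c i ^ p - u * c (i + 1) = 0
        rw [hc0 i (by omega), hc0 (i + 1) (by omega), zero_pow h.1.ne']; simp
      · have : Finite (A ⊓ (RHom h (m+1) c').ker : AddSubgroup F) :=
          Finite.of_injective (AddSubgroup.inclusion (inf_le_left)) (AddSubgroup.inclusion_injective _)
        have hmem : ∀ (d : kSub h) (w : (A ⊓ (RHom h m c).ker : AddSubgroup F)),
            (w : F) + d * v ∈ (A ⊓ (RHom h (m+1) c').ker : AddSubgroup F) := by
          intro d w
          refine ⟨A.add_mem w.2.1 (hsm d d.2 v hvA), ?_⟩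
          change Rgen p (m + 1) c' _ = 0
          have hw : Rgen p m c w = 0 := w.2.2
          rw [hc', h.R_add, hw, zero_add, FrobAdd.R_smul m c d.2, mul_pow,
            show (d : F) ^ p = d from d.2, hu]
          have : Rgen p m c v ^ p = Rgen p m c v ^ (p - 1) * Rgen p m c v := by
            rw [← pow_succ, Nat.sub_add_cancel hp.le]
          rw [this]; ring
        have := Nat.card_le_card_of_injective
          (fun z : kSub h × (A ⊓ (RHom h m c).ker : AddSubgroup F) =>
            (⟨(z.2 : F) + z.1 * v, hmem z.1 z.2⟩ : (A ⊓ (RHom h (m+1) c').ker : AddSubgroup F))) (by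
            rintro ⟨d, w⟩ ⟨d', w'⟩ heq
            have heq : (w : F) + d * v = w' + d' * v := congrArg Subtype.val heq
            have h1 := congrArg (Rgen p m c) heq
            have hw : Rgen p m c w = 0 := w.2.2
            have hw' : Rgen p m c w' = 0 := w'.2.2
            rw [h.R_add, h.R_add, hw, hw', zero_add, zero_add, FrobAdd.R_smul m c d.2,
              FrobAdd.R_smul m c d'.2] at h1
            have h2 : (d : F) = d' := mul_right_cancel₀ hv h1
            rw [h2] at heq
            have h3 : (w : F) = w' := add_right_cancel heq
            rw [Prod.mk.injEq]
            exact ⟨Subtype.ext h2, Subtype.ext h3⟩)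
        rw [Nat.card_prod, hk] at this
        calc p ^ (m + 1) = p * p ^ m := by ring
          _ ≤ p * _ := Nat.mul_le_mul_left _ hcard
          _ ≤ _ := this
  obtain ⟨c, hc1, -, hcard⟩ := key e le_rfl
  refine ⟨c, hc1, fun x hx => ?_⟩
  have h1 : A ⊓ (RHom h e c).ker = A :=
    AddSubgroup.eq_of_le_of_card_ge inf_le_left (by rw [hA]; exact hcard)
  rw [← h1] at hx
  exact hx.2

lemma exists_div (h : FrobAdd F[X] p) (hp : 1 < p) (hpF : (p : F) = 0) {a c : ℕ → F}
    (hae : a e ≠ 0) (h2 : e = 0 → (2 : F) ≠ 0) (A : AddSubgroup F)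
    (hA : Nat.card A = p ^ e) (hc1 : c e = 1) (hcA : ∀ x ∈ A, Rgen p e c x = 0)
    (hEA : ∀ x ∈ A, Egen p e a x = 0) :
    ∃ g : ℕ → F, g 0 ≠ 0 ∧ Egen p e (fun i => C (a i)) (X : F[X]) =
      ∑ j ∈ range (e + 1), C (g j) * Rgen p e (fun i => C (c i)) (X : F[X]) ^ p ^ j := by
  set P : F[X] := Rgen p e (fun i => C (c i)) X with hP
  set Sp : Submodule F F[X] := Submodule.span F (Set.range fun j : Fin (e + 1) => P ^ p ^ (j : ℕ)) ⊔
    degreeLT F (p ^ e) with hSp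
  have hPmem : ∀ j ≤ e, P ^ p ^ j ∈ Sp := fun j hj =>
    (le_sup_left : _ ≤ Sp) (Submodule.subset_span ⟨⟨j, by omega⟩, rfl⟩)
  have hX : ∀ i, i ≤ 2 * e → (X : F[X]) ^ p ^ i ∈ Sp := by
    intro i
    induction i using Nat.strong_induction_on with
    | _ i ih =>
      intro hi
      rcases lt_or_ge i e with hie | hie
      · refine (le_sup_right : _ ≤ Sp) ?_
        rw [mem_degreeLT, degree_X_pow]
        exact_mod_cast Nat.pow_lt_pow_right hp hie
      · obtain ⟨j, rfl⟩ := Nat.exists_eq_add_of_le hie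
        have : (X : F[X]) ^ p ^ (e + j) = P ^ p ^ j -
            ∑ l ∈ range e, (c l ^ p ^ j) • (X : F[X]) ^ p ^ (l + j) := by
          rw [hP, Rgen, h.sum, sum_range_succ, hc1]
          simp only [smul_eq_C_mul, C_pow, mul_pow, pow_add, pow_mul]
          simp
        rw [this]
        refine Sp.sub_mem (hPmem j (by omega)) (Sp.sum_mem fun l hl => Sp.smul_mem _ ?_)
        rw [mem_range] at hl
        exact ih _ (by omega) (by omega)
  have hE : Egen p e (fun i => C (a i)) (X : F[X]) ∈ Sp := by
    rw [Egen, Rgen, h.sum]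
    refine Sp.add_mem (Sp.sum_mem fun i hi => ?_) (Sp.sum_mem fun i hi => ?_)
    · rw [mem_range] at hi
      rw [mul_pow, ← C_pow, ← smul_eq_C_mul, ← pow_mul, ← pow_add]
      exact Sp.smul_mem _ (hX _ (by omega))
    · rw [mul_pow, ← C_pow, ← smul_eq_C_mul]
      exact Sp.smul_mem _ (hX _ (by omega))
  obtain ⟨G, hG, r, hr, hEGr⟩ := Submodule.mem_sup.1 hE
  rw [Submodule.mem_span_range_iff_exists_fun] at hG
  obtain ⟨g, hg⟩ := hG
  have hPA : ∀ x ∈ A, P.eval x = 0 := fun x hx => by rw [hP, eval_R, hcA x hx]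
  have hr0 : r = 0 := by
    refine zero_of_vanish hA (mem_degreeLT.1 hr) fun x hx => ?_
    have h1 := congrArg (eval x) hEGr
    rw [eval_E, hEA x hx, eval_add, ← hg, eval_finsetSum] at h1
    rw [← h1]
    have : ∑ i : Fin (e + 1), eval x (g i • P ^ p ^ (i : ℕ)) = 0 := by
      refine sum_eq_zero fun i _ => ?_
      rw [eval_smul, eval_pow, hPA x hx, zero_pow (pow_pos (by omega) _).ne', smul_zero]
    rw [this, zero_add]
  rw [hr0, add_zero, ← hg] at hEGr
  let g' : ℕ → F := fun j => if hj : j < e + 1 then g ⟨j, hj⟩ else 0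
  have hE' : Egen p e (fun i => C (a i)) (X : F[X]) =
      ∑ j ∈ range (e + 1), C (g' j) * P ^ p ^ j := by
    rw [← hEGr, Finset.sum_range]
    refine sum_congr rfl fun i _ => ?_
    have : g' i = g i := dif_pos i.2
    rw [smul_eq_C_mul, this]
  refine ⟨g', fun h0 => ?_, hE'⟩
  obtain ⟨d, hd, -, hder⟩ := derivative_EP hpF hae h2
  rw [hE', derivative_sum, sum_eq_zero] at hder
  · exact hd (by simpa using hder.symm)
  · intro j hj
    rcases Nat.eq_zero_or_pos j with rfl | hj0
    · rw [h0]; simp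
    · rw [derivative_C_mul, derivative_pow_p hpF _ hj0, mul_zero]
end partE1

section partE2

lemma sum_fiber {G H : Type*} [AddCommGroup G] [AddCommGroup H] [Fintype G] [Fintype H]
    (f : G →+ H) (φ : H → ℂ) [DecidablePred (· ∈ f.range)] :
    ∑ x, φ (f x) = (Nat.card f.ker : ℂ) * ∑ z with z ∈ f.range, φ z := by
  classical
  rw [mul_sum, ← sum_fiberwise_of_maps_to (s := univ) (t := univ.filter (· ∈ f.range)) (g := f)
    (fun x _ => mem_filter.2 ⟨mem_univ _, x, rfl⟩)]
  refine sum_congr rfl fun z hz => ?_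
  obtain ⟨y, rfl⟩ := (mem_filter.1 hz).2
  rw [sum_congr rfl (g := fun _ => φ (f y)) (fun x hx => by rw [(mem_filter.1 hx).2]), sum_const,
    nsmul_eq_mul]
  congr 2
  rw [← Fintype.card_subtype, ← Nat.card_eq_fintype_card]
  refine Nat.card_congr ⟨fun x => ⟨x.1 - y, ?_⟩, fun x => ⟨x.1 + y, ?_⟩, fun x => ?_, fun x => ?_⟩
  · rw [AddMonoidHom.mem_ker, map_sub, x.2, sub_self]
  · rw [map_add, (AddMonoidHom.mem_ker.1 x.2), zero_add]
  · ext; simp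
  · ext; simp

lemma card_ker_mul_range {G H : Type*} [AddCommGroup G] [AddCommGroup H] (f : G →+ H) :
    Nat.card f.ker * Nat.card f.range = Nat.card G := by
  rw [AddSubgroup.card_eq_card_quotient_mul_card_addSubgroup f.ker, mul_comm]
  congr 1
  exact (Nat.card_congr (QuotientAddGroup.quotientKerEquivRange f).toEquiv).symm

variable {L : Type*} [Field L] [Fintype L] {p : ℕ} {χ : AddChar L ℂ}

lemma gauss_value (h : FrobAdd L p) (hχ : GoodChar p χ) (h2 : (2 : L) ≠ 0) (t Q : ℕ)
    (hQ : Q = p ^ t) (hQ4 : Q % 4 = 3) (hcard : Fintype.card L = Q ^ 2) {d : L} (hd : d ≠ 0)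
    (hdQ : d ^ Q = d) : ∑ z, χ (d * z ^ 2) = Q := by
  have hQadd : ∀ x y : L, (x + y) ^ Q = x ^ Q + y ^ Q := by
    intro x y; rw [hQ]; exact h.add t x y
  have hFQ : FrobAdd L Q := ⟨by omega, hQadd⟩
  have hχQ : ∀ z, χ (z ^ Q) = χ z := by intro z; rw [hQ]; exact hχ.inv_pow t z
  have hQQ : ∀ z : L, (z ^ Q) ^ Q = z := by
    intro z; rw [← pow_mul, ← sq, ← hcard]; exact FiniteField.pow_card z
  obtain ⟨i, hi⟩ : IsSquare (-1 : L) := by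
    rw [FiniteField.isSquare_neg_one_iff, hcard, Nat.pow_mod, hQ4]; norm_num
  have hi2 : i ^ 2 = -1 := by rw [sq]; exact hi.symm
  have hiQ : i ^ Q = -i := by
    have : Q = 4 * (Q / 4) + 3 := by omega
    rw [this, pow_add, pow_mul, show i ^ 4 = 1 by linear_combination (i ^ 2 - 1) * hi2, one_pow]
    linear_combination i * hi2
  have h2Q : (2 : L) ^ Q = 2 := by
    rw [← one_add_one_eq_two, hQadd, one_pow]
  have hneg : ∀ w : L, w ^ Q = -w → χ w = 1 := by
    intro w hw
    have : NeZero (2 : L) := ⟨h2⟩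
    have h1 : (w / 2) ^ Q = -(w / 2) := by rw [div_pow, hw, h2Q]; ring
    have h3 := hχQ (w / 2)
    rw [h1] at h3
    have h4 : χ (w / 2 + w / 2) = χ (w / 2) * χ (-(w / 2)) := by rw [χ.map_add_eq_mul, h3]
    rw [← χ.map_add_eq_mul, add_neg_cancel, χ.map_zero_eq_one, add_halves] at h4
    exact h4
  let U : AddSubgroup L :=
    { carrier := {z | z ^ Q = -i * z}
      zero_mem' := by simp only [Set.mem_ofPred_eq]; rw [zero_pow (by omega)]; ring
      add_mem' := fun {x y} hx hy => by
        simp only [Set.mem_ofPred_eq] at *; rw [hQadd, hx, hy]; ring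
      neg_mem' := fun {x} hx => by
        simp only [Set.mem_ofPred_eq] at *; rw [hFQ.neg1, hx]; ring }
  have hP := GoodChar.pairing χ (2 * d)
  have h2d : 2 * d ≠ 0 := mul_ne_zero h2 hd
  have hUd : ∀ z, z ∈ U ↔ z ^ Q = -i * z := fun z => Iff.rfl
  have hUU : U ≤ hP.perp U := by
    intro y hy x hx
    rw [hUd] at hx hy
    refine hneg _ ?_
    rw [mul_pow, mul_pow, mul_pow, h2Q, hdQ, hx, hy]
    linear_combination (2 * d * x * y) * hi2
  have hUU' : hP.perp U ≤ U := by
    intro y hy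
    rw [hUd]
    have h1 : y - i * y ^ Q = 0 := by
      have : ∀ t, χ ((2 * d) * (y - i * y ^ Q) * t) = 1 := by
        intro t
        have hx : t + i * t ^ Q ∈ U := by
          rw [hUd, hQadd, mul_pow, hQQ, hiQ]
          linear_combination (t ^ Q) * hi2
        have h3 : χ (2 * d * (t + i * t ^ Q) * y) = 1 := hy _ hx
        have h4 : 2 * d * (t + i * t ^ Q) * y = 2 * d * t * y + 2 * d * i * t ^ Q * y := by ring
        have h5 : (2 * d * i * t ^ Q * y) ^ Q = -(2 * d * i * t * y ^ Q) := by
          rw [mul_pow, mul_pow, mul_pow, mul_pow, hQQ, h2Q, hdQ, hiQ]; ring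
        rw [h4, χ.map_add_eq_mul, ← hχQ (2 * d * i * t ^ Q * y), h5, ← χ.map_add_eq_mul] at h3
        rw [← h3]
        congr 1
        ring
      exact hχ.pairing_nd h2d _ this
    linear_combination i * h1 + y ^ Q * hi2
  have hsum := hP.sum_quad_self (fun z => χ (d * z ^ 2)) U ?_ ?_ hUU' hUU
  · rw [hsum]
    have hc := hP.card_perp_nondeg U (fun u hu => hχ.pairing_nd h2d u hu)
    rw [le_antisymm hUU' hUU, Nat.card_eq_fintype_card (α := L), hcard, sq, Nat.mul_self_inj] at hc
    rw [hc]
  · intro u hu x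
    have h1 : χ (d * u ^ 2) = 1 := by
      refine hneg _ ?_
      rw [hUd] at hu
      rw [mul_pow, hdQ, ← pow_mul, mul_comm 2 Q, pow_mul, hu]
      linear_combination (d * u ^ 2) * hi2
    have h3 : d * (u + x) ^ 2 = d * x ^ 2 + 2 * d * u * x + d * u ^ 2 := by ring
    rw [h3, χ.map_add_eq_mul, χ.map_add_eq_mul, h1, mul_one]
  · intro u hu
    refine hneg _ ?_
    rw [hUd] at hu
    rw [mul_pow, hdQ, ← pow_mul, mul_comm 2 Q, pow_mul, hu]
    linear_combination (d * u ^ 2) * hi2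

/-- characters are trivial on the subfield fixed by `q` -/
lemma trivial_on_fixed (h : FrobAdd L p) (hp : 1 < p) (hχ : GoodChar p χ) (s r q : ℕ) (hs : 0 < s)
    (hq : q = p ^ s) (hr0 : 0 < r) (hr : (r : L) = 0) (hcard : Fintype.card L = q ^ r) {t : L} (ht : t ^ q = t) :
    χ t = 1 := by
  have hq1 : 1 < q := by rw [hq]; exact Nat.one_lt_pow hs.ne' hp
  have hFq : FrobAdd L q := by rw [hq]; exact h.pow s
  have hm : ∀ z : L, z ^ q ^ r = z := fun z => by rw [← hcard]; exact FiniteField.pow_card z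
  obtain ⟨-, -, h3⟩ := trHom_facts hFq hq1 r hr0 hm (by rw [Nat.card_eq_fintype_card, hcard])
  obtain ⟨y, hy⟩ := (h3 t).1 (by
    ext
    rw [trHom_coe]
    simp only [FrobAdd.fix_pow ht]
    simp [hr])
  have h4 : t + y = y ^ q := by rw [← hy]; ring
  have h5 : χ (t + y) = χ y := by rw [h4, hq]; exact hχ.inv_pow s y
  rw [χ.map_add_eq_mul] at h5
  have h6 : χ y ≠ 0 := fun h0 => by
    have := χ.map_add_eq_mul y (-y)
    rw [add_neg_cancel, h0, zero_mul, χ.map_zero_eq_one] at this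
    exact one_ne_zero this
  exact (mul_left_eq_self₀.1 h5).resolve_right h6

/-- the quadratic sum over the image of `P` -/
lemma sum_P_sq (hχ : GoodChar p χ) (h2 : (2 : L) ≠ 0)
    (P : L →+ L) {d : L} (hd : d ≠ 0)
    (hC : ∀ c, (∀ x, χ (c * P x) = 1) → χ (c ^ 2 / (4 * d)) = 1) :
    ∑ x, χ (d * P x ^ 2) = (Nat.card P.ker : ℂ) * ∑ z, χ (d * z ^ 2) := by
  classical
  rw [sum_fiber P (fun z => χ (d * z ^ 2))]
  congr 1
  have hP := GoodChar.pairing χ 1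
  have hnd := fun u hu => hχ.pairing_nd (c := 1) one_ne_zero u hu
  set Cs := hP.perp P.range with hCs
  have hUC : P.range = hP.perp Cs := by
    apply AddSubgroup.eq_of_le_of_card_ge
    · intro y hy x hx
      have := hx y hy
      simp only [one_mul] at *
      rw [mul_comm]; exact this
    · have h1 := hP.card_perp_nondeg P.range hnd
      have h3 := hP.card_perp_nondeg Cs hnd
      rw [← hCs, ← h3, mul_comm] at h1
      exact (Nat.eq_of_mul_eq_mul_left Nat.card_pos h1).ge
  have hCpos : (Nat.card Cs : ℂ) ≠ 0 := by exact_mod_cast Nat.card_pos.ne'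
  have h4 : ∀ c : Cs, ∑ z, χ (d * z ^ 2) * χ (1 * c * z) = ∑ z, χ (d * z ^ 2) := by
    intro c
    rw [← Equiv.sum_comp (Equiv.addRight ((c : L) / (2 * d))) (fun z => χ (d * z ^ 2))]
    refine sum_congr rfl fun z _ => ?_
    have hc : χ ((c : L) ^ 2 / (4 * d)) = 1 := hC c fun x => by
      have := c.2 (P x) ⟨x, rfl⟩
      simp only [one_mul] at this
      rw [mul_comm]; exact this
    rw [← mul_one (χ (d * z ^ 2) * χ (1 * c * z)), ← hc, ← χ.map_add_eq_mul, ← χ.map_add_eq_mul]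
    congr 1
    have h22 : (4 : L) ≠ 0 := by
      rw [show (4 : L) = 2 * 2 by norm_num]; exact mul_ne_zero h2 h2
    simp only [Equiv.coe_addRight]
    field_simp
    ring
  have h5 : ∑ c : Cs, ∑ z, χ (d * z ^ 2) * χ (1 * c * z) =
      Nat.card Cs * ∑ z, χ (d * z ^ 2) := by
    rw [sum_congr rfl fun c _ => h4 c, sum_const, nsmul_eq_mul, card_univ,
      Nat.card_eq_fintype_card]
  rw [sum_comm] at h5
  simp only [← mul_sum] at h5
  have h6 := fun y => hP.sum_sub Cs y
  simp only [h6, mul_ite, mul_zero, ← sum_filter, ← sum_mul] at h5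
  rw [mul_comm] at h5
  have h7 := mul_left_cancel₀ hCpos h5
  rw [← h7]
  refine sum_congr ?_ fun _ _ => rfl
  ext z
  simp only [mem_filter, mem_univ, true_and]
  rw [← hUC]
end partE2

section partE3

lemma range_of_fix {M K : Type*} [Field M] [Fintype M] [Field K] (g : M →+* K) {x : K}
    (hx : x ^ Fintype.card M = x) : ∃ y, g y = x := by
  have h1 : 1 < Fintype.card M := Fintype.one_lt_card
  have h2 := ncard_roots_le (FiniteField.X_pow_card_sub_X_ne_zero K h1)
  have h3 := finite_roots (FiniteField.X_pow_card_sub_X_ne_zero K h1)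
  rw [FiniteField.X_pow_card_sub_X_natDegree_eq K h1] at h2
  have h4 : Set.range g ⊆ {x | (X ^ Fintype.card M - X : K[X]).eval x = 0} := by
    rintro _ ⟨y, rfl⟩
    simp [← map_pow, FiniteField.pow_card]
  have h5 : (Set.range g).ncard = Fintype.card M := by
    rw [← Set.image_univ, Set.ncard_image_of_injective _ g.injective, Set.ncard_univ,
      Nat.card_eq_fintype_card]
  have h6 := Set.eq_of_subset_of_ncard_le h4 (by rw [h5]; exact h2) h3
  have : x ∈ Set.range g := by
    rw [h6]; simp [hx]
  exact this

variable {F L K : Type*} [Field F] [Fintype F] [Field L] [Fintype L] [Field K] [IsAlgClosed K]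
  [Algebra F L] [Algebra F K] {p : ℕ}

lemma map_Rgen' {M N : Type*} [CommRing M] [CommRing N] (i : M →+* N) (p e : ℕ) (c : ℕ → M) (x : M)
    {c' : ℕ → N} (hc : ∀ n, i (c n) = c' n) :
    i (Rgen p e c x) = Rgen p e c' (i x) := by
  rw [map_Rgen]; congr; funext n; exact hc n

lemma eval2_R {M : Type*} [CommRing M] (i : F →+* M) (p e : ℕ) (c : ℕ → F) (x : M) :
    eval₂ i x (Rgen p e (fun i => C (c i)) (X : F[X])) = Rgen p e (fun n => i (c n)) x := by
  have := map_Rgen (eval₂RingHom i x) p e (fun i => C (c i)) (X : F[X])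
  simpa using this

lemma eval2_E {M : Type*} [CommRing M] (i : F →+* M) (p e : ℕ) (c : ℕ → F) (x : M) :
    eval₂ i x (Egen p e (fun i => C (c i)) (X : F[X])) = Egen p e (fun n => i (c n)) x := by
  have := map_Egen (eval₂RingHom i x) p e (fun i => C (c i)) (X : F[X])
  simpa using this

lemma f_pow_fix {p q e s : ℕ} (h : FrobAdd K p) (hq : q = p ^ s) {a : ℕ → K} (ha : ∀ i, a i ^ q = a i)
    (x y : K) : fgen p e a x y ^ q = fgen p e a (x ^ q) (y ^ q) := by
  let φ : K →+* K :=
    { toFun := fun z => z ^ q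
      map_zero' := by rw [hq]; exact h.zero s
      map_one' := one_pow q
      map_add' := fun x y => by rw [hq]; exact h.add s x y
      map_mul' := fun x y => mul_pow x y q }
  have h1 := map_fgen φ p e a x y
  have h2 : (fun i => φ (a i)) = a := funext ha
  rw [h2] at h1
  exact h1

lemma R_pow_fix {p q e s : ℕ} (h : FrobAdd K p) (hq : q = p ^ s) {a : ℕ → K} (ha : ∀ i, a i ^ q = a i)
    (x : K) : Rgen p e a x ^ q = Rgen p e a (x ^ q) := by
  let φ : K →+* K :=
    { toFun := fun z => z ^ q
      map_zero' := by rw [hq]; exact h.zero s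
      map_one' := one_pow q
      map_add' := fun x y => by rw [hq]; exact h.add s x y
      map_mul' := fun x y => mul_pow x y q }
  have h1 := map_Rgen φ p e a x
  have h2 : (fun i => φ (a i)) = a := funext ha
  rw [h2] at h1
  exact h1

lemma exists_R_eq {e : ℕ} (hp : 1 < p) {c : ℕ → K} (hc : c e ≠ 0) (z : K) : ∃ x, Rgen p e c x = z := by
  have h1 : (Rgen p e (fun i => C (c i)) (X : K[X]) - C z).degree ≠ 0 := by
    have h0 : (Rgen p e (fun i => C (c i)) (X : K[X]) - C z).natDegree = p ^ e := by
      rw [natDegree_sub_C, natDegree_RP hp hc]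
    intro h3
    rw [natDegree_eq_of_degree_eq_some (n := 0) (by simpa using h3)] at h0
    exact (pow_pos (by omega : 0 < p) e).ne h0
  obtain ⟨b, hb⟩ := IsAlgClosed.exists_root _ h1
  refine ⟨b, ?_⟩
  rw [IsRoot.def, eval_sub, eval_R, eval_C] at hb
  exact sub_eq_zero.1 hb

lemma addChar_sum {G ι : Type*} [AddCommGroup G] (χ : AddChar G ℂ) (s : Finset ι) (f : ι → G) :
    χ (∑ i ∈ s, f i) = ∏ i ∈ s, χ (f i) := by
  classical
  induction s using Finset.induction_on with
  | empty => simp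
  | insert i s hi ih => rw [sum_insert hi, prod_insert hi, χ.map_add_eq_mul, ih]

theorem odd_sum (j : L →ₐ[F] K) {e s q r t Q : ℕ} (hF : FrobAdd F p) (hFX : FrobAdd F[X] p)
    (hL : FrobAdd L p) (hK : FrobAdd K p) (hp : 1 < p) (hpF : (p : F) = 0) (h2 : (2 : F) ≠ 0)
    (hs : 0 < s) (hq : q = p ^ s) (hcF : Fintype.card F = q)
    (hcL : Fintype.card L = q ^ r) (hr0 : 0 < r) (hr : (r : L) = 0)
    (hQ : Q = p ^ t) (hQ2 : q ^ r = Q ^ 2) (hQ4 : Q % 4 = 3) (hqQ : ∀ x : F, x ^ Q = x)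
    (a : ℕ → F) (hae : a e ≠ 0) (A : AddSubgroup K)
    (hA : GoodSub p e q (fun i => algebraMap F K (a i)) A)
    (χ : AddChar L ℂ) (hχ : GoodChar p χ) :
    ∑ x, χ (x * Rgen p e (fun i => algebraMap F L (a i)) x) = ((p ^ e * Q : ℕ) : ℂ) := by
  set iL := algebraMap F L with hiL
  set iK := algebraMap F K with hiK
  have hj : ∀ x, j (iL x) = iK x := j.commutes
  have hjinj : Function.Injective j := j.toRingHom.injective
  have h2L : (2 : L) ≠ 0 := by
    rw [← map_ofNat iL 2]; exact (map_ne_zero iL).2 h2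
  have hmL : ∀ z : L, z ^ Q ^ 2 = z := fun z => by rw [← hQ2, ← hcL]; exact FiniteField.pow_card z
  have hqF : ∀ z : F, z ^ q = z := fun z => by rw [← hcF]; exact FiniteField.pow_card z
  have hqpos : 0 < q := by rw [hq]; exact pow_pos hF.1 s
  have hQ2q : Q ^ 2 = p ^ (s * r) := by rw [← hQ2, hq, pow_mul]
  have hfixq : ∀ x : K, x ^ q = x → x ^ Q ^ 2 = x := by
    intro x hx; rw [← hQ2]; exact FrobAdd.fix_pow hx r
  -- the subgroup over F
  set AF : AddSubgroup F := A.comap (iK : F →+ K) with hAF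
  have hAFmem : ∀ x, x ∈ AF ↔ iK x ∈ A := fun x => Iff.rfl
  have hAFsurj : ∀ x ∈ A, ∃ y ∈ AF, iK y = x := by
    intro x hx
    obtain ⟨y, rfl⟩ := range_of_fix iK (x := x) (by rw [hcF]; exact hA.fixq x hx)
    exact ⟨y, hx, rfl⟩
  have hAFcard : Nat.card AF = p ^ e := by
    rw [← hA.card]
    refine Nat.card_congr (Equiv.ofBijective (fun x => (⟨iK x, x.2⟩ : A)) ⟨?_, ?_⟩)
    · intro x y hxy
      exact Subtype.ext (iK.injective (congrArg Subtype.val hxy))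
    · rintro ⟨x, hx⟩
      obtain ⟨y, hy, hyx⟩ := hAFsurj x hx
      exact ⟨⟨y, hy⟩, Subtype.ext hyx⟩
  obtain ⟨hkF, -, -⟩ := trHom_facts hF hp s hs (fun z => by rw [← hq]; exact hqF z)
    (by rw [Nat.card_eq_fintype_card, hcF, hq])
  obtain ⟨c, hc1, hcA⟩ := exists_P hF hp hkF AF hAFcard (fun d hd x hx => by
    rw [hAFmem, map_mul]
    exact hA.smul _ (by rw [← map_pow, hd]) _ hx)
  have hEA : ∀ x ∈ AF, Egen p e a x = 0 := by
    intro x hx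
    apply iK.injective
    rw [map_Egen, map_zero]
    exact hA.E0 _ hx
  obtain ⟨g, hg0, hgE⟩ := exists_div hFX hp hpF hae (fun _ => h2) AF hAFcard hc1 hcA hEA
  set cL : ℕ → L := fun n => iL (c n) with hcLdef
  set cK : ℕ → K := fun n => iK (c n) with hcKdef
  have hcL1 : cL e = 1 := by rw [hcLdef]; simp [hc1]
  have hcK1 : cK e = 1 := by rw [hcKdef]; simp [hc1]
  have hEL : ∀ x : L, Egen p e (fun i => iL (a i)) x =
      ∑ i ∈ range (e + 1), iL (g i) * Rgen p e cL x ^ p ^ i := by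
    intro x
    rw [← eval2_E, hgE, eval₂_finsetSum]
    simp only [eval₂_mul, eval₂_C, eval₂_pow, eval2_R, hcLdef]
  have hEK : ∀ x : K, Egen p e (fun i => iK (a i)) x =
      ∑ i ∈ range (e + 1), iK (g i) * Rgen p e cK x ^ p ^ i := by
    intro x
    rw [← eval2_E, hgE, eval₂_finsetSum]
    simp only [eval₂_mul, eval₂_C, eval₂_pow, eval2_R, hcKdef]
  have hjP : ∀ x : L, j (Rgen p e cL x) = Rgen p e cK (j x) := fun x =>
    map_Rgen' (j : L →+* K) p e cL x (fun n => hj (c n))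
  have hPA : ∀ x ∈ A, Rgen p e cK x = 0 := by
    intro x hx
    obtain ⟨y, hy, rfl⟩ := hAFsurj x hx
    rw [hcKdef, ← map_Rgen, hcA y hy, map_zero]
  have hPA' : ∀ x, Rgen p e cK x = 0 → x ∈ A := by
    obtain ⟨h3, h4⟩ := card_RHom_ker_le hK hp (show cK e ≠ 0 by rw [hcK1]; exact one_ne_zero)
    have h5 : A = (RHom hK e cK).ker :=
      AddSubgroup.eq_of_le_of_card_ge (fun x hx => hPA x hx) (by rw [hA.card]; exact h4)
    intro x hx
    rw [h5]; exact hx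
  have hkerL : Nat.card (RHom hL e cL).ker = p ^ e := by
    obtain ⟨h3, h4⟩ := card_RHom_ker_le hL hp (show cL e ≠ 0 by rw [hcL1]; exact one_ne_zero)
    refine le_antisymm h4 ?_
    rw [← hAFcard]
    refine Nat.card_le_card_of_injective (fun x => ⟨iL x, ?_⟩) ?_
    · change Rgen p e cL (iL x) = 0
      rw [hcLdef, ← map_Rgen, hcA x x.2, map_zero]
    · intro x y hxy
      exact Subtype.ext (iL.injective (congrArg Subtype.val hxy))
  -- the roots of the coefficients
  have hroot : ∀ (i : ℕ) (x : F), ∃ y, y ^ p ^ i = x := by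
    intro i
    have : Function.Injective (fun y : F => y ^ p ^ i) := by
      intro x y hxy
      have : (x - y) ^ p ^ i = 0 := by rw [hF.sub]; exact sub_eq_zero.2 hxy
      exact sub_eq_zero.1 (pow_eq_zero_iff (pow_pos hF.1 i).ne' |>.1 this)
    exact Finite.surjective_of_injective this
  choose γ hγ using fun i => hroot i (g i)
  have hγ0 : γ 0 = g 0 := by simpa using hγ 0
  let Γ : F[X] := ∑ i ∈ range (e + 1), C (γ i) * X ^ p ^ (e - i)
  have hW : ∀ z y : L, χ (y ^ p ^ e * ∑ i ∈ range (e + 1), iL (g i) * z ^ p ^ i) =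
      χ (z * eval₂ iL y Γ) := by
    intro z y
    simp only [Γ]
    rw [eval₂_finsetSum, mul_sum, mul_sum, addChar_sum, addChar_sum]
    refine prod_congr rfl fun i hi => ?_
    rw [mem_range] at hi
    rw [← hχ.inv_pow i (z * _)]
    congr 1
    simp only [eval₂_mul, eval₂_C, eval₂_pow, eval₂_X, mul_pow, ← pow_mul, ← pow_add]
    rw [← map_pow, hγ, show e - i + i = e by omega]
    ring
  have hfrobA : ∀ x z, Rgen p e cK x = j z → x ^ Q ^ 2 - x ∈ A := by
    intro x z hx
    apply hPA'
    rw [sub_eq_add_neg, hK.R_add]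
    have h3 : Rgen p e cK (-x) = - Rgen p e cK x := by
      have h4 := hK.R_add e cK x (-x)
      rw [add_neg_cancel, hK.R_zero] at h4
      linear_combination -h4
    rw [h3, ← R_pow_fix hK hQ2q (fun i => ?_), hx, ← map_pow, hmL]
    · ring
    · apply hfixq; rw [hcKdef]; simp only; rw [← map_pow, hqF]
  have hΓA : ∀ x ∈ AF, eval₂ iL (iL x) Γ = 0 := by
    intro b hb
    have hbA : iK b ∈ A := hb
    refine hχ.nondeg fun z => ?_
    rw [mul_comm, ← hW]
    obtain ⟨x, hx⟩ := exists_R_eq hp (show cK e ≠ 0 by rw [hcK1]; exact one_ne_zero) (j z)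
    set aK : ℕ → K := fun i => iK (a i) with haK
    have hbq : (iK b) ^ Q ^ 2 = iK b := hfixq _ (by rw [← map_pow, hqF])
    have haq : ∀ i, aK i ^ Q ^ 2 = aK i := fun i => hfixq _ (by rw [haK]; simp only; rw [← map_pow, hqF])
    have hw : (fgen p e aK x (iK b) - fgen p e aK (iK b) x) ^ Q ^ 2 =
        fgen p e aK x (iK b) - fgen p e aK (iK b) x := by
      have h3 : (fgen p e aK x (iK b) - fgen p e aK (iK b) x) ^ Q ^ 2 =
        fgen p e aK x (iK b) ^ Q ^ 2 - fgen p e aK (iK b) x ^ Q ^ 2 := by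
        rw [hQ2q]; exact hK.sub _ _ _
      rw [h3, f_pow_fix hK hQ2q haq, f_pow_fix hK hQ2q haq, hbq]
      have h4 := hA.iso _ (hfrobA x z hx) (iK b) hbA
      rw [sub_eq_add_neg, hK.f_add_left, hK.f_add_right, hK.f_neg_left, hK.f_neg_right] at h4
      linear_combination h4
    obtain ⟨w, hw'⟩ := range_of_fix (j : L →+* K) (by rw [hcL, hQ2]; exact hw)
    have h5 := omega_id hK e aK x (iK b)
    rw [hA.E0 (iK b) hbA, hEK, hx, ← hw', mul_zero, sub_zero] at h5
    have h6 : w ^ p - w = iL b ^ p ^ e * ∑ i ∈ range (e + 1), iL (g i) * z ^ p ^ i := by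
      apply hjinj
      rw [map_sub, map_pow, map_mul, map_pow, map_sum, hj]
      simp only [map_mul, map_pow, hj]
      exact h5
    rw [← h6, sub_eq_add_neg, χ.map_add_eq_mul, hχ.inv, ← χ.map_add_eq_mul, add_neg_cancel,
      χ.map_zero_eq_one]
  have hΓ : Γ = C (g 0) * Rgen p e (fun i => C (c i)) X := by
    rw [← sub_eq_zero]
    refine zero_of_vanish hAFcard ?_ fun x hx => ?_
    · rw [← mem_degreeLT]
      simp only [Γ]
      rw [sum_range_succ', Rgen, sum_range_succ, hc1, hγ0]
      have h3 : (∑ i ∈ range e, C (γ (i + 1)) * X ^ p ^ (e - (i + 1)) + C (g 0) * X ^ p ^ (e - 0) -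
          C (g 0) * (∑ x ∈ range e, C (c x) * X ^ p ^ x + C 1 * X ^ p ^ e) : F[X]) =
          ∑ i ∈ range e, γ (i + 1) • X ^ p ^ (e - (i + 1)) -
            g 0 • ∑ x ∈ range e, c x • X ^ p ^ x := by
        simp only [smul_eq_C_mul, tsub_zero, C_1]; ring
      rw [h3]
      refine Submodule.sub_mem _ (Submodule.sum_mem _ fun i hi => Submodule.smul_mem _ _ ?_)
        (Submodule.smul_mem _ _ (Submodule.sum_mem _ fun i hi => Submodule.smul_mem _ _ ?_)) <;>
      · rw [mem_range] at hi
        rw [mem_degreeLT, degree_X_pow]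
        exact_mod_cast Nat.pow_lt_pow_right hp (by omega)
    · rw [eval_sub, eval_mul, eval_R, hcA x hx, mul_zero, sub_zero]
      apply iL.injective
      have h3 := hΓA x hx
      rw [eval₂_at_apply] at h3
      rw [h3, map_zero]
  -- the quadratic form
  set d : L := iL (g 0) / 2 with hd
  have hd0 : d ≠ 0 := div_ne_zero ((map_ne_zero iL).2 hg0) h2L
  have hhalf : ((1 : L) / 2) ^ p = 1 / 2 := by
    rw [div_pow, one_pow]
    congr 1
    rw [← one_add_one_eq_two, hL.2, one_pow]
  have hquad : ∀ x : L, χ (x * Rgen p e (fun i => iL (a i)) x) = χ (d * (RHom hL e cL x) ^ 2) := by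
    intro x
    have h3 := hL.f_id e (fun i => iL (a i)) (1 / 2 * x) x
    rw [FrobAdd.R_smul e _ hhalf] at h3
    have h4 : x * Rgen p e (fun i => iL (a i)) x = (1 / 2 * x) ^ p ^ e * Egen p e (fun i => iL (a i)) x +
        (fgen p e (fun i => iL (a i)) (1 / 2 * x) x ^ p - fgen p e (fun i => iL (a i)) (1 / 2 * x) x) := by
      rw [h3]
      field_simp
      ring
    rw [h4, χ.map_add_eq_mul, hEL, hW, hΓ, sub_eq_add_neg, χ.map_add_eq_mul, hχ.inv,
      ← χ.map_add_eq_mul (fgen _ _ _ _ _), add_neg_cancel, χ.map_zero_eq_one, mul_one, eval₂_mul,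
      eval₂_C, eval2_R, ← hcLdef, FrobAdd.R_smul e _ hhalf]
    congr 1
    change _ = d * Rgen p e cL x ^ 2
    rw [hd]; ring
  simp only [hquad]
  have hdq : d ^ q = d := by
    rw [hd, ← map_ofNat iL 2, ← map_div₀, ← map_pow, hqF]
  have hdQ : d ^ Q = d := by
    rw [hd, ← map_ofNat iL 2, ← map_div₀, ← map_pow, hqQ]
  rw [sum_P_sq hχ h2L _ hd0, hkerL, gauss_value hL hχ h2L t Q hQ hQ4 (by rw [hcL, hQ2]) hd0 hdQ]
  · push_cast; rfl
  · intro b hb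
    have hbq : b ^ q = b := by
      rw [← sub_eq_zero]
      refine hχ.nondeg fun w => ?_
      obtain ⟨z, rfl⟩ : ∃ z, z ^ q = w := by
        have : Function.Injective (fun y : L => y ^ q) := by
          intro x y hxy
          have : (x - y) ^ q = 0 := by
            rw [hq, hL.sub, ← hq]; exact sub_eq_zero.2 hxy
          exact sub_eq_zero.1 (pow_eq_zero_iff hqpos.ne' |>.1 this)
        exact Finite.surjective_of_injective this w
      obtain ⟨x, hx⟩ := exists_R_eq hp (show cK e ≠ 0 by rw [hcK1]; exact one_ne_zero) (j z)
      have hcq : ∀ i, cK i ^ q = cK i := fun i => by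
        rw [hcKdef]; simp only; rw [← map_pow, hqF]
      have ht : (x ^ q - x) ^ Q ^ 2 = x ^ q - x := by
        have h3 := hA.fixq _ (hfrobA x z hx)
        have h4 : (x ^ Q ^ 2 - x) ^ q = (x ^ Q ^ 2) ^ q - x ^ q := by
          rw [hq]; exact hK.sub s _ _
        have h5 : (x ^ q - x) ^ Q ^ 2 = (x ^ q) ^ Q ^ 2 - x ^ Q ^ 2 := by
          rw [hQ2q]; exact hK.sub _ _ _
        rw [h4, ← pow_mul, mul_comm, pow_mul] at h3
        rw [h5]
        linear_combination h3
      obtain ⟨t, ht'⟩ := range_of_fix (j : L →+* K) (by rw [hcL, hQ2]; exact ht)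
      have h6 : Rgen p e cL t = z ^ q - z := by
        apply hjinj
        rw [hjP]
        change Rgen p e cK ((j : L →+* K) t) = _
        rw [ht', sub_eq_add_neg, hK.R_add]
        have h3 : Rgen p e cK (-x) = - Rgen p e cK x := by
          have h4 := hK.R_add e cK x (-x)
          rw [add_neg_cancel, hK.R_zero] at h4
          linear_combination -h4
        rw [h3, ← R_pow_fix hK hq hcq, hx, map_sub, map_pow]; ring
      have h7 : χ (b * (z ^ q - z)) = 1 := by rw [← h6]; exact hb t
      have h8 : (b ^ q - b) * z ^ q + b * (z ^ q - z) = (b * z) ^ q + -(b * z) := by ring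
      have h9 : χ ((b ^ q - b) * z ^ q + b * (z ^ q - z)) = 1 := by
        rw [h8, χ.map_add_eq_mul, hq, hχ.inv_pow, ← χ.map_add_eq_mul, add_neg_cancel,
          χ.map_zero_eq_one]
      rw [χ.map_add_eq_mul, h7, mul_one] at h9
      exact h9
    refine trivial_on_fixed hL hp hχ s r q hs hq hr0 hr hcL ?_
    have h4 : (4 : L) ^ q = 4 := by rw [← map_ofNat iL 4, ← map_pow, hqF]
    rw [div_pow, mul_pow, h4, hdq, ← pow_mul, mul_comm 2 q, pow_mul, hbq]
end partE3

section partF1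
variable {K : Type*} [Field K] [IsAlgClosed K] {p e s q : ℕ} {a : ℕ → K} {A : AddSubgroup K}

lemma E_pow_fix (h : FrobAdd K p) (hq : q = p ^ s) (ha : ∀ i, a i ^ q = a i)
    (x : K) : Egen p e a x ^ q = Egen p e a (x ^ q) := by
  let φ : K →+* K :=
    { toFun := fun z => z ^ q
      map_zero' := by rw [hq]; exact h.zero s
      map_one' := one_pow q
      map_add' := fun x y => by rw [hq]; exact h.add s x y
      map_mul' := fun x y => mul_pow x y q }
  have h1 := map_Egen φ p e a x
  have h2 : (fun i => φ (a i)) = a := funext ha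
  rw [h2] at h1
  exact h1

lemma N_mem (h : FrobAdd K p) (hq : q = p ^ s) (h2 : (2 : K) = 0) (ha : ∀ i, a i ^ q = a i)
    (hA : GoodSub p e q a A) {v : K} (hv : Egen p e a v = 0) : v ^ q + v ∈ A := by
  refine hA.max _ ?_ fun x hx => ?_
  · rw [h.E_add, ← E_pow_fix h hq ha, hv, hq, h.zero, add_zero]
  · have h3 : (fgen p e a v x - fgen p e a x v) ^ q = fgen p e a v x - fgen p e a x v := by
      rw [hq]; exact FrobAdd.fix_pow (omega_mem h e a hv (hA.E0 x hx)) s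
    have h4 : (fgen p e a v x - fgen p e a x v) ^ q = fgen p e a v x ^ q - fgen p e a x v ^ q := by
      rw [hq]; exact h.sub s _ _
    rw [h4, f_pow_fix h hq ha, f_pow_fix h hq ha, hA.fixq x hx] at h3
    rw [h.f_add_left, h.f_add_right]
    linear_combination h3 + (fgen p e a v x - fgen p e a x v) * h2

lemma V_fix (h : FrobAdd K p) (hq : q = p ^ s) (h2 : (2 : K) = 0) (ha : ∀ i, a i ^ q = a i)
    (hA : GoodSub p e q a A) {v : K} (hv : Egen p e a v = 0) : (v ^ q) ^ q = v := by
  have h3 := hA.fixq _ (N_mem h hq h2 ha hA hv)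
  have h4 : (v ^ q + v) ^ q = (v ^ q) ^ q + v ^ q := by
    rw [hq]; exact h.add s _ _
  rw [h4] at h3
  linear_combination h3

lemma fvv_mem (h : FrobAdd K p) (h2 : (2 : K) = 0) {v : K} (hv : Egen p e a v = 0) :
    fgen p e a v v ^ p = fgen p e a v v := by
  have h3 := h.f_id e a v v
  rw [hv] at h3
  linear_combination h3 + v * Rgen p e a v * h2

lemma fNN (h : FrobAdd K p) (hq : q = p ^ s) (h2 : (2 : K) = 0) (ha : ∀ i, a i ^ q = a i)
    {v : K} (hv : Egen p e a v = 0) :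
    fgen p e a (v ^ q + v) (v ^ q + v) = fgen p e a v (v ^ q + v) - fgen p e a (v ^ q + v) v := by
  have h3 : fgen p e a v v ^ q = fgen p e a v v := by
    rw [hq]; exact FrobAdd.fix_pow (fvv_mem h h2 hv) s
  rw [f_pow_fix h hq ha] at h3
  simp only [h.f_add_left, h.f_add_right]
  linear_combination h3 + (fgen p e a (v ^ q) v + fgen p e a v v) * h2

lemma char_two_frob (h : FrobAdd K p) (hq : q = p ^ s) (h2 : (2 : K) = 0) (ha : ∀ i, a i ^ q = a i)
    (hA : GoodSub p e q a A) {v X Y : K} (hv : Egen p e a v = 0) (hX : (X ^ q) ^ q = X + v)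
    (hY : Y ^ p - Y = X * Rgen p e a X) :
    (((Y ^ q) ^ q) ^ q) ^ q - Y = fgen p e a v v + fgen p e a (v ^ q + v) (v ^ q + v) := by
  have add : ∀ x y : K, (x + y) ^ q = x ^ q + y ^ q := fun x y => by rw [hq]; exact h.add s x y
  have sub : ∀ x y : K, (x - y) ^ q = x ^ q - y ^ q := fun x y => by rw [hq]; exact h.sub s x y
  have hdel : ∀ z : K, (z ^ q) ^ p - z ^ q = (z ^ p - z) ^ q := fun z => by
    rw [sub, ← pow_mul, ← pow_mul, mul_comm]
  have fq := f_pow_fix (e := e) h hq ha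
  have Rq := R_pow_fix (e := e) h hq ha
  set u := v ^ q + v with hu
  have huA : u ∈ A := N_mem h hq h2 ha hA hv
  have hvq : v ^ q = v + u := by rw [hu]; linear_combination -v * h2
  have huq := hA.fixq u huA
  have hvqq := V_fix h hq h2 ha hA hv
  -- the element of the Heisenberg group
  obtain ⟨b, hb⟩ : ∃ b, b = (Y ^ q) ^ q - Y - fgen p e a X v := ⟨_, rfl⟩
  have hbd : b ^ p - b = v * Rgen p e a v := by
    have h3 := h.f_id e a X v
    have h4 := hdel (Y ^ q)
    rw [hdel Y, hY, mul_pow, mul_pow, Rq, Rq, hX, h.R_add] at h4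
    rw [hv] at h3
    rw [hb, h.sub1, h.sub1]
    linear_combination h4 - hY - h3
  obtain ⟨b', hb'⟩ : ∃ b', b' = b ^ q - b - fgen p e a v u := ⟨_, rfl⟩
  have hbd' : b' ^ p - b' = u * Rgen p e a u := by
    have h3 := h.f_id e a v u
    have h4 := hdel b
    rw [hbd, mul_pow, Rq, hvq, h.R_add] at h4
    rw [hA.E0 u huA] at h3
    rw [hb', h.sub1, h.sub1]
    linear_combination h4 - hbd - h3
  have hbq' := hA.lift u huA b' hbd'
  have e1 : b ^ q = b + fgen p e a v u + b' := by rw [hb']; ring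
  have e2 : (b ^ q) ^ q = b + fgen p e a u u := by
    rw [e1, add, add, fq, hbq', hvq, huq, e1, h.f_add_left]
    linear_combination (fgen p e a v u + b') * h2
  have e3 : (Y ^ q) ^ q = Y + fgen p e a X v + b := by rw [hb]; ring
  rw [e3, add, add, add, add, e3, fq, fq, hX, hvqq, e2, h.f_add_left]
  linear_combination (fgen p e a X v + b) * h2
end partF1

section partF2
variable {K : Type*} [Field K] [IsAlgClosed K] {p e s q : ℕ} {a : ℕ → K} {A : AddSubgroup K}

/-- the diagonal of `f` -/
def diagF (h : FrobAdd K p) (h2 : (2 : K) = 0) (e : ℕ) (a : ℕ → K) (v : EKer h e a) : kSub h :=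
  ⟨fgen p e a v v, fvv_mem h h2 v.2⟩

lemma sum_diagF (h : FrobAdd K p) (hF : FrobAdd K[X] p) (hp : 1 < p) (hpK : (p : K) = 0)
    (hae : a e ≠ 0) (he : 0 < e) (h2 : (2 : K) = 0) [Fintype (EKer h e a)]
    (hk : Nat.card (kSub h) = p) (ψ : AddChar (kSub h) ℂ) (hψ : ψ ≠ 0) :
    ∑ v, ψ (diagF h h2 e a v) = - (p : ℂ) ^ e := by
  classical
  have hfk := finite_kSub h hp
  have : Fintype (kSub h) := Fintype.ofFinite _
  have hp0 : (p : ℂ) ≠ 0 := by exact_mod_cast (by omega : p ≠ 0)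
  have hV : Nat.card (EKer h e a) = p ^ (2 * e) := ncard_V hp hpK hae (by omega)
  have hsum : ∑ c, ψ c = 0 := by
    have := AddChar.sum_eq_ite ψ
    rwa [if_neg hψ] at this
  let n : kSub h → ℂ := fun c => ((univ.filter fun v => diagF h h2 e a v = c).card : ℂ)
  have hn : ∀ c, c ≠ 0 → (p : ℂ) * n c = (p : ℂ) ^ (2 * e) + (p : ℂ) ^ e := by
    intro c hc
    have h3 := ncard_fvv hF hp hpK hae he h2 (c := c) c.2 (fun h0 => hc (Subtype.ext h0))
    have h4 : {x | Egen p e a x = 0 ∧ fgen p e a x x = c}.ncard =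
        (univ.filter fun v : EKer h e a => diagF h h2 e a v = c).card := by
      rw [← Set.ncard_coe_finset, ← Set.ncard_image_of_injective _ (Subtype.val_injective (p := (· ∈ EKer h e a)))]
      congr 1
      ext x
      simp only [Set.mem_setOf_eq, coe_filter, mem_univ, true_and, Set.mem_image]
      constructor
      · rintro ⟨hx, hxc⟩
        exact ⟨⟨x, hx⟩, Subtype.ext hxc, rfl⟩
      · rintro ⟨y, hy, rfl⟩
        exact ⟨y.2, congrArg Subtype.val hy⟩
    rw [h4] at h3
    simp only [n]; exact_mod_cast h3
  have e1 : ∑ v, ψ (diagF h h2 e a v) = ∑ c, n c * ψ c := by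
    rw [← sum_fiberwise (s := univ) (g := diagF h h2 e a)]
    refine sum_congr rfl fun c _ => ?_
    rw [sum_congr rfl (g := fun _ => ψ c) (fun x hx => by rw [(mem_filter.1 hx).2]), sum_const,
      nsmul_eq_mul]
  have e2 : ∑ c, n c = (p : ℂ) ^ (2 * e) := by
    have h3 : ∑ v : EKer h e a, (1 : ℂ) = ∑ c, n c := by
      rw [← sum_fiberwise (s := univ) (g := diagF h h2 e a)]
      refine sum_congr rfl fun c _ => ?_
      rw [sum_const, nsmul_eq_mul, mul_one]
    rw [← h3, sum_const, nsmul_eq_mul, mul_one, card_univ, ← Nat.card_eq_fintype_card, hV]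
    push_cast; rfl
  have e3 : ∑ c, ((p : ℂ) * n c - ((p : ℂ) ^ (2 * e) + (p : ℂ) ^ e)) * (ψ c - 1) = 0 := by
    refine sum_eq_zero fun c _ => ?_
    by_cases hc : c = 0
    · rw [hc, ψ.map_zero_eq_one]; ring
    · rw [hn c hc]; ring
  have e4 : ∑ c, ((p : ℂ) * n c - ((p : ℂ) ^ (2 * e) + (p : ℂ) ^ e)) * (ψ c - 1) =
      p * ∑ c, n c * ψ c - p * ∑ c, n c - ((p : ℂ) ^ (2 * e) + (p : ℂ) ^ e) * ∑ c, ψ c +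
       ∑ c : kSub h, ((p : ℂ) ^ (2 * e) + (p : ℂ) ^ e) := by
    rw [mul_sum, mul_sum, mul_sum, ← sum_sub_distrib, ← sum_sub_distrib, ← sum_add_distrib]
    exact sum_congr rfl fun c _ => by ring
  rw [e3, hsum, e2, sum_const, card_univ, ← Nat.card_eq_fintype_card, hk, nsmul_eq_mul, ← e1] at e4
  apply mul_left_cancel₀ hp0
  linear_combination -e4

/-- `v ↦ v^q + v` on the kernel of `E` -/
def NHom (h : FrobAdd K p) (hq : q = p ^ s) (ha : ∀ i, a i ^ q = a i) : EKer h e a →+ EKer h e a :=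
  AddMonoidHom.mk' (fun v => ⟨(v : K) ^ q + v, by
    change Egen p e a _ = 0
    rw [h.E_add, ← E_pow_fix h hq ha, show Egen p e a v = 0 from v.2, hq, h.zero, add_zero]⟩) (by
    intro x y
    ext
    change ((x : K) + y) ^ q + (x + y) = (x ^ q + x) + (y ^ q + y)
    rw [hq, h.add]; ring)

lemma sum_diagF_N (h : FrobAdd K p) (hF : FrobAdd K[X] p) (hp : 1 < p) (hpK : (p : K) = 0)
    (hae : a e ≠ 0) (he : 0 < e) (h2 : (2 : K) = 0) [Fintype (EKer h e a)]
    (hk : Nat.card (kSub h) = p) (hq : q = p ^ s) (ha : ∀ i, a i ^ q = a i)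
    (hA : GoodSub p e q a A)
    (hcN : ¬ ∃ r : ℕ, Nat.card (NHom (e := e) h hq ha).ker = r ^ 2)
    (ψ : AddChar (kSub h) ℂ) (hψ : ψ ≠ 0) :
    ∑ v, ψ (diagF h h2 e a v + diagF h h2 e a (NHom h hq ha v)) = (p : ℂ) ^ e := by
  have hP := pairing_omega (e := e) (a := a) h ψ
  have hψ' : ∃ d, ψ d ≠ 1 := by
    by_contra! hc
    exact hψ (by ext x; simpa using hc x)
  have hV : Nat.card (EKer h e a) = p ^ (2 * e) := ncard_V hp hpK hae (by omega)
  have hk2 : ∀ c : kSub h, c + c = 0 := fun c => by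
    ext; change (c : K) + c = 0; linear_combination (c : K) * h2
  have hN : ∀ v : EKer h e a, ((NHom h hq ha v : EKer h e a) : K) = (v : K) ^ q + v := fun v => rfl
  have hdN : ∀ v, diagF h h2 e a (NHom h hq ha v) = omega h e a v (NHom h hq ha v) := by
    intro v; ext; exact fNN h hq h2 ha v.2
  have hsym : ∀ u v, omega h e a u v = omega h e a v u := by
    intro u v; ext; simp only [omega]
    linear_combination (fgen p e a u v - fgen p e a v u) * h2
  have key := hP.char_two_sum (pairing_omega_nondeg h hF hp hpK hae (by omega) ψ hψ')
    (by
      intro u v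
      have h3 : ψ (omega h e a u v + omega h e a u v) = 1 := by rw [hk2, ψ.map_zero_eq_one]
      rw [ψ.map_add_eq_mul] at h3
      exact mul_self_eq_one_iff.1 h3)
    (by
      intro u
      rw [show omega h e a u u = 0 by ext; simp [omega], ψ.map_zero_eq_one])
    (fun u v => by rw [hsym])
    (fun u => by ext; change (u : K) + u = 0; linear_combination (u : K) * h2)
    (fun v => ψ (diagF h h2 e a v))
    (by
      intro u v
      rw [← ψ.map_add_eq_mul, ← ψ.map_add_eq_mul]
      congr 1
      ext
      simp only [diagF, omega, AddSubgroup.coe_add, h.f_add_left, h.f_add_right]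
      linear_combination (fgen p e a v u) * h2)
    (NHom h hq ha) (fun v => by rw [hdN])
    (by
      intro u v
      congr 1
      ext
      simp only [omega, hN]
      have h3 : ((fgen p e a (u ^ q) v - fgen p e a v (u ^ q)) : K) ^ q =
          (fgen p e a (u ^ q) v - fgen p e a v (u ^ q)) := by
        have : Egen p e a ((u : K) ^ q) = 0 := by
          rw [← E_pow_fix h hq ha, show Egen p e a u = 0 from u.2, hq, h.zero]
        rw [hq] at this ⊢; exact FrobAdd.fix_pow (omega_mem h e a this v.2) s
      have h4 : ((fgen p e a (u ^ q) v - fgen p e a v (u ^ q)) : K) ^ q =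
          fgen p e a (u ^ q) v ^ q - fgen p e a v (u ^ q) ^ q := by
        rw [hq]; exact h.sub s _ _
      rw [h4, f_pow_fix h hq ha, f_pow_fix h hq ha, V_fix h hq h2 ha hA u.2] at h3
      simp only [h.f_add_left, h.f_add_right]
      linear_combination -h3)
    ⟨p ^ e, by rw [hV]; ring⟩ hcN
  rw [sum_diagF h hF hp hpK hae he h2 hk ψ hψ, neg_neg] at key
  rw [← key]
  exact sum_congr rfl fun v _ => by rw [ψ.map_add_eq_mul, hdN]
end partF2

section partF3

lemma not_two_sq {f r m : ℕ} (hf : Odd f) (hm : m ≠ 0) (h : 2 ^ f * r ^ 2 = m ^ 2) : False := by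
  have hr : r ≠ 0 := by
    rintro rfl
    rw [zero_pow two_ne_zero, mul_zero] at h
    exact hm (pow_eq_zero_iff two_ne_zero |>.1 h.symm)
  have h3 := congrArg (fun n => n.factorization 2) h
  rw [Nat.factorization_mul (by positivity) (by positivity), Nat.factorization_pow,
    Nat.factorization_pow, Nat.factorization_pow] at h3
  simp only [Finsupp.add_apply, Finsupp.smul_apply, smul_eq_mul,
    Nat.Prime.factorization_self Nat.prime_two] at h3
  obtain ⟨k, hk⟩ := hf
  omega

variable {F L K : Type*} [Field F] [Fintype F] [Field L] [Fintype L] [Field K] [IsAlgClosed K]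
  [Algebra F L] [Algebra F K] {p : ℕ}

lemma card_E_F (hF : FrobAdd F p) (hp : 1 < p) (h2 : (2 : F) = 0) {e s q f : ℕ} (hs : 0 < s)
    (hq : q = p ^ s) (hqf : q = 2 ^ f) (hf : Odd f) (hcF : Fintype.card F = q) (a : ℕ → F) :
    ¬ ∃ r : ℕ, Nat.card {x : F // Egen p e a x = 0} = r ^ 2 := by
  rintro ⟨r, hr⟩
  have hqF : ∀ z : F, z ^ q = z := fun z => by rw [← hcF]; exact FiniteField.pow_card z
  have hm : ∀ z : F, z ^ p ^ s = z := fun z => by rw [← hq]; exact hqF z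
  have hc : Nat.card F = p ^ s := by rw [Nat.card_eq_fintype_card, hcF, hq]
  have := finite_kSub hF hp
  have : Nontrivial (kSub hF) := ⟨⟨0, ⟨1, one_pow p⟩, fun h0 => by
      have := congrArg Subtype.val h0; simp at this⟩⟩
  obtain ⟨ψ, d, hd⟩ := exists_nontrivial_char (kSub hF)
  have hχ := goodChar_of hF hp s hs hm hc ψ (by rintro rfl; exact hd (by simp))
  set χ := ψ.compAddMonoidHom (trHom hF s hm)
  have hP : Pairing (fun x y : F => χ (x * Rgen p e a y + y * Rgen p e a x)) :=
    { add_left := fun x y z => by rw [← χ.map_add_eq_mul, hF.R_add]; congr 1; ring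
      add_right := fun x y z => by rw [← χ.map_add_eq_mul, hF.R_add]; congr 1; ring
      zero_left := fun y => by rw [hF.R_zero, zero_mul, mul_zero, add_zero, χ.map_zero_eq_one]
      zero_right := fun y => by rw [hF.R_zero, zero_mul, mul_zero, add_zero, χ.map_zero_eq_one] }
  have hPE : ∀ u g, χ (u * Rgen p e a g + g * Rgen p e a u) = χ (Egen p e a u * g ^ p ^ e) := by
    intro u g
    have h3 := hF.f_id e a g u
    have h4 : u * Rgen p e a g + g * Rgen p e a u = Egen p e a u * g ^ p ^ e +
      (fgen p e a g u ^ p + - fgen p e a g u) := by linear_combination -h3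
    rw [h4, χ.map_add_eq_mul, χ.map_add_eq_mul (_ ^ p), hχ.inv, ← χ.map_add_eq_mul (fgen _ _ _ _ _),
      add_neg_cancel, χ.map_zero_eq_one, mul_one]
  obtain ⟨m, hm'⟩ := hP.alt_square (fun x => by
    rw [show x * Rgen p e a x + x * Rgen p e a x = 0 by
      linear_combination x * Rgen p e a x * h2, χ.map_zero_eq_one])
  have hrad : ∀ u : F, (∀ g, χ (u * Rgen p e a g + g * Rgen p e a u) = 1) ↔ Egen p e a u = 0 := by
    intro u
    simp only [hPE]
    constructor
    · intro h3
      refine hχ.nondeg fun y => ?_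
      have : Function.Injective (fun y : F => y ^ p ^ e) := by
        intro x y hxy
        have : (x - y) ^ p ^ e = 0 := by rw [hF.sub]; exact sub_eq_zero.2 hxy
        exact sub_eq_zero.1 (pow_eq_zero_iff (pow_pos hF.1 e).ne' |>.1 this)
      obtain ⟨z, rfl⟩ := Finite.surjective_of_injective this y
      exact h3 z
    · intro h3 g
      rw [h3, zero_mul, χ.map_zero_eq_one]
  rw [Nat.card_congr (Equiv.subtypeEquivRight hrad), hr, hc, ← hq, hqf] at hm'
  refine not_two_sq hf ?_ hm'
  rintro rfl
  have h5 : Nat.card {x : F // Egen p e a x = 0} ≠ 0 := by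
    have : Nonempty {x : F // Egen p e a x = 0} := ⟨⟨0, hF.E_zero e a⟩⟩
    exact Nat.card_pos.ne'
  rw [hr] at h5
  have : (2 : ℕ) ^ f ≠ 0 := by positivity
  have h6 := mul_ne_zero this h5
  exact h6 (by rw [hm']; rfl)

lemma card_NHom_ker (hF : FrobAdd F p) (hK : FrobAdd K p) (hp : 1 < p) (h2 : (2 : F) = 0)
    {e s q f : ℕ} (hs : 0 < s)
    (hq : q = p ^ s) (hqf : q = 2 ^ f) (hf : Odd f) (hcF : Fintype.card F = q) (a : ℕ → F)
    (ha : ∀ i, (algebraMap F K (a i)) ^ q = algebraMap F K (a i)) :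
    ¬ ∃ r : ℕ, Nat.card (NHom (e := e) (a := fun i => algebraMap F K (a i)) hK hq ha).ker = r ^ 2 := by
  have h2K : (2 : K) = 0 := by rw [← map_ofNat (algebraMap F K) 2, h2, map_zero]
  have hqF : ∀ z : F, z ^ q = z := fun z => by rw [← hcF]; exact FiniteField.pow_card z
  have key := card_E_F (e := e) hF hp h2 hs hq hqf hf hcF a
  have hE : ∀ x : F, Egen p e a x = 0 ↔ Egen p e (fun i => algebraMap F K (a i)) (algebraMap F K x) = 0 := by
    intro x
    rw [← map_Egen, map_eq_zero]
  have hmem : ∀ v, v ∈ (NHom (e := e) (a := fun i => algebraMap F K (a i)) hK hq ha).ker ↔ (v : K) ^ q = v := by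
    intro v
    rw [AddMonoidHom.mem_ker, Subtype.ext_iff]
    change (v : K) ^ q + v = 0 ↔ _
    constructor
    · intro h3; linear_combination h3 - (v : K) * h2K
    · intro h3; linear_combination h3 + (v : K) * h2K
  rwa [Nat.card_congr (Equiv.ofBijective
    (β := (NHom (e := e) (a := fun i => algebraMap F K (a i)) hK hq ha).ker)
    (fun x : {x : F // Egen p e a x = 0} => ⟨⟨algebraMap F K x, (hE x).1 x.2⟩, by
      rw [hmem]; change algebraMap F K x ^ q = _; rw [← map_pow, hqF]⟩) ⟨?_, ?_⟩)] at key
  · intro x y hxy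
    have := congrArg Subtype.val (congrArg Subtype.val hxy)
    exact Subtype.ext ((algebraMap F K).injective this)
  · rintro ⟨v, hv⟩
    obtain ⟨y, hy⟩ := range_of_fix (algebraMap F K) (x := v) (by rw [hcF]; exact (hmem v).1 hv)
    refine ⟨⟨y, (hE y).2 (by rw [hy]; exact v.2)⟩, ?_⟩
    exact Subtype.ext (Subtype.ext hy)
end partF3

section partF4
variable {F L K : Type*} [Field F] [Fintype F] [Field L] [Fintype L] [Field K] [IsAlgClosed K]
  [Algebra F L] [Algebra F K] {p : ℕ}

theorem char2_sum (j : L →ₐ[F] K) {e s q f : ℕ} (hF : FrobAdd F p)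
    (hL : FrobAdd L p) (hK : FrobAdd K p) (hKX : FrobAdd K[X] p) (hp : 1 < p) (hpK : (p : K) = 0)
    (h2 : (2 : F) = 0) (he : 0 < e)
    (hs : 0 < s) (hq : q = p ^ s) (hqf : q = 2 ^ f) (hf : Odd f) (hcF : Fintype.card F = q)
    (hcL : Fintype.card L = q ^ 4) (m : ℕ) (hm0 : 0 < m) (hm : ∀ z : L, z ^ p ^ m = z)
    (hmq : p ^ m = q ^ 4)
    (a : ℕ → F) (hae : a e ≠ 0) (A : AddSubgroup K)
    (hA : GoodSub p e q (fun i => algebraMap F K (a i)) A)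
    (χ₁ : AddChar (kSub hL) ℂ) (hχ₁ : χ₁ ≠ 0) :
    ∑ x, χ₁ (trHom hL m hm (x * Rgen p e (fun i => algebraMap F L (a i)) x)) =
      ((p ^ e * q ^ 2 : ℕ) : ℂ) := by
  classical
  set iL := algebraMap F L with hiL
  set iK := algebraMap F K with hiK
  set aL : ℕ → L := fun i => iL (a i) with haL
  set aK : ℕ → K := fun i => iK (a i) with haK
  have hj : ∀ x, j (iL x) = iK x := j.commutes
  have hjinj : Function.Injective j := j.toRingHom.injective
  have hjR : ∀ x : L, j (Rgen p e aL x) = Rgen p e aK (j x) := fun x =>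
    map_Rgen' (j : L →+* K) p e aL x (fun n => hj (a n))
  have hjE : ∀ x : L, j (Egen p e aL x) = Egen p e aK (j x) := fun x => by
    have h3 := map_Egen (j : L →+* K) p e aL x
    rw [show (fun i => (j : L →+* K) (aL i)) = aK from funext fun n => hj (a n)] at h3
    exact h3
  have h2L : (2 : L) = 0 := by rw [← map_ofNat iL 2, h2, map_zero]
  have h2K : (2 : K) = 0 := by rw [← map_ofNat iK 2, h2, map_zero]
  have hqF : ∀ z : F, z ^ q = z := fun z => by rw [← hcF]; exact FiniteField.pow_card z
  have haLq : ∀ i, aL i ^ q = aL i := fun i => by rw [haL]; simp only; rw [← map_pow, hqF]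
  have haKq : ∀ i, aK i ^ q = aK i := fun i => by rw [haK]; simp only; rw [← map_pow, hqF]
  have hqq : q ^ 2 = p ^ (s * 2) := by rw [hq, pow_mul]
  have hq1 : 1 < q := by rw [hq]; exact Nat.one_lt_pow hs.ne' hp
  have hqq1 : 1 < q ^ 2 := Nat.one_lt_pow two_ne_zero hq1
  have hLq : FrobAdd L (q ^ 2) := by rw [hqq]; exact hL.pow _
  have hLcard : Nat.card L = (q ^ 2) ^ 2 := by rw [Nat.card_eq_fintype_card, hcL]; ring
  have hLfix : ∀ z : L, z ^ (q ^ 2) ^ 2 = z := fun z => by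
    rw [← hLcard, Nat.card_eq_fintype_card]; exact FiniteField.pow_card z
  have hLpm : Nat.card L = p ^ m := by rw [Nat.card_eq_fintype_card, hcL, hmq]
  obtain ⟨hkL, -, -⟩ := trHom_facts hL hp m hm0 hm hLpm
  obtain ⟨hDcard, hDsurj, -⟩ := trHom_facts hLq hqq1 2 two_pos hLfix hLcard
  have hχ := goodChar_of hL hp m hm0 hm hLpm χ₁ hχ₁
  set χ := χ₁.compAddMonoidHom (trHom hL m hm) with hχdef
  have hχapp : ∀ z, χ z = χ₁ (trHom hL m hm z) := fun z => rfl
  -- transport of the character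
  let ι : kSub hL →+ kSub hK := AddMonoidHom.mk' (fun c => ⟨j c, by
    change j c ^ p = j c
    rw [← map_pow, show (c : L) ^ p = c from c.2]⟩) (fun x y => Subtype.ext (map_add j _ _))
  have hιb : Function.Bijective ι := by
    refine ⟨fun x y hxy => Subtype.ext (hjinj (congrArg Subtype.val hxy)), fun c => ?_⟩
    obtain ⟨y, hy⟩ := range_of_fix (j : L →+* K) (x := c) (by
      rw [hcL, ← hmq]; exact FrobAdd.fix_pow (show (c : K) ^ p = c from c.2) m)
    refine ⟨⟨y, ?_⟩, Subtype.ext hy⟩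
    apply hjinj
    rw [map_pow]
    change ((j : L →+* K) y) ^ p = (j : L →+* K) y
    rw [hy]; exact c.2
  let ιe := AddEquiv.ofBijective ι hιb
  have hkK : Nat.card (kSub hK) = p := (Nat.card_congr ιe.toEquiv).symm.trans hkL
  let ψ : AddChar (kSub hK) ℂ := χ₁.compAddMonoidHom ιe.symm.toAddMonoidHom
  have hψι : ∀ c, ψ (ι c) = χ₁ c := fun c => by
    change χ₁ (ιe.symm (ιe c)) = _
    rw [AddEquiv.symm_apply_apply]
  have hψ : ψ ≠ 0 := by
    intro h0
    apply hχ₁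
    ext c
    rw [← hψι, h0]; rfl
  -- reduction to the orthogonal of the fixed field of `q^2`
  set D := kSub hLq with hD
  have hDtriv : ∀ z ∈ D, χ z = 1 := fun z hz =>
    trivial_on_fixed hL hp hχ (s * 2) 2 (q ^ 2) (by omega) hqq two_pos (by exact_mod_cast h2L)
      (by rw [hcL]; ring) hz
  have hP : Pairing (fun u x : L => χ (u ^ p ^ e * Egen p e aL x)) :=
    { add_left := fun x y z => by rw [← χ.map_add_eq_mul, hL.add]; congr 1; ring
      add_right := fun x y z => by rw [← χ.map_add_eq_mul, hL.E_add]; congr 1; ring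
      zero_left := fun y => by rw [hL.zero, zero_mul, χ.map_zero_eq_one]
      zero_right := fun y => by rw [hL.E_zero, mul_zero, χ.map_zero_eq_one] }
  have hpowD : ∀ (z : L), z ∈ D → ∀ i, (z ^ i) ∈ D := fun z hz i => by
    change (z ^ i) ^ q ^ 2 = z ^ i
    rw [← pow_mul, mul_comm, pow_mul, show z ^ q ^ 2 = z from hz]
  have hmulD : ∀ y ∈ D, ∀ z ∈ D, y * z ∈ D := fun y hy z hz => by
    change (y * z) ^ q ^ 2 = y * z
    rw [mul_pow, show z ^ q ^ 2 = z from hz, show y ^ q ^ 2 = y from hy]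
  have hRD : ∀ z ∈ D, Rgen p e aL z ∈ D := fun z hz =>
    D.sum_mem fun i _ => hmulD _ (by
      change aL i ^ q ^ 2 = aL i
      rw [pow_two, pow_mul, haLq, haLq]) _ (hpowD z hz _)
  have hperp : ∀ x, x ∈ hP.perp D ↔ Egen p e aL (x ^ q ^ 2 + x) = 0 := by
    intro x
    have hEq : Egen p e aL (x ^ q ^ 2 + x) = Egen p e aL x ^ q ^ 2 + Egen p e aL x := by
      rw [hL.E_add]
      congr 1
      apply hjinj
      rw [hjE, map_pow, map_pow, hjE, E_pow_fix hK hqq (fun i => by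
        rw [pow_two, pow_mul, haKq, haKq])]
    rw [hEq, Pairing.mem_perp]
    set w := Egen p e aL x with hw
    constructor
    · intro h3
      refine hχ.nondeg fun y => ?_
      have hinj : Function.Injective (fun y : L => y ^ p ^ e) := by
        intro x y hxy
        have : (x - y) ^ p ^ e = 0 := by rw [hL.sub]; exact sub_eq_zero.2 hxy
        exact sub_eq_zero.1 (pow_eq_zero_iff (pow_pos hL.1 e).ne' |>.1 this)
      obtain ⟨z, hz⟩ := Finite.surjective_of_injective hinj y
      simp only at hz
      have h4 := h3 (z ^ q ^ 2 + z) (by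
        change (z ^ q ^ 2 + z) ^ q ^ 2 = _
        rw [hLq.2, ← pow_mul, ← pow_two, hLfix, add_comm])
      have h5 : (z ^ q ^ 2 + z) ^ p ^ e = y ^ q ^ 2 + y := by
        rw [hL.add, hz, ← pow_mul, mul_comm, pow_mul, hz]
      rw [h5, add_mul, χ.map_add_eq_mul, hqq, ← hχ.inv_pow (s * 2) (_ * _), ← hqq, mul_pow,
        ← pow_mul, ← pow_two, hLfix, ← χ.map_add_eq_mul] at h4
      rw [← h4]; congr 1; ring
    · intro h3 u hu
      refine hDtriv _ (hmulD _ (hpowD u hu _) _ ?_)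
      change w ^ q ^ 2 = w
      linear_combination h3 - w * h2L
  have hstep := hP.sum_quad (fun x => χ (x * Rgen p e aL x)) D (by
    intro u hu x
    have h3 := hL.f_id e aL u x
    have h4 : (u + x) * Rgen p e aL (u + x) = x * Rgen p e aL x + u ^ p ^ e * Egen p e aL x +
        u * Rgen p e aL u + (fgen p e aL u x ^ p + - fgen p e aL u x) := by
      rw [hL.R_add]; linear_combination -h3
    rw [h4, χ.map_add_eq_mul, χ.map_add_eq_mul (_ ^ p), hχ.inv,
      ← χ.map_add_eq_mul (fgen _ _ _ _ _), add_neg_cancel, χ.map_zero_eq_one, mul_one,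
      χ.map_add_eq_mul, hDtriv _ (hmulD _ hu _ (hRD u hu)), mul_one, χ.map_add_eq_mul])
  change ∑ x, χ (x * Rgen p e aL x) = _
  rw [hstep]
  -- fibre over `v = x^{q^2} + x`
  have := finite_V (K := K) (a := aK) (e := e) hp (by rw [haK]; exact (map_ne_zero iK).2 hae)
    (by omega)
  have : Finite (EKer hK e aK) := this
  have : Fintype (EKer hK e aK) := Fintype.ofFinite _
  let G : EKer hK e aK → ℂ := fun v =>
    ψ (diagF hK h2K e aK v + diagF hK h2K e aK (NHom hK hq haKq v))
  let φ : L → ℂ := fun z => if hz : Egen p e aK (j z) = 0 then G ⟨j z, hz⟩ else 0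
  let g : L →+ L := AddMonoidHom.mk' (fun x => x ^ q ^ 2 + x) (fun x y => by rw [hLq.2]; ring)
  have hφ : ∑ x with x ∈ hP.perp D, χ (x * Rgen p e aL x) = ∑ x, φ (g x) := by
    rw [sum_filter]
    refine sum_congr rfl fun x _ => ?_
    simp only [hperp]
    have hEg : Egen p e aL (x ^ q ^ 2 + x) = 0 ↔ Egen p e aK (j (g x)) = 0 := by
      rw [← hjE]
      exact ((map_eq_zero_iff j hjinj)).symm
    by_cases hx : Egen p e aK (j (g x)) = 0
    · rw [if_pos (hEg.2 hx)]
      simp only [φ]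
      rw [dif_pos hx]
      simp only [G]
      rw [hχapp, ← hψι]
      congr 1
      ext
      change j (∑ i ∈ range m, (x * Rgen p e aL x) ^ p ^ i) =
        fgen p e aK (j (g x)) (j (g x)) + fgen p e aK (j (g x) ^ q + j (g x)) (j (g x) ^ q + j (g x))
      obtain ⟨Y, hY⟩ := exists_artin hp (j x * Rgen p e aK (j x))
      rw [← char_two_frob hK hq h2K haKq hA hx (X := j x) (Y := Y) (by
        change (j x ^ q) ^ q = j x + j (x ^ q ^ 2 + x)
        rw [map_add, map_pow, ← pow_mul, ← pow_two]
        linear_combination -(j x) * h2K) hY]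
      have h3 := hK.telescope m Y
      have h4 : ∑ i ∈ range m, (Y ^ p - Y) ^ p ^ i = Y ^ p ^ m - Y := by
        rw [← h3, hK.sum1, ← sum_sub_distrib]
        refine sum_congr rfl fun i _ => ?_
        rw [hK.sub, ← pow_mul, ← pow_mul, mul_comm]
      have h5 : (((Y ^ q) ^ q) ^ q) ^ q = Y ^ p ^ m := by
        rw [hmq, ← pow_mul, ← pow_mul, ← pow_mul]; congr 1; ring
      rw [h5, ← h4, hY, map_sum]
      refine sum_congr rfl fun i _ => ?_
      rw [map_pow, map_mul, hjR]
    · rw [if_neg (fun h0 => hx (hEg.1 h0))]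
      simp only [φ]
      rw [dif_neg hx]
  have hVL : ∀ v : EKer hK e aK, ∃ z : L, j z = v := by
    intro v
    have h3 : ((v : K) ^ q) ^ q = v := V_fix hK hq h2K haKq hA v.2
    obtain ⟨y, hy⟩ := range_of_fix (j : L →+* K) (x := v) (by
      rw [hcL, show q ^ 4 = q * q * (q * q) by ring, pow_mul, pow_mul (_ ^ (q * q)), pow_mul (v : K), h3, h3])
    exact ⟨y, hy⟩
  choose ζ hζ using hVL
  have hφG : ∑ z with z ∈ g.range, φ z = ∑ v, G v := by
    have h3 : ∑ z with z ∈ g.range, φ z = ∑ z, φ z := by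
      refine sum_subset (filter_subset _ _) fun z _ hz => ?_
      simp only [φ]
      refine dif_neg fun hz0 => hz (mem_filter.2 ⟨mem_univ _, ?_⟩)
      have hzD : z ∈ D := by
        change z ^ q ^ 2 = z
        apply hjinj
        have h3 := V_fix hK hq h2K haKq hA hz0
        rw [map_pow, pow_two, pow_mul, h3]
      obtain ⟨y, hy⟩ := hDsurj ⟨z, hzD⟩
      refine ⟨y, ?_⟩
      have h4 := congrArg Subtype.val hy
      rw [trHom_coe] at h4
      simp only [sum_range_succ, range_zero, sum_empty, pow_zero, pow_one, zero_add] at h4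
      rw [← h4]
      change y ^ q ^ 2 + y = _
      ring
    rw [h3]
    symm
    refine Fintype.sum_of_injective ζ ?_ _ _ ?_ ?_
    · intro u v huv
      apply Subtype.ext
      rw [← hζ u, ← hζ v, huv]
    · intro z hz
      refine dif_neg fun hz0 => hz ⟨⟨j z, hz0⟩, hjinj (hζ _)⟩
    · intro v
      have : Egen p e aK (j (ζ v)) = 0 := by rw [hζ]; exact v.2
      simp only [φ]
      rw [dif_pos this]
      congr 1
      exact Subtype.ext (hζ v).symm
  have hker : Nat.card g.ker = q ^ 2 := by
    rw [← hDcard]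
    congr 1
    have : g.ker = D := by
      ext z
      rw [AddMonoidHom.mem_ker]
      change z ^ q ^ 2 + z = 0 ↔ z ^ q ^ 2 = z
      constructor
      · intro h3; linear_combination h3 - z * h2L
      · intro h3; linear_combination h3 + z * h2L
    rw [this]
  rw [hφ, sum_fiber g φ, hφG, hker, sum_diagF_N hK hKX hp hpK
    (by rw [haK]; exact (map_ne_zero iK).2 hae) he h2K hkK hq haKq hA
    (card_NHom_ker hF hK hp h2 hs hq hqf hf hcF a haKq) ψ hψ]
  push_cast; ring
end partF4

/-- if moreover `f` is odd and `p₀ ≢ 1 (mod 4)`, then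
`#{(x,y) ∈ F_{q^{2p₀}}² : y^p − y = x·R(x)} = q^{2p₀} + (p−1)p^e q^{p₀}`,
i.e. the Van der Geer–Van der Vlugt curve is `F_{q^{2p₀}}`-maximal. -/
theorem statement18 {F K F' : Type*} [Field F] [Fintype F]
    [Field K] [IsAlgClosed K] [Algebra F K]
    [Field F'] [Fintype F'] [DecidableEq F'] [Algebra F F']
    (p₀ n p s q e f : ℕ) (hp₀ : p₀.Prime) [CharP F p₀] (hn : 0 < n) (hpn : p = p₀ ^ n)
    (hs : 0 < s) (hq : q = p ^ s) (hcard : Fintype.card F = q) (hf : q = p₀ ^ f)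
    (a : ℕ → F) (hae : a e ≠ 0) (hne : (p₀, e) ≠ (2, 0))
    (hfodd : Odd f) (hp₀mod : p₀ % 4 ≠ 1)
    -- `A_R = S` is a maximal abelian subgroup of `H_R` contained in `F_q × F_q`
    (S : Set (K × K))
    (hSsub : S ⊆ Hset p e (fun i => algebraMap F K (a i)))
    (hS0 : ((0 : K), (0 : K)) ∈ S)
    (hSmul : ∀ h ∈ S, ∀ h' ∈ S, Hmul p e (fun i => algebraMap F K (a i)) h h' ∈ S)
    (hSinv : ∀ h ∈ S, ∃ h' ∈ S, Hmul p e (fun i => algebraMap F K (a i)) h h' = (0, 0))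
    (hScomm : ∀ h ∈ S, ∀ h' ∈ S, Hmul p e (fun i => algebraMap F K (a i)) h h' =
      Hmul p e (fun i => algebraMap F K (a i)) h' h)
    (hSmax : ∀ T : Set (K × K), T ⊆ Hset p e (fun i => algebraMap F K (a i)) →
      ((0 : K), (0 : K)) ∈ T →
      (∀ h ∈ T, ∀ h' ∈ T, Hmul p e (fun i => algebraMap F K (a i)) h h' ∈ T) →
      (∀ h ∈ T, ∃ h' ∈ T, Hmul p e (fun i => algebraMap F K (a i)) h h' = (0, 0)) →
      (∀ h ∈ T, ∀ h' ∈ T, Hmul p e (fun i => algebraMap F K (a i)) h h' =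
        Hmul p e (fun i => algebraMap F K (a i)) h' h) →
      S ⊆ T → T = S)
    (hSF : ∀ h ∈ S, (∃ x : F, algebraMap F K x = h.1) ∧ (∃ y : F, algebraMap F K y = h.2))
    -- `F' = F_{q^{2p₀}}`
    (hcard' : Fintype.card F' = q ^ (2 * p₀)) :
    ((Finset.univ.filter fun z : F' × F' =>
        z.2 ^ p - z.2 = z.1 * Rgen p e (fun i => algebraMap F F' (a i)) z.1).card : ℤ) =
      (q : ℤ) ^ (2 * p₀) + ((p : ℤ) - 1) * (p : ℤ) ^ e * (q : ℤ) ^ p₀ := by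
  classical
  haveI := Fact.mk hp₀
  have hpp : p₀ ∣ p := by rw [hpn]; exact dvd_pow_self _ hn.ne'
  haveI : CharP F' p₀ := charP_of_injective_algebraMap (algebraMap F F').injective p₀
  haveI : CharP K p₀ := charP_of_injective_algebraMap (algebraMap F K).injective p₀
  have hp : 1 < p := by rw [hpn]; exact Nat.one_lt_pow hn.ne' hp₀.one_lt
  have hF : FrobAdd F p := by rw [hpn]; exact FrobAdd.of_char F hp₀ n
  have hFX : FrobAdd F[X] p := by rw [hpn]; exact FrobAdd.of_char F[X] hp₀ n
  have hL : FrobAdd F' p := by rw [hpn]; exact FrobAdd.of_char F' hp₀ n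
  have hK : FrobAdd K p := by rw [hpn]; exact FrobAdd.of_char K hp₀ n
  have hKX : FrobAdd K[X] p := by rw [hpn]; exact FrobAdd.of_char K[X] hp₀ n
  have hpF : (p : F) = 0 := (CharP.cast_eq_zero_iff F p₀ p).2 hpp
  have hpK : (p : K) = 0 := (CharP.cast_eq_zero_iff K p₀ p).2 hpp
  have hqF : ∀ z : F, z ^ q = z := fun z => by rw [← hcard]; exact FiniteField.pow_card z
  have h2iff : (2 : F) = 0 ↔ p₀ = 2 := by
    rw [show (2 : F) = ((2 : ℕ) : F) by norm_cast, CharP.cast_eq_zero_iff F p₀ 2,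
      Nat.prime_dvd_prime_iff_eq hp₀ Nat.prime_two]
  have h2iffK : (2 : K) = 0 ↔ p₀ = 2 := by
    rw [show (2 : K) = ((2 : ℕ) : K) by norm_cast, CharP.cast_eq_zero_iff K p₀ 2,
      Nat.prime_dvd_prime_iff_eq hp₀ Nat.prime_two]
  haveI : Algebra.IsAlgebraic F F' := Algebra.IsAlgebraic.of_finite F F'
  let j : F' →ₐ[F] K := IsAlgClosed.lift
  obtain ⟨A, hA⟩ := exists_goodSub hK hKX hp hpK
    (a := fun i => algebraMap F K (a i)) (e := e) ((map_ne_zero (algebraMap F K)).2 hae)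
    (fun he0 h20 => hne (by rw [h2iffK.1 h20, he0])) q S hSsub hS0 hSmul hSinv hScomm hSmax
    (fun h hh => by
      obtain ⟨⟨x, hx⟩, ⟨y, hy⟩⟩ := hSF h hh
      rw [← hx, ← hy, ← map_pow, ← map_pow, hqF, hqF]
      exact ⟨rfl, rfl⟩)
  have hp0pos := hp₀.pos
  have hm0 : 0 < s * (2 * p₀) := by positivity
  have hmq : p ^ (s * (2 * p₀)) = q ^ (2 * p₀) := by rw [hq, pow_mul]
  have hm : ∀ z : F', z ^ p ^ (s * (2 * p₀)) = z := fun z => by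
    rw [hmq, ← hcard']; exact FiniteField.pow_card z
  have hc : Nat.card F' = p ^ (s * (2 * p₀)) := by
    rw [Nat.card_eq_fintype_card, hcard', hmq]
  have key := count_points hL hp _ hm0 hm hc
    (fun x => x * Rgen p e (fun i => algebraMap F F' (a i)) x) (p ^ e * q ^ p₀) (by
    intro χ hχ
    by_cases h20 : p₀ = 2
    · subst h20
      exact char2_sum j hF hL hK hKX hp hpK (h2iff.2 rfl)
        (Nat.pos_of_ne_zero fun h0 => hne (by rw [h0])) hs hq hf hfodd hcard hcard' _ hm0 hm hmq
        a hae A hA χ hχ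
    · have hodd : p₀ % 2 = 1 := hp₀.eq_two_or_odd.resolve_left h20
      have h43 : p₀ % 4 = 3 := by omega
      refine odd_sum j (r := 2 * p₀) (t := s * p₀) (Q := q ^ p₀) hF hFX hL hK hp hpF
        (fun h0 => h20 (h2iff.1 h0)) hs hq hcard hcard' (by positivity) ?_ ?_ ?_ ?_ ?_ a hae A hA _
        (goodChar_of hL hp _ hm0 hm hc χ hχ)
      · push_cast; rw [CharP.cast_eq_zero, mul_zero]
      · rw [hq, pow_mul]
      · rw [mul_comm, pow_mul]
      · rw [hf, ← pow_mul]
        obtain ⟨k, hk⟩ := hfodd.mul (Nat.odd_iff.2 hodd)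
        rw [hk, pow_succ, pow_mul, Nat.mul_mod, Nat.pow_mod, Nat.pow_mod p₀, h43]
        norm_num
      · intro x; exact FrobAdd.fix_pow (hqF x) p₀)
  rw [key]
  have hmq' : (p : ℤ) ^ (s * (2 * p₀)) = (q : ℤ) ^ (2 * p₀) := by exact_mod_cast hmq
  rw [hmq']
  push_cast
  ring
end

section
/- Assume p_0 = 2, e ≥ 1, and H_R ⊆ F_q × F_q. Then f is even, and #{(x,y) ∈ F_{q^2} × F_{q^2} : y^p − y = x·R(x)} = q² − (p−1)·p^e·q. (Equivalently, the smooth compactification of the affine curve y^p − y = xR(x), which has genus p^e(p−1)/2 and a single point at infinity, is F_{q^2}-minimal.) -/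
open Finset Polynomial

section generic

lemma exists_frob (A : Type*) [CommRing A] [CharP A 2] {n p : ℕ} (hp : p = 2 ^ n) (i : ℕ) :
    ∃ φ : A →+* A, ∀ x, φ x = x ^ p ^ i := by
  have : Fact (Nat.Prime 2) := ⟨Nat.prime_two⟩
  refine ⟨iterateFrobenius A 2 (n * i), fun x => ?_⟩
  rw [iterateFrobenius_def, hp, pow_mul]

lemma add_pp {A : Type*} [CommRing A] [CharP A 2] {n p : ℕ} (hp : p = 2 ^ n) (i : ℕ) (x y : A) :
    (x + y) ^ p ^ i = x ^ p ^ i + y ^ p ^ i := by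
  obtain ⟨φ, h⟩ := exists_frob A hp i
  simp only [← h, map_add]

lemma sum_pp {A : Type*} [CommRing A] [CharP A 2] {n p : ℕ} (hp : p = 2 ^ n) (i : ℕ)
    {ι : Type*} (t : Finset ι) (g : ι → A) :
    (∑ j ∈ t, g j) ^ p ^ i = ∑ j ∈ t, g j ^ p ^ i := by
  obtain ⟨φ, h⟩ := exists_frob A hp i
  simp only [← h, map_sum]

lemma Rgen_map {A B : Type*} [CommRing A] [CommRing B] (φ : A →+* B) (p e : ℕ) (a : ℕ → A) (x : A) :
    φ (Rgen p e a x) = Rgen p e (fun i => φ (a i)) (φ x) := by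
  simp [Rgen]

lemma Egen_map {A B : Type*} [CommRing A] [CommRing B] (φ : A →+* B) (p e : ℕ) (a : ℕ → A) (x : A) :
    φ (Egen p e a x) = Egen p e (fun i => φ (a i)) (φ x) := by
  simp [Egen, Rgen_map]

lemma fgen_map {A B : Type*} [CommRing A] [CommRing B] (φ : A →+* B) (p e : ℕ) (a : ℕ → A)
    (x y : A) :
    φ (fgen p e a x y) = fgen p e (fun i => φ (a i)) (φ x) (φ y) := by
  simp [fgen, Rgen_map]

variable {A : Type*} [CommRing A] [CharP A 2] {n p : ℕ} (hp : p = 2 ^ n) (e : ℕ) (a : ℕ → A)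
include hp

lemma Rgen_add (x y : A) : Rgen p e a (x + y) = Rgen p e a x + Rgen p e a y := by
  simp only [Rgen, add_pp hp, mul_add, Finset.sum_add_distrib]

lemma Egen_add (x y : A) : Egen p e a (x + y) = Egen p e a x + Egen p e a y := by
  simp only [Egen, Rgen_add hp, add_pp hp, mul_add, Finset.sum_add_distrib]
  ring

lemma fgen_add_left (x x' y : A) : fgen p e a (x + x') y = fgen p e a x y + fgen p e a x' y := by
  simp only [fgen, add_pp hp, mul_add, add_mul, Finset.sum_add_distrib]
  ring

/-- The Artin-Schreier identity for `f_R`. -/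
lemma fgen_pow (x y : A) :
    fgen p e a x y ^ p - fgen p e a x y =
      x * Rgen p e a y + y * Rgen p e a x + x ^ p ^ e * Egen p e a y := by
  have neg : ∀ z : A, -z = z := fun z => CharTwo.neg_eq z
  have h1 : ∀ (m : ℕ) (z : A),
      (∑ j ∈ Finset.range m, z ^ p ^ j) ^ p - ∑ j ∈ Finset.range m, z ^ p ^ j = z ^ p ^ m - z := by
    intro m z
    have : (∑ j ∈ Finset.range m, z ^ p ^ j) ^ p = ∑ j ∈ Finset.range m, z ^ p ^ (j+1) := by
      have := sum_pp hp 1 (Finset.range m) (fun j => z ^ p ^ j)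
      rw [pow_one] at this
      rw [this]
      refine Finset.sum_congr rfl fun j _ => ?_
      rw [← pow_mul, pow_succ]
    rw [this, ← Finset.sum_sub_distrib, Finset.sum_range_sub (fun j => z ^ p ^ j)]
    simp
  have hf : fgen p e a x y =
      (∑ i ∈ Finset.range e, ∑ j ∈ Finset.range (e - i), (a i * x ^ p ^ i * y) ^ p ^ j)
      + ∑ i ∈ Finset.range e, (x * Rgen p e a y) ^ p ^ i := by
    rw [fgen, neg, Finset.sum_add_distrib]
  have h2 : (∑ i ∈ Finset.range e, ∑ j ∈ Finset.range (e - i), (a i * x ^ p ^ i * y) ^ p ^ j) ^ p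
      - (∑ i ∈ Finset.range e, ∑ j ∈ Finset.range (e - i), (a i * x ^ p ^ i * y) ^ p ^ j)
      = ∑ i ∈ Finset.range (e + 1), ((a i * x ^ p ^ i * y) ^ p ^ (e - i) - a i * x ^ p ^ i * y) := by
    have := sum_pp hp 1 (Finset.range e)
      (fun i => ∑ j ∈ Finset.range (e - i), (a i * x ^ p ^ i * y) ^ p ^ j)
    rw [pow_one] at this
    rw [this, ← Finset.sum_sub_distrib, Finset.sum_range_succ]
    simp [h1]
  have h3 : ∑ i ∈ Finset.range (e + 1), (a i * x ^ p ^ i * y) ^ p ^ (e - i)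
      = x ^ p ^ e * ∑ i ∈ Finset.range (e + 1), (a i * y) ^ p ^ (e - i) := by
    rw [Finset.mul_sum]
    refine Finset.sum_congr rfl fun i hi => ?_
    have : e = i + (e - i) := by have := Finset.mem_range.1 hi; omega
    have h : x ^ p ^ e = (x ^ p ^ i) ^ p ^ (e - i) := by
      rw [← pow_mul, ← pow_add, ← this]
    rw [h, ← mul_pow]; ring
  have h4 : ∑ i ∈ Finset.range (e + 1), a i * x ^ p ^ i * y = y * Rgen p e a x := by
    rw [Rgen, Finset.mul_sum]
    exact Finset.sum_congr rfl fun i _ => by ring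
  have hadd : ∀ u v : A, (u + v) ^ p = u ^ p + v ^ p := by
    intro u v; simpa using add_pp hp 1 u v
  have h5 := h1 e (x * Rgen p e a y)
  rw [Finset.sum_sub_distrib, h3, h4] at h2
  rw [hf, hadd, add_sub_add_comm, h2, h5, Egen, mul_pow, sub_eq_add_neg, sub_eq_add_neg, neg, neg]
  ring

end generic

section lam

/-- partial trace -/
def lam {A : Type*} [CommRing A] (p m : ℕ) (x : A) : A := ∑ i ∈ Finset.range m, x ^ p ^ i

lemma lam_map {A B : Type*} [CommRing A] [CommRing B] (φ : A →+* B) (p m : ℕ) (x : A) :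
    φ (lam p m x) = lam p m (φ x) := by
  simp [lam]

variable {A : Type*} [CommRing A] [CharP A 2] {n p : ℕ} (hp : p = 2 ^ n) (m : ℕ)
include hp

lemma lam_add (x y : A) : lam p m (x + y) = lam p m x + lam p m y := by
  simp only [lam, add_pp hp, Finset.sum_add_distrib]

lemma lam_pow (x : A) : lam p m (x ^ p) = lam p m x ^ p := by
  have := sum_pp hp 1 (Finset.range m) (fun j => x ^ p ^ j)
  rw [pow_one] at this
  rw [lam, lam, this]
  refine Finset.sum_congr rfl fun j _ => ?_
  rw [← pow_mul, ← pow_mul, mul_comm]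

lemma lam_AS (x : A) : lam p m (x ^ p - x) = x ^ p ^ m - x := by
  have neg : ∀ z : A, -z = z := fun z => CharTwo.neg_eq z
  rw [sub_eq_add_neg, neg, lam_add hp, lam, lam, ← neg (∑ i ∈ Finset.range m, x ^ p ^ i),
    ← sub_eq_add_neg, ← Finset.sum_sub_distrib]
  have := Finset.sum_range_sub (fun j => x ^ p ^ j) m
  simp only [pow_zero, pow_one] at this
  rw [← this]
  refine Finset.sum_congr rfl fun j _ => ?_
  rw [← pow_mul, ← pow_succ']

lemma lam_two_mul (x : A) : lam p (2 * m) x = lam p m (x + x ^ p ^ m) := by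
  rw [lam_add hp, lam, lam, lam, two_mul, Finset.sum_range_add]
  congr 1
  refine Finset.sum_congr rfl fun j _ => ?_
  rw [← pow_mul, ← pow_add]

end lam

section fin

lemma fib_card {G H : Type*} [AddCommGroup G] [Fintype G] [AddCommGroup H] [DecidableEq H]
    (g : G →+ H) (y : H) (hy : ∃ x, g x = y) :
    (univ.filter fun x => g x = y).card = (univ.filter fun x => g x = 0).card := by
  obtain ⟨x0, rfl⟩ := hy
  refine Finset.card_bij' (fun x _ => x - x0) (fun x _ => x + x0) ?_ ?_ ?_ ?_ <;>
    simp +contextual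

lemma total_card {G H : Type*} [AddCommGroup G] [Fintype G] [AddCommGroup H] [DecidableEq H]
    (g : G →+ H) :
    Fintype.card G = (univ.image g).card * (univ.filter fun x => g x = 0).card := by
  rw [← Finset.card_univ, Finset.card_eq_sum_card_image g univ, Finset.sum_const_nat]
  intro y hy
  exact fib_card g y (by simpa using hy)

lemma roots_card {k : Type*} [Field k] [DecidableEq k] (P : k[X]) (hP : P ≠ 0)
    (t : Finset k) (ht : ∀ x ∈ t, P.eval x = 0) :
    t.card ≤ P.natDegree := by
  refine le_trans (Finset.card_le_card ?_) (P.roots.toFinset_card_le.trans P.card_roots')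
  intro x hx
  simpa [hP] using ht x hx

variable {k : Type*} [Field k] [Fintype k] [DecidableEq k] [CharP k 2]
  {n p : ℕ} (hn : 0 < n) (hp : p = 2 ^ n) (m : ℕ) (hm : 0 < m)

include hn hp in
lemma two_le_p : 2 ≤ p := by
  rw [hp]
  calc 2 = 2 ^ 1 := rfl
    _ ≤ 2 ^ n := Nat.pow_le_pow_right (by norm_num) hn

include hn hp hm

omit [Fintype k] in
lemma lam_ker_le (t : Finset k) (ht : ∀ x ∈ t, lam p m x = 0) : t.card ≤ p ^ (m - 1) := by
  have h2 := two_le_p hn hp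
  have hP : lam p m (X : k[X]) ≠ 0 := by
    intro h
    have := congrArg (fun P => P.coeff 1) h
    simp only [lam, finsetSum_coeff, coeff_X_pow, coeff_zero] at this
    rw [Finset.sum_eq_single 0] at this
    · simp at this
    · intro i _ hi
      rw [if_neg]
      exact (Nat.one_lt_pow hi h2).ne
    · intro h; simp at h; omega
  refine (roots_card _ hP t ?_).trans ?_
  · intro x hx
    have := lam_map (evalRingHom x) p m (X : k[X])
    simp only [coe_evalRingHom, eval_X] at this
    rw [this, ht x hx]
  · refine natDegree_sum_le_of_forall_le _ _ fun i hi => ?_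
    rw [natDegree_X_pow]
    exact Nat.pow_le_pow_right (by omega) (by have := Finset.mem_range.1 hi; omega)

omit [Fintype k] hm in
lemma C_le (t : Finset k) (ht : ∀ x ∈ t, x ^ p = x) : t.card ≤ p := by
  have h2 := two_le_p hn hp
  refine (roots_card (X ^ p - X : k[X]) (FiniteField.X_pow_card_sub_X_ne_zero k h2) t ?_).trans ?_
  · intro x hx; simp [ht x hx]
  · rw [FiniteField.X_pow_card_sub_X_natDegree_eq k h2]

omit hn hm in
lemma lam_mem (hk : Fintype.card k = p ^ m) (x : k) : lam p m x ^ p = lam p m x := by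
  have h := lam_AS hp m x
  have h' : lam p m (x ^ p - x) = lam p m (x ^ p) - lam p m x := by
    rw [sub_eq_add_neg, CharTwo.neg_eq, lam_add hp, sub_eq_add_neg, CharTwo.neg_eq]
  rw [← hk, FiniteField.pow_card, sub_self, h', lam_pow hp, sub_eq_zero] at h
  exact h

/-- `lam` is equidistributed over the fixed field of `x ↦ x ^ p`. -/
lemma lam_fiber (hk : Fintype.card k = p ^ m) (c : k) (hc : c ^ p = c) :
    (univ.filter fun x : k => lam p m x = c).card = p ^ (m - 1) := by
  let g : k →+ k := AddMonoidHom.mk' (lam p m) (lam_add hp m)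
  have h2 := two_le_p hn hp
  have hg : ∀ x, g x = lam p m x := fun _ => rfl
  have h1 := total_card g
  have h3 : (univ.filter fun x => g x = 0).card ≤ p ^ (m - 1) :=
    lam_ker_le hn hp m hm _ (by simp [hg])
  have h4 : (univ.image g).card ≤ p := C_le hn hp _ (by
    intro x hx
    simp only [Finset.mem_image, Finset.mem_univ, true_and] at hx
    obtain ⟨y, rfl⟩ := hx
    exact lam_mem hp m hk y)
  have h5 : p ^ m = p * p ^ (m - 1) := by rw [← pow_succ']; congr 1; omega
  have hpos : 0 < p ^ (m - 1) := by positivity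
  have h6 : (univ.filter fun x => g x = 0).card = p ^ (m - 1) := by
    rw [hk, h5] at h1
    by_contra hne
    have : (univ.filter fun x => g x = 0).card < p ^ (m - 1) := lt_of_le_of_ne h3 hne
    nlinarith
  have h7 : (univ.image g).card = p := by
    rw [hk, h5, h6] at h1
    exact (Nat.eq_of_mul_eq_mul_right hpos h1).symm
  have hc' : c ∈ univ.image g := by
    by_contra hcn
    have := C_le (k := k) hn hp (insert c (univ.image g)) (by
      intro x hx
      simp only [Finset.mem_insert, Finset.mem_image, Finset.mem_univ, true_and] at hx
      obtain rfl | ⟨y, rfl⟩ := hx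
      · exact hc
      · exact lam_mem hp m hk y)
    rw [Finset.card_insert_of_notMem hcn] at this
    omega
  rw [← h6]
  exact fib_card g c (by simpa using hc')

/-- Number of solutions of the Artin-Schreier equation. -/
lemma AS_fiber (hk : Fintype.card k = p ^ m) (w : k) :
    (univ.filter fun y : k => y ^ p - y = w).card = if lam p m w = 0 then p else 0 := by
  have h2 := two_le_p hn hp
  let g : k →+ k := ⟨⟨fun y => y ^ p - y, by simp; omega⟩, fun x y => by
    have := add_pp hp 1 x y
    simp only [pow_one] at this
    simp only [this]; ring⟩
  have hg : ∀ x, g x = x ^ p - x := fun _ => rfl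
  have h1 := total_card g
  have h3 : (univ.filter fun x => g x = 0).card ≤ p :=
    C_le hn hp _ (by simp [hg, sub_eq_zero])
  have h0 := lam_fiber (k := k) hn hp m hm hk 0 (by simp; omega)
  have hsub : univ.image g ⊆ univ.filter fun x : k => lam p m x = 0 := by
    intro x hx
    simp only [Finset.mem_image, Finset.mem_univ, true_and] at hx
    obtain ⟨y, rfl⟩ := hx
    simp [hg, lam_AS hp, ← hk, FiniteField.pow_card]
  have h4 := Finset.card_le_card hsub
  rw [h0] at h4
  have h5 : p ^ m = p ^ (m - 1) * p := by rw [← pow_succ]; congr 1; omega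
  have hpos : 0 < p ^ (m - 1) := by positivity
  rw [hk, h5] at h1
  have h6 : (univ.filter fun x => g x = 0).card = p := by
    by_contra hne
    have : (univ.filter fun x => g x = 0).card < p := lt_of_le_of_ne h3 hne
    nlinarith
  have h7 : (univ.image g).card = p ^ (m - 1) := by
    rw [h6] at h1
    exact (Nat.eq_of_mul_eq_mul_right (by omega) h1).symm
  have heq : univ.image g = univ.filter fun x : k => lam p m x = 0 :=
    Finset.eq_of_subset_of_card_le hsub (by rw [h0, h7])
  split_ifs with hw
  · have : w ∈ univ.image g := by rw [heq]; simpa using hw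
    exact (fib_card g w (by simpa using this)).trans h6
  · rw [Finset.card_eq_zero, Finset.filter_eq_empty_iff]
    intro y _ hy
    apply hw
    have : w ∈ univ.image g := by simp [← hy, hg]
    rw [heq] at this
    simpa using this

end fin

section polys

variable {k : Type*} [Field k] [CharP k 2]
  {n p : ℕ} (hn : 0 < n) (hp : p = 2 ^ n) (e : ℕ) (he : 1 ≤ e) (a : ℕ → k) (hae : a e ≠ 0)

/-- `R` as a polynomial -/
noncomputable def Rp (p e : ℕ) (a : ℕ → k) : k[X] := Rgen p e (fun i => C (a i)) X
/-- `E` as a polynomial -/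
noncomputable def Ep (p e : ℕ) (a : ℕ → k) : k[X] := Egen p e (fun i => C (a i)) X
/-- `f` as a polynomial -/
noncomputable def fp (p e : ℕ) (a : ℕ → k) : k[X] := fgen p e (fun i => C (a i)) X X

omit [CharP k 2] in
lemma Ep_eval (x : k) : (Ep p e a).eval x = Egen p e a x := by
  have := Egen_map (evalRingHom x) p e (fun i => C (a i)) X
  simpa [Ep] using this

omit [CharP k 2] in
lemma fp_eval (x : k) : (fp p e a).eval x = fgen p e a x x := by
  have := fgen_map (evalRingHom x) p e (fun i => C (a i)) X X
  simpa [fp] using this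

include hn hp

omit [CharP k 2] in
lemma Rp_natDegree_le : (Rp p e a).natDegree ≤ p ^ e := by
  have h2 := two_le_p hn hp
  rw [Rp, Rgen]
  refine natDegree_sum_le_of_forall_le _ _ fun i hi => ?_
  refine (natDegree_C_mul_X_pow_le (a i) _).trans ?_
  exact Nat.pow_le_pow_right (by omega) (by have := Finset.mem_range.1 hi; omega)

include hae

omit [CharP k 2] in
lemma Rp_natDegree : (Rp p e a).natDegree = p ^ e := by
  have h2 := two_le_p hn hp
  refine le_antisymm (Rp_natDegree_le hn hp e a) (le_natDegree_of_ne_zero ?_)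
  simp only [Rp, Rgen, finsetSum_coeff, coeff_C_mul, coeff_X_pow]
  rw [Finset.sum_eq_single e]
  · simpa using hae
  · intro i _ hi
    rw [if_neg, mul_zero]
    exact fun h => hi (Nat.pow_right_injective h2 h).symm
  · simp

include he

omit [CharP k 2] in
lemma Ep_natDegree : (Ep p e a).natDegree = p ^ (2 * e) := by
  have h2 := two_le_p hn hp
  have h1 : (Rp p e a ^ p ^ e).natDegree = p ^ (2 * e) := by
    rw [natDegree_pow, Rp_natDegree hn hp e a hae, ← pow_add, two_mul]
  have h3 : Ep p e a = Rp p e a ^ p ^ e + ∑ i ∈ Finset.range (e + 1), (C (a i) * X) ^ p ^ (e - i) := rfl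
  rw [h3, natDegree_add_eq_left_of_natDegree_lt, h1]
  rw [h1]
  refine lt_of_le_of_lt (b := p ^ e) ?_ (Nat.pow_lt_pow_right h2 (by omega))
  refine natDegree_sum_le_of_forall_le _ _ fun i hi => ?_
  refine natDegree_pow_le.trans ?_
  calc p ^ (e - i) * (C (a i) * X).natDegree ≤ p ^ (e - i) * 1 :=
        Nat.mul_le_mul_left _ ((natDegree_C_mul_le _ _).trans natDegree_X_le)
    _ ≤ p ^ e := by rw [mul_one]; exact Nat.pow_le_pow_right (by omega) (by omega)

omit [CharP k 2] in
lemma Ep_ne : Ep p e a ≠ 0 := by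
  have h2 := two_le_p hn hp
  intro h
  have := Ep_natDegree hn hp e he a hae
  rw [h, natDegree_zero] at this
  have : 0 < p ^ (2 * e) := by positivity
  omega

lemma Ep_derivative : derivative (Ep p e a) = C (a e) := by
  have hc : ∀ i, i ≠ 0 → ((p ^ i : ℕ) : k) = 0 := by
    intro i hi
    rw [hp, ← pow_mul]
    have h2 : (2 : k) = 0 := CharTwo.two_eq_zero
    push_cast
    rw [h2, zero_pow]
    exact Nat.mul_ne_zero (by omega) hi
  have h3 : Ep p e a = Rp p e a ^ p ^ e + ∑ i ∈ Finset.range (e + 1), (C (a i) * X) ^ p ^ (e - i) := rfl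
  rw [h3, derivative_add, derivative_pow, hc e (by omega), C_0, zero_mul, zero_mul, zero_add,
    derivative_sum, Finset.sum_eq_single e]
  · simp
  · intro i hi hie
    rw [derivative_pow, hc _ (by have := Finset.mem_range.1 hi; omega), C_0, zero_mul, zero_mul]
  · simp

lemma Ep_roots_card [IsAlgClosed k] [DecidableEq k] :
    (Ep p e a).roots.toFinset.card = p ^ (2 * e) := by
  have hsep : (Ep p e a).Separable := by
    rw [Separable, Ep_derivative hn hp e he a hae]
    exact ⟨0, C (a e)⁻¹, by rw [zero_mul, zero_add, ← C_mul, inv_mul_cancel₀ hae, C_1]⟩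
  rw [Multiset.toFinset_card_of_nodup (nodup_roots hsep),
    ← (IsAlgClosed.splits (Ep p e a)).natDegree_eq_card_roots, Ep_natDegree hn hp e he a hae]

omit [CharP k 2] hae in
lemma fp_natDegree_le : (fp p e a).natDegree ≤ p ^ (2 * e - 1) + p ^ (e - 1) := by
  have h2 := two_le_p hn hp
  have h3 : fp p e a = -∑ i ∈ Finset.range e,
    ((∑ j ∈ Finset.range (e - i), (C (a i) * X ^ p ^ i * X) ^ p ^ j) + (X * Rp p e a) ^ p ^ i) := rfl
  have hS : p ^ (2 * e - 1) + p ^ (e - 1) = p ^ (e - 1) * (1 + p ^ e) := by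
    rw [mul_add, mul_one, ← pow_add, add_comm]; congr 2; omega
  rw [h3, natDegree_neg, hS]
  refine natDegree_sum_le_of_forall_le _ _ fun i hi => ?_
  have hi := Finset.mem_range.1 hi
  refine natDegree_add_le_of_degree_le ?_ ?_
  · refine natDegree_sum_le_of_forall_le _ _ fun j hj => ?_
    have hj := Finset.mem_range.1 hj
    refine natDegree_pow_le.trans (Nat.mul_le_mul (Nat.pow_le_pow_right (by omega) (by omega)) ?_)
    refine natDegree_mul_le.trans ?_
    rw [natDegree_X, add_comm]
    refine Nat.add_le_add_left ((natDegree_C_mul_X_pow_le _ _).trans ?_) _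
    exact Nat.pow_le_pow_right (by omega) (by omega)
  · refine natDegree_pow_le.trans (Nat.mul_le_mul (Nat.pow_le_pow_right (by omega) (by omega)) ?_)
    refine natDegree_mul_le.trans ?_
    rw [natDegree_X]
    exact Nat.add_le_add_left (Rp_natDegree_le hn hp e a) _

omit hn he hae in
lemma fp_pow : fp p e a ^ p - fp p e a = X ^ p ^ e * Ep p e a := by
  have := fgen_pow hp e (fun i => (C (a i) : k[X])) X X
  rw [fp, this, CharTwo.add_self_eq_zero, zero_add, Ep]

lemma fp_fiber_le [DecidableEq k] (c : k) (hc : c ^ p = c) (t : Finset k)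
    (ht : ∀ x ∈ t, fgen p e a x x = c) : t.card ≤ p ^ (2 * e - 1) + p ^ (e - 1) := by
  have hne : fp p e a - C c ≠ 0 := by
    intro h
    have h1 := fp_pow hp e a
    rw [sub_eq_zero.1 h, ← C_pow, hc, sub_self] at h1
    exact mul_ne_zero (pow_ne_zero _ X_ne_zero) (Ep_ne hn hp e he a hae) h1.symm
  refine (roots_card _ hne t ?_).trans ?_
  · intro x hx
    simp [fp_eval, ht x hx]
  · rw [natDegree_sub_C]; exact fp_natDegree_le hn hp e he a

lemma fp_zero_le [DecidableEq k] (t : Finset k)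
    (ht : ∀ x ∈ t, fgen p e a x x = 0) :
    t.card + p ^ e ≤ p ^ (2 * e - 1) + p ^ (e - 1) := by
  have h2 := two_le_p hn hp
  have h1 := fp_pow hp e a
  have hne : fp p e a ≠ 0 := by
    intro h
    rw [h, zero_pow (by omega), sub_self] at h1
    exact mul_ne_zero (pow_ne_zero _ X_ne_zero) (Ep_ne hn hp e he a hae) h1.symm
  have hXf : X ∣ fp p e a := by
    rw [X_dvd_iff, coeff_zero_eq_eval_zero, fp_eval]
    simp only [fgen, Rgen]
    simp [show p ≠ 0 by omega]
  have hXE : X ∣ Ep p e a := by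
    rw [X_dvd_iff, coeff_zero_eq_eval_zero, Ep_eval]
    simp only [Egen, Rgen]
    simp [show p ≠ 0 by omega]
  have hco : IsCoprime (X ^ (p ^ e + 1)) (fp p e a ^ (p - 1) - 1) := by
    apply IsCoprime.pow_left
    obtain ⟨g, hg⟩ := hXf
    obtain ⟨r, hr⟩ : ∃ r, p - 1 = r + 1 := ⟨p - 2, by omega⟩
    refine ⟨g * fp p e a ^ r, -1, ?_⟩
    rw [hr, pow_succ]
    nth_rewrite 3 [hg]
    ring
  have hd : X ^ (p ^ e + 1) ∣ fp p e a := by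
    refine hco.dvd_of_dvd_mul_right  ?_
    have : fp p e a * (fp p e a ^ (p - 1) - 1) = fp p e a ^ p - fp p e a := by
      rw [mul_sub, mul_one, ← pow_succ', Nat.sub_add_cancel (by omega)]
    rw [this, h1, pow_succ]
    exact mul_dvd_mul_left _ hXE
  obtain ⟨g, hg⟩ := hd
  have hg0 : g ≠ 0 := by rintro rfl; simp at hg; exact hne hg
  have hdeg : (fp p e a).natDegree = p ^ e + 1 + g.natDegree := by
    rw [hg, natDegree_mul (pow_ne_zero _ X_ne_zero) hg0, natDegree_X_pow]
  have hle := fp_natDegree_le hn hp e he a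
  have h5 : (t.erase 0).card ≤ g.natDegree := by
    refine roots_card g hg0 _ fun x hx => ?_
    rw [Finset.mem_erase] at hx
    have := ht x hx.2
    rw [← fp_eval, hg, eval_mul, eval_pow, eval_X] at this
    exact (mul_eq_zero.1 this).resolve_left (pow_ne_zero _ hx.1)
  have h6 : t.card ≤ (t.erase 0).card + 1 := by
    have := Finset.pred_card_le_card_erase (s := t) (a := 0)
    omega
  omega

/-- The quadratic form `f_R(v,v)` on `V_R` is elliptic. -/
lemma fp_zero_card [DecidableEq k] (V : Finset k) (hV : ∀ v ∈ V, Egen p e a v = 0)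
    (hVc : V.card = p ^ (2 * e)) :
    (V.filter fun v => fgen p e a v v = 0).card + p ^ e = p ^ (2 * e - 1) + p ^ (e - 1) := by
  have h2 := two_le_p hn hp
  refine le_antisymm (fp_zero_le hn hp e he a hae _ (by simp)) ?_
  set g : k → k := fun v => fgen p e a v v with hg
  have hfix : ∀ v ∈ V, g v ^ p = g v := by
    intro v hv
    have := fgen_pow hp e a v v
    rw [CharTwo.add_self_eq_zero, hV v hv, mul_zero, zero_add] at this
    exact sub_eq_zero.1 this
  have hz := Finset.card_eq_sum_card_image g V
  have hIc : ((V.image g).erase 0).card + 1 ≤ p := by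
    rw [← Finset.card_insert_of_notMem (Finset.notMem_erase 0 (V.image g))]
    refine C_le hn hp _ fun x hx => ?_
    simp only [Finset.mem_insert, Finset.mem_erase, Finset.mem_image] at hx
    obtain rfl | ⟨_, v, hv, rfl⟩ := hx
    · exact zero_pow (by omega)
    · exact hfix v hv
  have hsum : V.card ≤ (V.filter fun v => g v = 0).card +
      ∑ b ∈ (V.image g).erase 0, (V.filter fun v => g v = b).card := by
    rw [hz, ← Finset.sum_insert (Finset.notMem_erase 0 (V.image g))
      (f := fun b => (V.filter fun v => g v = b).card)]
    exact Finset.sum_le_sum_of_subset (Finset.subset_insert_iff.2 subset_rfl)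
  have hsum2 : ∑ b ∈ (V.image g).erase 0, (V.filter fun v => g v = b).card ≤
      (p - 1) * (p ^ (2 * e - 1) + p ^ (e - 1)) := by
    refine (Finset.sum_le_card_nsmul _ _ (p ^ (2 * e - 1) + p ^ (e - 1)) ?_).trans ?_
    · intro b hb
      simp only [Finset.mem_erase, Finset.mem_image] at hb
      obtain ⟨_, v, hv, rfl⟩ := hb
      exact fp_fiber_le hn hp e he a hae _ (hfix v hv) _ (by simp [hg])
    · rw [smul_eq_mul]
      exact Nat.mul_le_mul_right _ (by omega)
  obtain ⟨r, rfl⟩ : ∃ r, p = r + 1 := ⟨p - 1, by omega⟩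
  obtain ⟨d, rfl⟩ : ∃ d, e = d + 1 := ⟨e - 1, by omega⟩
  have e1 : (r + 1) ^ (2 * (d + 1)) = (r + 1) * (r + 1) ^ (2 * (d + 1) - 1) := by
    rw [← pow_succ']; congr 1
  have e2 : (r + 1) ^ (d + 1) = (r + 1) * (r + 1) ^ (d + 1 - 1) := by
    rw [← pow_succ']; congr 1
  rw [hVc, e1] at hsum
  rw [Nat.add_sub_cancel] at hsum2
  rw [e2]
  generalize (r + 1) ^ (2 * (d + 1) - 1) = x at *
  generalize (r + 1) ^ (d + 1 - 1) = y at *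
  nlinarith

end polys

section evenf

variable {F : Type*} [Field F] [Fintype F] [DecidableEq F] [CharP F 2]

/-- the canonical additive character -/
def chi (f : ℕ) (x : F) : ℤ := if lam 2 f x = 0 then 1 else -1

variable {f : ℕ} (hf : 0 < f) (hF : Fintype.card F = 2 ^ f)

include hF

lemma lam2_cases (x : F) : lam 2 f x = 0 ∨ lam 2 f x = 1 := by
  have := lam_mem (k := F) (n := 1) (p := 2) rfl f hF x
  have h : lam 2 f x * (lam 2 f x - 1) = 0 := by linear_combination this
  rcases mul_eq_zero.1 h with h | h
  · exact Or.inl h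
  · exact Or.inr (sub_eq_zero.1 h)

lemma chi_add (x y : F) : chi f (x + y) = chi f x * chi f y := by
  have h := lam_add (A := F) (n := 1) (p := 2) rfl f x y
  have h11 : (1 : F) + 1 = 0 := CharTwo.add_self_eq_zero 1
  rcases lam2_cases hF x with hx | hx <;> rcases lam2_cases hF y with hy | hy <;>
    simp [chi, h, hx, hy, h11]

lemma chi_pow (n : ℕ) (x : F) : chi f (x ^ 2 ^ n) = chi f x := by
  induction n with
  | zero => simp
  | succ n ih =>
    rw [pow_succ, pow_mul, ← ih]
    have h := lam_pow (A := F) (n := 1) (p := 2) rfl f (x ^ 2 ^ n)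
    have h' := lam_mem (k := F) (n := 1) (p := 2) rfl f hF (x ^ 2 ^ n)
    simp only [chi, h, h']

lemma chi_zero : chi f (0 : F) = 1 := by
  simp [chi, lam]

lemma chi_sq (x : F) : chi f x * chi f x = 1 := by
  rw [← chi_add hF, CharTwo.add_self_eq_zero, chi_zero hF]

include hf

lemma chi_sum : ∑ x : F, chi f x = 0 := by
  have h := lam_fiber (k := F) (n := 1) (p := 2) one_pos rfl f hf hF 1 (by simp)
  have : 0 < (univ.filter fun x : F => lam 2 f x = 1).card := by rw [h]; positivity
  obtain ⟨x0, hx0⟩ := Finset.card_pos.1 this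
  have hx0 : lam 2 f x0 = 1 := by simpa using hx0
  have h1 : ∑ x : F, chi f (x + x0) = ∑ x : F, chi f x :=
    Equiv.sum_comp (Equiv.addRight x0) (fun x => chi f x)
  have h2 : chi f x0 = -1 := by simp [chi, hx0]
  simp only [chi_add hF, h2, ← Finset.sum_mul] at h1
  linarith

lemma chi_sum_mul (d : F) : ∑ x : F, chi f (x * d) = if d = 0 then (2 : ℤ) ^ f else 0 := by
  split_ifs with hd
  · simp [hd, chi_zero hF, Finset.card_univ, hF]
  · rw [← chi_sum hf hF]
    exact Equiv.sum_comp (Equiv.mulRight₀ d hd) (fun x => chi f x)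

lemma even_of_V {n p : ℕ} (hp : p = 2 ^ n) (e : ℕ) (a : ℕ → F)
    (hV : (univ.filter fun v : F => Egen p e a v = 0).card = p ^ (2 * e))
    (hb : ∀ v : F, Egen p e a v = 0 → ∃ b : F, b ^ p - b = v * Rgen p e a v) : Even f := by
  set S : ℤ := ∑ x : F, chi f (x * Rgen p e a x) with hS
  have hAS : ∀ b : F, chi f (b ^ p - b) = 1 := by
    intro b
    rw [sub_eq_add_neg, CharTwo.neg_eq, chi_add hF, hp, chi_pow hF, chi_sq hF]
  have h1 : S * S = ∑ u : F, chi f (u * Rgen p e a u) *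
      ∑ x : F, chi f (x * Rgen p e a u + u * Rgen p e a x) := by
    have : S * S = ∑ x : F, ∑ u : F, chi f (x * Rgen p e a x) *
        chi f ((x + u) * Rgen p e a (x + u)) := by
      rw [hS, Finset.sum_mul_sum]
      refine Finset.sum_congr rfl fun x _ => ?_
      exact (Equiv.sum_comp (Equiv.addLeft x)
        (fun y => chi f (x * Rgen p e a x) * chi f (y * Rgen p e a y))).symm
    rw [this, Finset.sum_comm]
    refine Finset.sum_congr rfl fun u _ => ?_
    rw [Finset.mul_sum]
    refine Finset.sum_congr rfl fun x _ => ?_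
    rw [← chi_add hF, ← chi_add hF, Rgen_add hp]
    congr 1
    have := CharTwo.add_self_eq_zero (x * Rgen p e a x)
    linear_combination this
  have h2 : ∀ u : F, ∑ x : F, chi f (x * Rgen p e a u + u * Rgen p e a x) =
      if Egen p e a u = 0 then (2 : ℤ) ^ f else 0 := by
    intro u
    rw [← chi_sum_mul hf hF]
    have hbij : Function.Bijective (fun x : F => x ^ p ^ e) := by
      obtain ⟨φ, hφ⟩ := exists_frob F hp e
      have : (fun x : F => x ^ p ^ e) = φ := by funext x; rw [hφ]
      rw [this]
      exact Finite.injective_iff_bijective.1 φ.injective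
    rw [← hbij.sum_comp (fun x => chi f (x * Egen p e a u))]
    refine Finset.sum_congr rfl fun x _ => ?_
    have h := fgen_pow hp e a x u
    have h' : x * Rgen p e a u + u * Rgen p e a x =
        (fgen p e a x u ^ p - fgen p e a x u) + x ^ p ^ e * Egen p e a u := by
      rw [h, add_assoc, CharTwo.add_self_eq_zero, add_zero]
    rw [h', chi_add hF, hAS, one_mul]
  have h3 : S * S = 2 ^ f * p ^ (2 * e) := by
    rw [h1]
    simp only [h2, mul_ite, mul_zero]
    rw [← Finset.sum_filter, Finset.sum_congr rfl (g := fun _ => (2 : ℤ) ^ f), Finset.sum_const, hV]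
    · simp [mul_comm]
    · intro u hu
      obtain ⟨b, hb⟩ := hb u (by simpa using hu)
      rw [← hb, hAS, one_mul]
  have h4 : S.natAbs * S.natAbs = 2 ^ (f + 2 * (n * e)) := by
    have : ((S.natAbs * S.natAbs : ℕ) : ℤ) = ((2 ^ (f + 2 * (n * e)) : ℕ) : ℤ) := by
      rw [Int.natAbs_mul_self, h3, hp]; push_cast; ring
    exact_mod_cast this
  have h5 := congrArg (padicValNat 2) h4
  have hne : S.natAbs ≠ 0 := by
    intro h; rw [h] at h4; exact (pow_ne_zero (f + 2 * (n * e)) (two_ne_zero (α := ℕ))) (by simpa using h4.symm)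
  have : Fact (Nat.Prime 2) := ⟨Nat.prime_two⟩
  rw [padicValNat.mul hne hne, padicValNat.prime_pow] at h5
  exact ⟨padicValNat 2 S.natAbs - n * e, by omega⟩

end evenf

section main

variable {F L : Type*} [Field F] [Fintype F] [DecidableEq F] [CharP F 2]
  [Field L] [Fintype L] [DecidableEq L] [CharP L 2] (ι : F →+* L)
  {n p : ℕ} (hn : 0 < n) (hp : p = 2 ^ n) {s : ℕ} (hs : 0 < s)
  (hF : Fintype.card F = p ^ s) (hL : Fintype.card L = p ^ (2 * s))
  (e : ℕ) (he : 1 ≤ e) (a : ℕ → F) (hae : a e ≠ 0)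

omit [DecidableEq F] [CharP F 2] [Fintype L] [DecidableEq L] [CharP L 2] in
include hF in
lemma iota_pow (x : F) : ι x ^ p ^ s = ι x := by
  rw [← map_pow, ← hF, FiniteField.pow_card]

omit [DecidableEq F] [CharP F 2] [Fintype L] in
include hn hp hs hF in
lemma exists_iota (x : L) (hx : x ^ p ^ s = x) : ∃ z : F, ι z = x := by
  have hp' : p ^ s = 2 ^ (n * s) := by rw [hp, pow_mul]
  by_contra hcon
  have h1 : x ∉ univ.image ι := by simpa using hcon
  have h2 := C_le (k := L) (Nat.mul_pos hn hs) hp' (insert x (univ.image ι)) (by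
    intro y hy
    simp only [Finset.mem_insert, Finset.mem_image, Finset.mem_univ, true_and] at hy
    obtain rfl | ⟨z, rfl⟩ := hy
    · exact hx
    · exact iota_pow ι hF z)
  rw [Finset.card_insert_of_notMem h1, Finset.card_image_of_injective _ ι.injective,
    Finset.card_univ, hF] at h2
  omega

include hn hp hs hF hL

omit [CharP F 2] in
/-- The map `y ↦ y ^ q + y` from `L` to `F`, with fibres of size `q`. -/
lemma exists_U : ∃ U : L → F, (∀ y, ι (U y) = y ^ p ^ s + y) ∧
    ∀ v : F, (univ.filter fun y => U y = v).card = p ^ s := by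
  have h2 := two_le_p hn hp
  have hp' : p ^ s = 2 ^ (n * s) := by rw [hp, pow_mul]
  have hex : ∀ y : L, ∃ z : F, ι z = y ^ p ^ s + y := by
    intro y
    apply exists_iota ι hn hp hs hF
    rw [add_pp hp, ← pow_mul, ← pow_add, ← two_mul, ← hL, FiniteField.pow_card, add_comm]
  choose U hU using hex
  refine ⟨U, hU, ?_⟩
  have hadd : ∀ x y, U (x + y) = U x + U y := by
    intro x y
    apply ι.injective
    rw [map_add, hU, hU, hU, add_pp hp]; ring
  let g : L →+ F := AddMonoidHom.mk' U hadd
  have hg : ∀ y, g y = U y := fun _ => rfl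
  have h1 := total_card g
  have h3 : (univ.filter fun x => g x = 0).card ≤ p ^ s := by
    refine C_le (Nat.mul_pos hn hs) hp' _ fun x hx => ?_
    have hx : U x = 0 := by simpa [hg] using hx
    have := hU x
    rw [hx, map_zero] at this
    exact CharTwo.add_eq_zero.1 this.symm
  have h4 : (univ.image g).card ≤ p ^ s := by
    rw [← hF]; exact Finset.card_le_univ _
  have hpos : 0 < p ^ s := by positivity
  rw [hL, two_mul, pow_add] at h1
  have h6 : (univ.filter fun x => g x = 0).card = p ^ s := by
    by_contra hne
    have := lt_of_le_of_ne h3 hne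
    nlinarith
  have h7 : (univ.image g).card = p ^ s := by
    rw [h6] at h1
    exact (Nat.eq_of_mul_eq_mul_right hpos h1).symm
  have h8 : univ.image g = univ := by
    rw [← Finset.card_eq_iff_eq_univ, h7, hF]
  intro v
  have hv : v ∈ univ.image g := by rw [h8]; simp
  exact (fib_card g v (by simpa using hv)).trans h6

/-- the quadratic form -/
def Qf (p s e : ℕ) (a : ℕ → F) (ι : F →+* L) (x : L) : L :=
  lam p (2 * s) (x * Rgen p e (fun i => ι (a i)) x)

omit [DecidableEq F] [CharP F 2] [DecidableEq L] hn hs in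
lemma Qf_add (y : L) (z u : F) (hu : ι u = y ^ p ^ s + y) :
    Qf p s e a ι (y + ι z) = Qf p s e a ι y + ι (lam p s (z ^ p ^ e * Egen p e a u)) := by
  set b : ℕ → L := fun i => ι (a i) with hb
  obtain ⟨φ, hφ⟩ := exists_frob L hp s
  have hφι : ∀ x, φ (ι x) = ι x := fun x => by rw [hφ, iota_pow ι hF]
  have h1 : (y + ι z) * Rgen p e b (y + ι z) = y * Rgen p e b y + ι (z * Rgen p e a z)
      + (ι z * Rgen p e b y + y * Rgen p e b (ι z)) := by
    rw [Rgen_add hp, map_mul, Rgen_map]; ring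
  have h2 : lam p (2 * s) (ι (z * Rgen p e a z)) = 0 := by
    rw [lam_two_mul hp, iota_pow ι hF, CharTwo.add_self_eq_zero]
    have := lam_add (A := L) hp s 0 0
    simpa using this
  have h3 : ι z * Rgen p e b y + y * Rgen p e b (ι z) =
      (fgen p e b (ι z) y ^ p - fgen p e b (ι z) y) + ι z ^ p ^ e * Egen p e b y := by
    rw [fgen_pow hp, add_assoc, CharTwo.add_self_eq_zero, add_zero]
  have h4 : Egen p e b y + Egen p e b y ^ p ^ s = ι (Egen p e a u) := by
    rw [Egen_map, hu, Egen_add hp, add_comm, ← hφ, ← hφ, Egen_map]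
    simp only [hb, hφι]
  have h5 : lam p (2 * s) (ι z ^ p ^ e * Egen p e b y) =
      ι (lam p s (z ^ p ^ e * Egen p e a u)) := by
    rw [lam_two_mul hp, lam_map, map_mul, ← h4, mul_pow, ← map_pow, iota_pow ι hF, mul_add]
  rw [Qf, h1, lam_add hp, lam_add hp, h2, h3, lam_add hp, lam_AS hp, ← hL, FiniteField.pow_card,
    sub_self, h5, Qf]
  simp [hb]

omit [DecidableEq F] [CharP F 2] [DecidableEq L] hn hs hL in
lemma Qf_rad (y : L) (u : F) (hu : ι u = y ^ p ^ s + y) (hE : Egen p e a u = 0)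
    (hb : ∃ b : F, b ^ p - b = u * Rgen p e a u) :
    Qf p s e a ι y = ι (fgen p e a u u) := by
  set b : ℕ → L := fun i => ι (a i) with hbdef
  obtain ⟨φ, hφ⟩ := exists_frob L hp s
  have hφι : ∀ x, φ (ι x) = ι x := fun x => by rw [hφ, iota_pow ι hF]
  have hyq : φ y = y + ι u := by
    rw [hφ, hu, add_comm, add_assoc, CharTwo.add_self_eq_zero, add_zero]
  have h1 : (y * Rgen p e b y) ^ p ^ s = (y + ι u) * (Rgen p e b y + Rgen p e b (ι u)) := by
    rw [← hφ, map_mul, Rgen_map, hyq, ← Rgen_add hp]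
    simp only [hbdef, hφι]
  have h0 : Egen p e b (ι u) = 0 := by rw [← Egen_map, hE, map_zero]
  obtain ⟨c, hc⟩ := hb
  have h2 : y * Rgen p e b y + (y * Rgen p e b y) ^ p ^ s =
      (fgen p e b y (ι u) ^ p - fgen p e b y (ι u)) + (ι c ^ p - ι c) := by
    rw [fgen_pow hp, h0, h1, ← map_pow, ← map_sub, hc, map_mul, Rgen_map]
    linear_combination CharTwo.add_self_eq_zero (y * Rgen p e b y)
  have h3 : fgen p e b y (ι u) ^ p ^ s = fgen p e b y (ι u) + fgen p e b (ι u) (ι u) := by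
    rw [← fgen_add_left hp, ← hyq, ← hφ, fgen_map]
    simp only [hbdef, hφι]
  rw [Qf, lam_two_mul hp, h2, lam_add hp, lam_AS hp, lam_AS hp, iota_pow ι hF, h3, fgen_map]
  ring

include he hae

lemma main_count
    (hV : (univ.filter fun v : F => Egen p e a v = 0).card = p ^ (2 * e))
    (hb : ∀ v : F, Egen p e a v = 0 → ∃ b : F, b ^ p - b = v * Rgen p e a v) :
    ((univ.filter fun z : L × L =>
        z.2 ^ p - z.2 = z.1 * Rgen p e (fun i => ι (a i)) z.1).card : ℤ) =
      ((p : ℤ) ^ s) ^ 2 - ((p : ℤ) - 1) * (p : ℤ) ^ e * (p : ℤ) ^ s := by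
  have h2 := two_le_p hn hp
  obtain ⟨U, hU, hUc⟩ := exists_U ι hn hp hs hF hL
  set Q := Qf (L := L) p s e a ι with hQ
  set M := (univ.filter fun x : L => Q x = 0).card with hM
  have hN : (univ.filter fun z : L × L =>
        z.2 ^ p - z.2 = z.1 * Rgen p e (fun i => ι (a i)) z.1).card = M * p := by
    rw [Finset.card_filter, Fintype.sum_prod_type]
    simp only [← Finset.card_filter]
    simp only [AS_fiber hn hp (2 * s) (by omega) hL]
    rw [← Finset.sum_filter, Finset.sum_const, smul_eq_mul]
    rfl
  have hqM : p ^ s * M = ∑ y : L, (univ.filter fun z : F => Q (y + ι z) = 0).card := by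
    simp only [Finset.card_filter]
    rw [Finset.sum_comm]
    have : ∀ z : F, ∑ y : L, (if Q (y + ι z) = 0 then 1 else 0) = M := by
      intro z
      rw [hM, Finset.card_filter]
      exact Equiv.sum_comp (Equiv.addRight (ι z)) (fun y => if Q y = 0 then 1 else 0)
    simp only [this]
    rw [Finset.sum_const, Finset.card_univ, hF, smul_eq_mul]
  set G : F → ℕ := fun v => if Egen p e a v = 0 then (if fgen p e a v v = 0 then p ^ s else 0)
    else p ^ (s - 1) with hG
  have hcount : ∀ y : L, (univ.filter fun z : F => Q (y + ι z) = 0).card = G (U y) := by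
    intro y
    simp only [hQ, Qf_add ι hp hF hL e a y _ (U y) (hU y), hG]
    split_ifs with hE hf0
    · rw [Qf_rad ι hp hF e a y (U y) (hU y) hE (hb _ hE), hf0, hE]
      have : lam p s (0 : F) = 0 := by
        have := lam_add (A := F) hp s 0 0
        simpa using this
      simp [this, Finset.card_univ, hF]
    · rw [Qf_rad ι hp hF e a y (U y) (hU y) hE (hb _ hE), hE]
      have : lam p s (0 : F) = 0 := by
        have := lam_add (A := F) hp s 0 0
        simpa using this
      simp [this, hf0]
    · have hQp : Qf p s e a ι y ^ p = Qf p s e a ι y := lam_mem hp (2 * s) hL _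
      have hQq : ∀ j : ℕ, Qf p s e a ι y ^ p ^ j = Qf p s e a ι y := by
        intro j
        induction j with
        | zero => simp
        | succ j ih => rw [pow_succ, pow_mul, ih, hQp]
      obtain ⟨c, hc⟩ := exists_iota ι hn hp hs hF _ (hQq s)
      have hcp : c ^ p = c := by
        apply ι.injective
        rw [map_pow, hc, hQp]
      rw [← hc, ← lam_fiber hn hp s hs hF c hcp]
      have hbij : Function.Bijective (fun z : F => z ^ p ^ e * Egen p e a (U y)) := by
        rw [← Finite.injective_iff_bijective]
        intro z z' hzz
        have := mul_right_cancel₀ hE hzz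
        obtain ⟨φ, hφ⟩ := exists_frob F hp e
        simp only [← hφ] at this
        exact φ.injective this
      refine Finset.card_bij (fun z _ => z ^ p ^ e * Egen p e a (U y)) ?_ ?_ ?_
      · intro z hz
        simp only [Finset.mem_filter, Finset.mem_univ, true_and] at hz ⊢
        exact (ι.injective (CharTwo.add_eq_zero.1 hz)).symm
      · intro z _ z' _ h
        exact hbij.1 h
      · intro w hw
        obtain ⟨z, rfl⟩ := hbij.2 w
        refine ⟨z, ?_, rfl⟩
        simp only [Finset.mem_filter, Finset.mem_univ, true_and] at hw ⊢
        rw [hw, CharTwo.add_self_eq_zero]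
  have hpos : 0 < p ^ s := by positivity
  have hM2 : M = ∑ v : F, G v := by
    have : p ^ s * M = p ^ s * ∑ v : F, G v := by
      rw [hqM]
      simp only [hcount]
      rw [← Finset.sum_fiberwise univ U (fun y => G (U y)), Finset.mul_sum]
      refine Finset.sum_congr rfl fun v _ => ?_
      rw [← hUc v, ← smul_eq_mul, ← Finset.sum_const]
      refine Finset.sum_congr rfl fun y hy => ?_
      rw [(Finset.mem_filter.1 hy).2]
    exact Nat.eq_of_mul_eq_mul_left hpos this
  have hn0 := fp_zero_card hn hp e he a hae (univ.filter fun v : F => Egen p e a v = 0)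
    (by simp) hV
  set n0 := ((univ.filter fun v : F => Egen p e a v = 0).filter fun v => fgen p e a v v = 0).card
    with hn0def
  have hM3 : M = n0 * p ^ s + (univ.filter fun v : F => ¬ Egen p e a v = 0).card * p ^ (s - 1) := by
    rw [hM2, hG, Finset.sum_ite, ← Finset.sum_filter, Finset.sum_const, Finset.sum_const,
      smul_eq_mul, smul_eq_mul]
  have hcomp := Finset.card_filter_add_card_filter_not (s := (univ : Finset F))
    (fun v => Egen p e a v = 0)
  rw [hV, Finset.card_univ, hF] at hcomp
  rw [hN, hM3]
  obtain ⟨d, rfl⟩ : ∃ d, e = d + 1 := ⟨e - 1, by omega⟩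
  obtain ⟨t, rfl⟩ : ∃ t, s = t + 1 := ⟨s - 1, by omega⟩
  have hn0' : (n0 : ℤ) + (p : ℤ) ^ (d + 1) = (p : ℤ) ^ (2 * d + 1) + (p : ℤ) ^ d := by
    exact_mod_cast hn0
  have hcomp' : (p : ℤ) ^ (2 * (d + 1)) +
      ((univ.filter fun v : F => ¬ Egen p (d + 1) a v = 0).card : ℤ) = (p : ℤ) ^ (t + 1) := by
    exact_mod_cast hcomp
  rw [Nat.add_sub_cancel]
  push_cast
  rw [← eq_sub_iff_add_eq] at hn0'
  rw [← eq_sub_iff_add_eq'] at hcomp'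
  rw [hn0', hcomp']
  ring

end main

/-- for `p₀ = 2` and `e ≥ 1`, if `H_R ⊆ F_q × F_q` then `f` is even and
`#{(x,y) ∈ F_{q²}² : y^p − y = x·R(x)} = q² − (p−1)p^e q`,
i.e. the Van der Geer–Van der Vlugt curve is `F_{q²}`-minimal. -/
theorem statement19 {F K F' : Type*} [Field F] [Fintype F]
    [Field K] [IsAlgClosed K] [Algebra F K]
    [Field F'] [Fintype F'] [DecidableEq F'] [Algebra F F']
    (n p s q e f : ℕ) [CharP F 2] (hn : 0 < n) (hpn : p = 2 ^ n)
    (hs : 0 < s) (hq : q = p ^ s) (hcard : Fintype.card F = q) (hf : q = 2 ^ f)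
    (a : ℕ → F) (hae : a e ≠ 0) (he : 1 ≤ e)
    -- `H_R ⊆ F_q × F_q`
    (hHF : ∀ h ∈ Hset p e (fun i => algebraMap F K (a i)),
      (∃ x : F, algebraMap F K x = h.1) ∧ (∃ y : F, algebraMap F K y = h.2))
    -- `F' = F_{q²}`
    (hcard' : Fintype.card F' = q ^ 2) :
    Even f ∧
    ((Finset.univ.filter fun z : F' × F' =>
        z.2 ^ p - z.2 = z.1 * Rgen p e (fun i => algebraMap F F' (a i)) z.1).card : ℤ) =
      (q : ℤ) ^ 2 - ((p : ℤ) - 1) * (p : ℤ) ^ e * (q : ℤ) := by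
  classical
  have hcK : CharP K 2 := charP_of_injective_algebraMap (algebraMap F K).injective 2
  have hcL : CharP F' 2 := charP_of_injective_algebraMap (algebraMap F F').injective 2
  have h2 := two_le_p hn hpn
  have hb : ∀ v : F, Egen p e a v = 0 → ∃ b : F, b ^ p - b = v * Rgen p e a v := by
    intro v hv
    have hdeg : (X ^ p - X - C (algebraMap F K (v * Rgen p e a v)) : K[X]).degree ≠ 0 := by
      have h1 : (X ^ p - X : K[X]).natDegree = p := FiniteField.X_pow_card_sub_X_natDegree_eq K h2
      have h3 : (X ^ p - X - C (algebraMap F K (v * Rgen p e a v)) : K[X]).natDegree = p := by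
        rw [natDegree_sub_C, h1]
      intro h
      have h0 := h3.symm.trans (natDegree_eq_zero_iff_degree_le_zero.2 h.le)
      omega
    obtain ⟨y, hy⟩ := IsAlgClosed.exists_root _ hdeg
    simp only [IsRoot.def, eval_sub, eval_pow, eval_X, eval_C] at hy
    obtain ⟨_, b, hb⟩ := hHF (algebraMap F K v, y) (by
      refine ⟨?_, ?_⟩
      · change Egen p e (fun i => algebraMap F K (a i)) (algebraMap F K v) = 0
        rw [← Egen_map, hv, map_zero]
      · change y ^ p - y = algebraMap F K v * Rgen p e (fun i => algebraMap F K (a i)) (algebraMap F K v)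
        rw [← Rgen_map, ← map_mul]
        exact sub_eq_zero.1 hy)
    refine ⟨b, (algebraMap F K).injective ?_⟩
    have hb : algebraMap F K b = y := hb
    rw [map_sub, map_pow, hb]
    exact sub_eq_zero.1 hy
  have haeK : algebraMap F K (a e) ≠ 0 := by simpa using hae
  have hV : (univ.filter fun v : F => Egen p e a v = 0).card = p ^ (2 * e) := by
    rw [← Ep_roots_card hn hpn e he (fun i => algebraMap F K (a i)) haeK,
      ← Finset.card_image_of_injective _ (algebraMap F K).injective]
    congr 1
    ext x
    simp only [Finset.mem_image, Finset.mem_filter, Finset.mem_univ, true_and,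
      Multiset.mem_toFinset, mem_roots (Ep_ne hn hpn e he (fun i => algebraMap F K (a i)) haeK),
      IsRoot.def, Ep_eval]
    constructor
    · rintro ⟨v, hv, rfl⟩
      rw [← Egen_map, hv, map_zero]
    · intro hx
      have hdeg : (X ^ p - X - C (x * Rgen p e (fun i => algebraMap F K (a i)) x) : K[X]).degree ≠ 0 := by
        have h1 : (X ^ p - X : K[X]).natDegree = p := FiniteField.X_pow_card_sub_X_natDegree_eq K h2
        have h3 : (X ^ p - X - C (x * Rgen p e (fun i => algebraMap F K (a i)) x) : K[X]).natDegree
            = p := by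
          rw [natDegree_sub_C, h1]
        intro h
        have h0 := h3.symm.trans (natDegree_eq_zero_iff_degree_le_zero.2 h.le)
        omega
      obtain ⟨y, hy⟩ := IsAlgClosed.exists_root _ hdeg
      simp only [IsRoot.def, eval_sub, eval_pow, eval_X, eval_C] at hy
      obtain ⟨⟨v, hv⟩, _⟩ := hHF (x, y) ⟨hx, sub_eq_zero.1 hy⟩
      have hv : algebraMap F K v = x := hv
      refine ⟨v, (algebraMap F K).injective ?_, hv⟩
      rw [Egen_map, hv, hx, map_zero]
  have hfpos : 0 < f := by
    rcases Nat.eq_zero_or_pos f with h0 | h0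
    · have := Fintype.one_lt_card (α := F)
      rw [hcard, hf, h0] at this
      simp at this
    · exact h0
  refine ⟨even_of_V hfpos (hcard.trans hf) hpn e a hV hb, ?_⟩
  have hL : Fintype.card F' = p ^ (2 * s) := by rw [hcard', hq, ← pow_mul, mul_comm]
  have := main_count (algebraMap F F') hn hpn hs (hcard.trans hq) hL e he a hae hV hb
  rw [this, hq]
  push_cast
  rfl
end
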